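/- arXiv:2507.07065 — 3 statements merged into one kernel-verified Lean document; each statement's English description precedes it below -/
import Mathlib

section
/- For positive definite matrices A and B, log A - log B = ∫₁^∞ (1/α) ({A > αB} - {B > αA}) dα, where {A > αB} is the spectral projection onto the positive part of A - αB. -/
open MeasureTheory Matrix
open scoped ComplexOrder
noncomputable section

/-- The positive part `(X)₊` of a Hermitian matrix, via continuous functional calculus. -/
def mposPart {n : ℕ} (X : Matrix (Fin n) (Fin n) ℂ) : Matrix (Fin n) (Fin n) ℂ :=
  cfc (fun x : ℝ => max x 0) X

/-- The spectral projection of a Hermitian matrix onto its strictly positive part,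
so that `projPos (A - γ • B)` is the projection `{A > γB}`. -/
def projPos {n : ℕ} (X : Matrix (Fin n) (Fin n) ℂ) : Matrix (Fin n) (Fin n) ℂ :=
  cfc (fun x : ℝ => if 0 < x then (1:ℝ) else 0) X

/-- The spectral projection of a Hermitian matrix onto its nonnegative part,
so that `projNonneg (γ • B - A)` is the projection `{A ≤ γB}`. -/
def projNonneg {n : ℕ} (X : Matrix (Fin n) (Fin n) ℂ) : Matrix (Fin n) (Fin n) ℂ :=
  cfc (fun x : ℝ => if 0 ≤ x then (1:ℝ) else 0) X

/-- Matrix logarithm via functional calculus. -/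
def mlog {n : ℕ} (X : Matrix (Fin n) (Fin n) ℂ) : Matrix (Fin n) (Fin n) ℂ :=
  cfc Real.log X

/-- Real matrix power via functional calculus (`Real.rpow`, so negative powers of
positive semidefinite matrices are taken on the support). -/
def mpow {n : ℕ} (X : Matrix (Fin n) (Fin n) ℂ) (a : ℝ) : Matrix (Fin n) (Fin n) ℂ :=
  cfc (fun x : ℝ => x ^ a) X

section aux

theorem cont_lem (f : ℂ → ℂ) (hf : ∀ z : ℂ, 0 ≤ z.im → DifferentiableAt ℂ f z)
    (K T : ℝ) (_hT : 0 < T) (hK : 0 ≤ K)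
    (hb : ∀ z : ℂ, 0 ≤ z.im → T ≤ ‖z‖ → ‖f z‖ ≤ K / ‖z‖) :
    ∫ x : ℝ, (f x - f 0 / (1 + (x:ℂ)^2)) / x = Complex.I * Real.pi * f 0 ∧
    Integrable (fun x : ℝ => (f x - f 0 / (1 + (x:ℂ)^2)) / x) := by
  have hzi : ∀ z : ℂ, 0 ≤ z.im → z + Complex.I ≠ 0 := by
    intro z hz h
    have := congrArg Complex.im h
    simp at this; linarith
  set φ : ℂ → ℂ := fun z => f z - f 0 * Complex.I / (z + Complex.I) with hφ
  have hφ0 : φ 0 = 0 := by simp [hφ]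
  have hφd : ∀ z : ℂ, 0 ≤ z.im → DifferentiableAt ℂ φ z := by
    intro z hz
    have := hf z hz
    have := hzi z hz
    simp only [hφ]
    fun_prop (disch := assumption)
  set g : ℂ → ℂ := dslope φ 0 with hg
  have hgne : ∀ z : ℂ, z ≠ 0 → g z = φ z / z := by
    intro z hz
    rw [hg, dslope_of_ne _ hz, slope_def_field, hφ0]; simp
  have hgc : ∀ z : ℂ, 0 ≤ z.im → ContinuousAt g z := by
    intro z hz
    by_cases h0 : z = 0
    · subst h0
      exact continuousAt_dslope_same.2 (hφd 0 le_rfl)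
    · exact (continuousAt_dslope_of_ne h0).2 (hφd z hz).continuousAt
  have hgd : ∀ z : ℂ, 0 < z.im → DifferentiableAt ℂ g z := by
    intro z hz
    have h0 : z ≠ 0 := by rintro rfl; simp at hz
    exact (differentiableAt_dslope_of_ne h0).2 (hφd z hz.le)
  set K' : ℝ := K + 2 * ‖f 0‖ with hK'
  have hK'0 : 0 ≤ K' := by positivity
  have hgb : ∀ z : ℂ, 0 ≤ z.im → max T 2 ≤ ‖z‖ → ‖g z‖ ≤ K' / ‖z‖^2 := by
    intro z hz hz2
    have hzT : T ≤ ‖z‖ := le_trans (le_max_left _ _) hz2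
    have hz2' : 2 ≤ ‖z‖ := le_trans (le_max_right _ _) hz2
    have hz0 : 0 < ‖z‖ := by linarith
    have h0 : z ≠ 0 := norm_pos_iff.1 hz0
    rw [hgne z h0, norm_div, pow_two, ← div_div]
    gcongr
    simp only [hφ]
    refine (norm_sub_le _ _).trans ?_
    rw [hK', add_div]
    refine add_le_add (hb z hz hzT) ?_
    rw [norm_div, norm_mul, Complex.norm_I, mul_one]
    have : ‖z‖ / 2 ≤ ‖z + Complex.I‖ := by
      have := norm_sub_le (z + Complex.I) Complex.I
      rw [Complex.norm_I, add_sub_cancel_right] at this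
      linarith
    rw [div_le_div_iff₀ (by linarith) hz0]
    nlinarith [norm_nonneg (f 0)]
  have hgR : Continuous (fun x : ℝ => g x) := by
    rw [continuous_iff_continuousAt]
    intro x
    exact ContinuousAt.comp (f := fun x : ℝ => (x:ℂ)) (hgc x (by simp)) (Complex.continuous_ofReal.continuousAt)
  have hgi : Integrable (fun x : ℝ => g x) := by
    have hloc : LocallyIntegrable (fun x : ℝ => g x) := hgR.locallyIntegrable
    refine hloc.integrable_of_isBigO_cocompact (g := fun x : ℝ => (1 + x^2)⁻¹) ?_ ?_
    · refine Asymptotics.IsBigO.of_bound (2*K') ?_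
      have : {x : ℝ | max T 2 ≤ ‖x‖} ∈ Filter.cocompact ℝ := by
        have := tendsto_norm_cocompact_atTop (E := ℝ)
        exact this.eventually (Filter.eventually_ge_atTop (max T 2))
      filter_upwards [this] with x hx
      have h1 := hgb x (by simp) (by simpa using hx)
      refine h1.trans ?_
      have hx2 : 2 ≤ |x| := le_trans (le_max_right _ _) hx
      have hx3 : 4 ≤ x^2 := by rw [← sq_abs]; nlinarith
      simp only [Complex.norm_real, Real.norm_eq_abs, sq_abs]
      rw [abs_of_nonneg (by positivity), ← div_eq_mul_inv, div_le_div_iff₀ (by positivity) (by positivity)]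
      nlinarith
    · exact integrable_inv_one_add_sq.integrableAtFilter _
  have hlim : Filter.Tendsto (fun t : ℝ => ∫ x in (-t)..t, g x) Filter.atTop (nhds 0) := by
    have hzero : ∀ t : ℝ, max T 2 ≤ t → ‖∫ x in (-t)..t, g x‖ ≤ 4 * K' / t := by
      intro t ht
      have ht2 : 2 ≤ t := le_trans (le_max_right _ _) ht
      have ht0 : 0 < t := by linarith
      have hrect := Complex.integral_boundary_rect_eq_zero_of_differentiable_on_off_countable g
        (-t : ℂ) (t + t * Complex.I) ∅ Set.countable_empty ?_ ?_
      rotate_left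
      · intro z hz
        apply (hgc z _).continuousWithinAt
        have := (Complex.mem_reProdIm.1 hz).2
        simp [Set.uIcc_of_le ht0.le] at this
        exact this.1
      · intro z hz
        apply hgd z _
        have := (Complex.mem_reProdIm.1 hz.1).2
        simp [ht0.le] at this
        exact this.1
      simp at hrect
      have e1 : ‖∫ x in (-t)..t, g (x + t * Complex.I)‖ ≤ K'/t^2 * |t - (-t)| := by
        apply intervalIntegral.norm_integral_le_of_norm_le_const
        intro x _
        have : t ≤ ‖(x + t * Complex.I : ℂ)‖ := by
          have := Complex.abs_im_le_norm (x + t * Complex.I : ℂ)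
          simp [abs_of_pos ht0] at this; exact this
        refine (hgb _ (by simp [ht0.le]) (ht.trans this)).trans ?_
        gcongr
      have e2 : ‖∫ x in (0:ℝ)..t, g (t + x * Complex.I)‖ ≤ K'/t^2 * |t - 0| := by
        apply intervalIntegral.norm_integral_le_of_norm_le_const
        intro x hx
        rw [Set.uIoc_of_le ht0.le] at hx
        have : t ≤ ‖(t + x * Complex.I : ℂ)‖ := by
          have := Complex.abs_re_le_norm (t + x * Complex.I : ℂ)
          simp [abs_of_pos ht0] at this; exact this
        refine (hgb _ (by simp [hx.1.le]) (ht.trans this)).trans ?_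
        gcongr
      have e3 : ‖∫ x in (0:ℝ)..t, g (-t + x * Complex.I)‖ ≤ K'/t^2 * |t - 0| := by
        apply intervalIntegral.norm_integral_le_of_norm_le_const
        intro x hx
        rw [Set.uIoc_of_le ht0.le] at hx
        have : t ≤ ‖(-t + x * Complex.I : ℂ)‖ := by
          have := Complex.abs_re_le_norm (-t + x * Complex.I : ℂ)
          simp [abs_of_pos ht0] at this; exact this
        refine (hgb _ (by simp [hx.1.le]) (ht.trans this)).trans ?_
        gcongr
      have hEq : ∫ x in (-t)..t, g x = (∫ x in (-t)..t, g (x + t * Complex.I))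
         - Complex.I * (∫ x in (0:ℝ)..t, g (t + x * Complex.I)) + Complex.I * (∫ x in (0:ℝ)..t, g (-t + x * Complex.I)) := by
        linear_combination hrect
      rw [hEq]
      refine (norm_add_le _ _).trans ?_
      refine (add_le_add_left (norm_sub_le _ _) _).trans ?_
      rw [norm_mul, norm_mul, Complex.norm_I, one_mul, one_mul]
      refine (add_le_add (add_le_add e1 e2) e3).trans ?_
      rw [sub_zero, sub_neg_eq_add, abs_of_pos ht0, abs_of_pos (by linarith)]
      apply le_of_eq
      field_simp
      norm_num
    have h4 : Filter.Tendsto (fun t : ℝ => 4 * K' / t) Filter.atTop (nhds 0) :=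
      Filter.Tendsto.div_atTop tendsto_const_nhds Filter.tendsto_id
    refine squeeze_zero_norm' ?_ h4
    filter_upwards [Filter.eventually_ge_atTop (max T 2)] with t ht using hzero t ht
  have hg0 : ∫ x : ℝ, g x = 0 := by
    have := intervalIntegral_tendsto_integral hgi (Filter.tendsto_neg_atTop_atBot) Filter.tendsto_id
    exact tendsto_nhds_unique this hlim
  have hae : (fun x : ℝ => (f x - f 0 / (1 + (x:ℂ)^2)) / x) =ᵐ[volume]
      (fun x : ℝ => g x + Complex.I * f 0 * (((1 + x^2)⁻¹ : ℝ) : ℂ)) := by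
    have : ∀ᵐ x : ℝ, x ≠ 0 := by simp [ae_iff]
    filter_upwards [this] with x hx
    have hx' : (x:ℂ) ≠ 0 := by exact_mod_cast hx
    have h1 := hzi x (by simp)
    have h2 : (1 + (x:ℂ)^2) ≠ 0 := by
      have : (1 + x^2 : ℝ) ≠ 0 := by positivity
      exact_mod_cast this
    rw [hgne _ hx']
    simp only [hφ]
    push_cast
    have h3 : (1 + (x:ℂ)^2) = (x + Complex.I) * (x - Complex.I) := by
      ring_nf; simp; ring
    have h4 : (x - Complex.I : ℂ) ≠ 0 := by
      intro h; rw [h3, h] at h2; simp at h2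
    rw [h3]
    field_simp
    ring_nf
    simp only [Complex.I_sq]
    ring
  have hi2 : Integrable (fun x : ℝ => Complex.I * f 0 * (((1 + x^2)⁻¹ : ℝ) : ℂ)) :=
    (integrable_inv_one_add_sq.ofReal).const_mul _
  refine ⟨?_, (hgi.add hi2).congr hae.symm⟩
  rw [integral_congr_ae hae, integral_add hgi hi2, hg0, integral_const_mul, integral_complex_ofReal,
    integral_univ_inv_one_add_sq]
  ring

variable {n : ℕ}

/-- resolvent of the pencil -/
def RR (A B : Matrix (Fin n) (Fin n) ℂ) (z : ℂ) (s : ℝ) : Matrix (Fin n) (Fin n) ℂ :=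
  (z • B - A + ((s:ℂ) * Complex.I) • (1 : Matrix (Fin n) (Fin n) ℂ))⁻¹

theorem spec_dec (H : Matrix (Fin n) (Fin n) ℂ) (hH : H.IsHermitian) :
    ∃ (U V : Matrix (Fin n) (Fin n) ℂ) (l : Fin n → ℝ), U * V = 1 ∧ V * U = 1 ∧ V = Uᴴ ∧
      H = U * diagonal (fun k => (l k : ℂ)) * V ∧
      (∀ f : ℝ → ℝ, cfc f H = U * diagonal (fun k => ((f (l k) : ℝ) : ℂ)) * V) ∧
      (H.PosDef → ∀ k, 0 < l k) := by
  refine ⟨hH.eigenvectorUnitary, star hH.eigenvectorUnitary, hH.eigenvalues, ?_, ?_, rfl, ?_, ?_, ?_⟩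
  · exact Unitary.coe_mul_star_self _
  · exact Unitary.coe_star_mul_self _
  · conv_lhs => rw [hH.spectral_theorem]
    rw [Unitary.conjStarAlgAut_apply]; rfl
  · intro f
    rw [hH.cfc_eq, IsHermitian.cfc, Unitary.conjStarAlgAut_apply]; rfl
  · intro h k
    exact h.eigenvalues_pos k

theorem res_dec (U V : Matrix (Fin n) (Fin n) ℂ) (l : Fin n → ℝ) (hUV : U * V = 1) (hVU : V * U = 1)
    (x s : ℝ) (hs : 0 < s) :
    ((x:ℂ) • (U * diagonal (fun k => (l k : ℂ)) * V) + ((s:ℂ) * Complex.I) • (1 : Matrix (Fin n) (Fin n) ℂ))⁻¹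
      = U * diagonal (fun k => ((x * l k : ℝ) + (s:ℂ) * Complex.I)⁻¹) * V := by
  have hne : ∀ k, ((x * l k : ℝ) + (s:ℂ) * Complex.I) ≠ 0 := by
    intro k h
    have := congrArg Complex.im h
    simp at this; exact hs.ne' this
  have h1 : ((x:ℂ) • (U * diagonal (fun k => (l k : ℂ)) * V) + ((s:ℂ) * Complex.I) • (1 : Matrix (Fin n) (Fin n) ℂ))
     = U * diagonal (fun k => ((x * l k : ℝ) + (s:ℂ) * Complex.I)) * V := by
    have : diagonal (fun k => ((x * l k : ℝ) + (s:ℂ) * Complex.I)) =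
      (x:ℂ) • diagonal (fun k => (l k : ℂ)) + ((s:ℂ) * Complex.I) • (1 : Matrix (Fin n) (Fin n) ℂ) := by
      ext i j
      by_cases h : i = j
      · subst h; simp
      · simp [h]
    rw [this, mul_add, add_mul]
    simp [hUV]
  rw [h1]
  apply Matrix.inv_eq_right_inv
  calc U * diagonal (fun k => ((x * l k : ℝ) + (s:ℂ) * Complex.I)) * V * (U * diagonal (fun k => ((x * l k : ℝ) + (s:ℂ) * Complex.I)⁻¹) * V)
      = U * diagonal (fun k => ((x * l k : ℝ) + (s:ℂ) * Complex.I)) * (V * U) * diagonal (fun k => ((x * l k : ℝ) + (s:ℂ) * Complex.I)⁻¹) * V := by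
        simp only [mul_assoc]
    _ = 1 := by
        rw [hVU, mul_one, mul_assoc U, diagonal_mul_diagonal]
        have : (fun k => ((x * l k : ℝ) + (s:ℂ) * Complex.I) * ((x * l k : ℝ) + (s:ℂ) * Complex.I)⁻¹) = fun _ => 1 := by
          funext k; exact mul_inv_cancel₀ (hne k)
        rw [this, diagonal_one, mul_one, hUV]

theorem pencil_isUnit (A B : Matrix (Fin n) (Fin n) ℂ) (hA : A.IsHermitian) (hB : B.PosDef)
    (z : ℂ) (hz : 0 ≤ z.im) (s : ℝ) (hs : 0 < s) :
    IsUnit (z • B - A + ((s:ℂ) * Complex.I) • (1 : Matrix (Fin n) (Fin n) ℂ)) := by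
  rw [Matrix.isUnit_iff_isUnit_det, isUnit_iff_ne_zero]
  intro hdet
  obtain ⟨v, hv, hv0⟩ := Matrix.exists_mulVec_eq_zero_iff.2 hdet
  have h1 : star v ⬝ᵥ ((z • B - A + ((s:ℂ) * Complex.I) • (1 : Matrix (Fin n) (Fin n) ℂ)) *ᵥ v) = 0 := by
    rw [hv0]; simp
  rw [add_mulVec, sub_mulVec, smul_mulVec, smul_mulVec, one_mulVec, dotProduct_add, dotProduct_sub,
    dotProduct_smul, dotProduct_smul, smul_eq_mul, smul_eq_mul] at h1
  have hb : 0 < star v ⬝ᵥ (B *ᵥ v) := hB.dotProduct_mulVec_pos hv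
  have hvv : 0 < star v ⬝ᵥ v := by
    have := (Matrix.PosDef.one (n := Fin n) (R := ℂ)).dotProduct_mulVec_pos hv
    simpa using this
  have ha : (star v ⬝ᵥ (A *ᵥ v)).im = 0 := by
    exact hA.im_star_dotProduct_mulVec_self v
  rw [Complex.lt_def] at hb hvv
  have := congrArg Complex.im h1
  simp [ha, ← hb.2, ← hvv.2] at this
  have h5 : 0 ≤ z.im * (star v ⬝ᵥ (B *ᵥ v)).re := mul_nonneg hz hb.1.le
  have h6 : 0 < s * (star v ⬝ᵥ v).re := mul_pos hs hvv.1
  linarith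

section norms
open scoped Matrix.Norms.L2Operator

theorem S_bound (B : Matrix (Fin n) (Fin n) ℂ) (hB : B.PosDef) :
    ∃ C : ℝ, 0 < C ∧ ∀ x s : ℝ, 0 < s →
      ‖((x:ℂ) • B + ((s:ℂ) * Complex.I) • (1 : Matrix (Fin n) (Fin n) ℂ))⁻¹‖ ≤ C / (|x| + s) := by
  obtain ⟨U, V, l, hUV, hVU, -, hBe, -, hp⟩ := spec_dec B hB.1
  have hp := hp hB
  obtain ⟨b, hb0, hb1, hb⟩ : ∃ b : ℝ, 0 < b ∧ b ≤ 1 ∧ ∀ k, b ≤ l k := by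
    rcases isEmpty_or_nonempty (Fin n) with he | he
    · exact ⟨1, one_pos, le_rfl, fun k => (he.false k).elim⟩
    · obtain ⟨k0, hk0⟩ := Finite.exists_min l
      exact ⟨min 1 (l k0), lt_min one_pos (hp k0), min_le_left _ _,
        fun k => (min_le_right _ _).trans (hk0 k)⟩
  refine ⟨(‖U‖ * ‖V‖ + 1) * (2 / b), by positivity, ?_⟩
  intro x s hs
  rw [hBe, res_dec U V l hUV hVU x s hs]
  have hd : ‖diagonal (fun k => ((x * l k : ℝ) + (s:ℂ) * Complex.I)⁻¹)‖ ≤ (2 / b) / (|x| + s) := by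
    rw [Matrix.l2_opNorm_diagonal, pi_norm_le_iff_of_nonneg (by positivity)]
    intro k
    rw [norm_inv, inv_le_comm₀ _ (by positivity)]
    · rw [inv_div, div_div_eq_mul_div]
      have h1 := Complex.abs_re_le_norm ((x * l k : ℝ) + (s:ℂ) * Complex.I)
      have h2 := Complex.abs_im_le_norm ((x * l k : ℝ) + (s:ℂ) * Complex.I)
      simp [abs_mul] at h1 h2
      rw [abs_of_pos (hp k)] at h1
      rw [abs_of_pos hs] at h2
      have := hb k
      push_cast
      nlinarith [abs_nonneg x]
    · rw [norm_pos_iff]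
      intro h
      have := congrArg Complex.im h
      simp at this; exact hs.ne' this
  calc _ ≤ ‖U‖ * ‖diagonal (fun k => ((x * l k : ℝ) + (s:ℂ) * Complex.I)⁻¹)‖ * ‖V‖ :=
        (norm_mul_le _ _).trans (mul_le_mul_of_nonneg_right (norm_mul_le _ _) (norm_nonneg _))
    _ ≤ ‖U‖ * ((2 / b) / (|x| + s)) * ‖V‖ := by gcongr
    _ = (‖U‖ * ‖V‖) * (2/b) / (|x| + s) := by ring
    _ ≤ _ := by gcongr; linarith

theorem mat_inv_sub_inv (X Y : Matrix (Fin n) (Fin n) ℂ) (hX : IsUnit X) (hY : IsUnit Y) :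
    X⁻¹ - Y⁻¹ = X⁻¹ * (Y - X) * Y⁻¹ := by
  rw [Matrix.isUnit_iff_isUnit_det] at hX hY
  rw [mul_sub, sub_mul, Matrix.nonsing_inv_mul _ hX, mul_assoc, Matrix.mul_nonsing_inv _ hY]
  simp

theorem pert (X Y : Matrix (Fin n) (Fin n) ℂ) (hX : IsUnit X) (hY : IsUnit Y)
    (h : ‖Y - X‖ * ‖Y⁻¹‖ ≤ 1/2) : ‖X⁻¹‖ ≤ 2 * ‖Y⁻¹‖ := by
  have h1 := mat_inv_sub_inv X Y hX hY
  have h2 : X⁻¹ = Y⁻¹ + X⁻¹ * (Y - X) * Y⁻¹ := by rw [← h1]; abel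
  have h3 : ‖X⁻¹‖ ≤ ‖Y⁻¹‖ + ‖X⁻¹‖ * (‖Y - X‖ * ‖Y⁻¹‖) := by
    conv_lhs => rw [h2]
    refine (norm_add_le _ _).trans ?_
    gcongr
    rw [mul_assoc]
    refine (norm_mul_le _ _).trans ?_
    gcongr
    exact norm_mul_le _ _
  nlinarith [norm_nonneg (X⁻¹)]

theorem R_big (A B : Matrix (Fin n) (Fin n) ℂ) (hA : A.PosDef) (hB : B.PosDef) :
    ∃ C T : ℝ, 0 < C ∧ 1 ≤ T ∧ ∀ x s : ℝ, 0 < s → T ≤ |x| → ‖RR A B x s‖ ≤ C / (|x| + s) := by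
  obtain ⟨C, hC, h⟩ := S_bound B hB
  refine ⟨2 * C, 1 + 2 * C * ‖A‖, by positivity, by nlinarith [mul_nonneg hC.le (norm_nonneg A)], ?_⟩
  intro x s hs hx
  have h2 := h x s hs
  have hx0 : 0 < |x| := by nlinarith [mul_nonneg hC.le (norm_nonneg A)]
  have hY : IsUnit ((x:ℂ) • B + ((s:ℂ) * Complex.I) • (1 : Matrix (Fin n) (Fin n) ℂ)) := by
    have := pencil_isUnit 0 B (by simp [IsHermitian]) hB x (by simp) s hs
    simpa using this
  rw [RR]
  refine (pert _ _ (pencil_isUnit A B hA.1 hB x (by simp) s hs) hY ?_).trans ?_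
  · have e : ((x:ℂ) • B + ((s:ℂ) * Complex.I) • (1 : Matrix (Fin n) (Fin n) ℂ)) - ((x:ℂ) • B - A + ((s:ℂ) * Complex.I) • (1 : Matrix (Fin n) (Fin n) ℂ)) = A := by abel
    rw [e]
    calc _ ≤ ‖A‖ * (C / (|x| + s)) := by gcongr
      _ ≤ 1/2 := by
        rw [mul_div_assoc', div_le_iff₀ (by positivity)]
        linarith
  · rw [mul_div_assoc]; gcongr

theorem R_small (A B : Matrix (Fin n) (Fin n) ℂ) (hA : A.PosDef) (hB : B.PosDef) :
    ∃ C δ : ℝ, 0 < C ∧ 0 < δ ∧ ∀ x s : ℝ, 0 < s → |x| ≤ δ → ‖RR A B x s‖ ≤ C / (1 + s) := by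
  obtain ⟨C, hC, h⟩ := S_bound A hA
  refine ⟨2 * C, 1 / (2 * C * (‖B‖ + 1)), by positivity, by positivity, ?_⟩
  intro x s hs hx
  have h2 := h (-1) s hs
  have hY : IsUnit (((-1:ℝ):ℂ) • A + ((s:ℂ) * Complex.I) • (1 : Matrix (Fin n) (Fin n) ℂ)) := by
    have := pencil_isUnit A B hA.1 hB 0 (by simp) s hs
    simpa using this
  rw [RR]
  refine (pert _ _ (pencil_isUnit A B hA.1 hB x (by simp) s hs) hY ?_).trans ?_
  · have e : (((-1:ℝ):ℂ) • A + ((s:ℂ) * Complex.I) • (1 : Matrix (Fin n) (Fin n) ℂ)) - ((x:ℂ) • B - A + ((s:ℂ) * Complex.I) • (1 : Matrix (Fin n) (Fin n) ℂ)) = -((x:ℂ) • B) := by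
      simp; abel
    rw [e, norm_neg, norm_smul, Complex.norm_real, Real.norm_eq_abs]
    simp only [abs_neg, abs_one] at h2
    calc _ ≤ 1 / (2 * C * (‖B‖ + 1)) * (‖B‖ + 1) * (C / (1 + s)) := by gcongr; linarith
      _ = 1/2 * (1 / (1 + s)) := by field_simp
      _ ≤ 1/2 * 1 := by
        gcongr
        rw [div_le_one (by positivity)]; linarith
      _ = 1/2 := by norm_num
  · rw [mul_div_assoc]
    simp only [abs_neg, abs_one] at h2
    gcongr

theorem R_cplx (A B : Matrix (Fin n) (Fin n) ℂ) (hA : A.PosDef) (hB : B.PosDef) (s : ℝ) (hs : 0 < s) :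
    ∃ K T : ℝ, 0 < T ∧ 0 ≤ K ∧ ∀ z : ℂ, 0 ≤ z.im → T ≤ ‖z‖ → ‖RR A B z s‖ ≤ K / ‖z‖ := by
  set c := ‖A - ((s:ℂ) * Complex.I) • (1 : Matrix (Fin n) (Fin n) ℂ)‖ * ‖B⁻¹‖ with hc
  refine ⟨2 * ‖B⁻¹‖, 2 * c + 1, by positivity, by positivity, ?_⟩
  intro z hz hT
  have hc0 : 0 ≤ c := by positivity
  have hz0 : 0 < ‖z‖ := by linarith
  have hzne : z ≠ 0 := norm_pos_iff.1 hz0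
  have hBu := (Matrix.isUnit_iff_isUnit_det _).1 hB.isUnit
  have hY : IsUnit (z • B) := by
    exact hB.isUnit.smul (Units.mk0 z hzne)
  have hYi : (z • B)⁻¹ = z⁻¹ • B⁻¹ := by
    apply Matrix.inv_eq_right_inv
    rw [smul_mul_smul_comm, mul_inv_cancel₀ hzne, Matrix.mul_nonsing_inv _ hBu, one_smul]
  rw [RR]
  refine (pert _ _ (pencil_isUnit A B hA.1 hB z hz s hs) hY ?_).trans ?_
  · have e : z • B - (z • B - A + ((s:ℂ) * Complex.I) • (1 : Matrix (Fin n) (Fin n) ℂ)) = A - ((s:ℂ) * Complex.I) • (1 : Matrix (Fin n) (Fin n) ℂ) := by abel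
    rw [e, hYi, norm_smul, norm_inv]
    calc _ = c / ‖z‖ := by rw [hc]; ring
      _ ≤ 1/2 := by rw [div_le_iff₀ hz0]; linarith
  · rw [hYi, norm_smul, norm_inv]
    apply le_of_eq; ring

theorem R_diff (A B : Matrix (Fin n) (Fin n) ℂ) (hA : A.PosDef) (hB : B.PosDef) (s : ℝ) (hs : 0 < s)
    (z : ℂ) (hz : 0 ≤ z.im) (p q : Fin n) : DifferentiableAt ℂ (fun z => RR A B z s p q) z := by
  have h1 : DifferentiableAt ℂ (fun z => RR A B z s) z := by
    unfold RR
    simp only [Matrix.nonsing_inv_eq_ringInverse]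
    have hu := pencil_isUnit A B hA.1 hB z hz s hs
    have := differentiableAt_inverse (𝕜 := ℂ) hu
    refine DifferentiableAt.comp (f := fun z : ℂ => z • B - A + ((s:ℂ) * Complex.I) • (1 : Matrix (Fin n) (Fin n) ℂ)) z this ?_
    fun_prop
  have h2 : DifferentiableAt ℂ (Matrix.entryLinearMap ℂ ℂ p q).toContinuousLinearMap (RR A B z s) :=
    ContinuousLinearMap.differentiableAt _
  exact DifferentiableAt.comp (f := fun z => RR A B z s) z h2 h1

theorem entry_le (M : Matrix (Fin n) (Fin n) ℂ) (p q : Fin n) : ‖M p q‖ ≤ ‖M‖ := by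
  have h := Matrix.l2_opNorm_mulVec M (WithLp.toLp 2 (Pi.single q (1:ℂ)))
  have h2 := PiLp.norm_apply_le (p := 2) ((EuclideanSpace.equiv (Fin n) ℂ).symm (M *ᵥ (Pi.single q (1:ℂ)))) p
  have h3 : ‖(WithLp.toLp 2 (Pi.single q (1:ℂ)) : EuclideanSpace ℂ (Fin n))‖ = 1 := by
    simp
  rw [h3, mul_one] at h
  refine le_trans ?_ h
  refine le_trans (le_of_eq ?_) h2
  simp

theorem Fc_bound (A B : Matrix (Fin n) (Fin n) ℂ) (hA : A.PosDef) (hB : B.PosDef) :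
    ∃ C δ T : ℝ, 0 < C ∧ 0 < δ ∧ 1 ≤ T ∧ ∀ (x s : ℝ) (p q : Fin n), 0 < s → x ≠ 0 →
      (|x| ≤ δ → ‖((RR A B x s p q - RR B B x s p q) - (RR A B 0 s p q - RR B B 0 s p q) / (1 + (x:ℂ)^2)) / x‖
        ≤ C / (1 + x^2) * ((1 + s)^2)⁻¹) ∧
      (T ≤ |x| → ‖((RR A B x s p q - RR B B x s p q) - (RR A B 0 s p q - RR B B 0 s p q) / (1 + (x:ℂ)^2)) / x‖
        ≤ C / (1 + x^2) * (((1 + s)^2)⁻¹ + |x| / (|x| + s)^2)) := by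
  obtain ⟨c1, t1, hc1, ht1, h1⟩ := R_big A B hA hB
  obtain ⟨c2, t2, hc2, ht2, h2⟩ := R_big B B hB hB
  obtain ⟨c3, d3, hc3, hd3, h3⟩ := R_small A B hA hB
  obtain ⟨c4, d4, hc4, hd4, h4⟩ := R_small B B hB hB
  set c := c1 + c2 + c3 + c4 with hc
  have hc0 : 0 < c := by positivity
  set N := 2 * ‖B‖ + ‖A - B‖ + 1 with hN
  have hN0 : 0 < N := by positivity
  have key : ∀ (x s : ℝ) (p q : Fin n), 0 < s → x ≠ 0 →
    ‖((RR A B x s p q - RR B B x s p q) - (RR A B 0 s p q - RR B B 0 s p q) / (1 + (x:ℂ)^2)) / x‖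
      ≤ (1 + x^2)⁻¹ * (‖RR A B x s‖ * ‖B‖ * ‖RR A B 0 s‖ + ‖RR B B x s‖ * ‖B‖ * ‖RR B B 0 s‖
          + |x| * (‖RR A B x s‖ * ‖A - B‖ * ‖RR B B x s‖)) := by
    intro x s p q hs hx
    have hx' : (x:ℂ) ≠ 0 := by exact_mod_cast hx
    have hx2 : (1 + (x:ℂ)^2) ≠ 0 := by
      have : (1 + x^2 : ℝ) ≠ 0 := by positivity
      exact_mod_cast this
    have e1 : RR A B x s - RR A B 0 s = -((x:ℂ) • (RR A B x s * B * RR A B 0 s)) := by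
      have := mat_inv_sub_inv _ _ (pencil_isUnit A B hA.1 hB x (by simp) s hs) (pencil_isUnit A B hA.1 hB 0 (by simp) s hs)
      unfold RR
      rw [this]
      have e : (0:ℂ) • B - A + ((s:ℂ) * Complex.I) • (1 : Matrix (Fin n) (Fin n) ℂ) - ((x:ℂ) • B - A + ((s:ℂ) * Complex.I) • (1 : Matrix (Fin n) (Fin n) ℂ)) = -((x:ℂ) • B) := by
        rw [zero_smul]; abel
      rw [e]; simp
    have e2 : RR B B x s - RR B B 0 s = -((x:ℂ) • (RR B B x s * B * RR B B 0 s)) := by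
      have := mat_inv_sub_inv _ _ (pencil_isUnit B B hB.1 hB x (by simp) s hs) (pencil_isUnit B B hB.1 hB 0 (by simp) s hs)
      unfold RR
      rw [this]
      have e : (0:ℂ) • B - B + ((s:ℂ) * Complex.I) • (1 : Matrix (Fin n) (Fin n) ℂ) - ((x:ℂ) • B - B + ((s:ℂ) * Complex.I) • (1 : Matrix (Fin n) (Fin n) ℂ)) = -((x:ℂ) • B) := by
        rw [zero_smul]; abel
      rw [e]; simp
    have e3 : RR A B x s - RR B B x s = RR A B x s * (A - B) * RR B B x s := by
      have := mat_inv_sub_inv _ _ (pencil_isUnit A B hA.1 hB x (by simp) s hs) (pencil_isUnit B B hB.1 hB x (by simp) s hs)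
      unfold RR
      rw [this]
      congr 2
      abel
    have e1' := congrFun (congrFun e1 p) q
    have e2' := congrFun (congrFun e2 p) q
    have e3' := congrFun (congrFun e3 p) q
    simp only [Matrix.sub_apply, Matrix.neg_apply, Matrix.smul_apply, smul_eq_mul] at e1' e2' e3'
    have e4 : ((RR A B x s p q - RR B B x s p q) - (RR A B 0 s p q - RR B B 0 s p q) / (1 + (x:ℂ)^2)) / x
       = (1 + (x:ℂ)^2)⁻¹ * (-((RR A B x s * B * RR A B 0 s) p q) + (RR B B x s * B * RR B B 0 s) p q
          + x * ((RR A B x s * (A - B) * RR B B x s) p q)) := by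
      rw [← e3']
      field_simp
      linear_combination e1' - e2'
    rw [e4, norm_mul, norm_inv]
    have : ‖(1 + (x:ℂ)^2)‖ = 1 + x^2 := by
      have : (1 + (x:ℂ)^2) = ((1 + x^2 : ℝ) : ℂ) := by push_cast; rfl
      rw [this, Complex.norm_real, Real.norm_eq_abs, abs_of_pos (by positivity)]
    rw [this]
    have tri : ∀ X Y Z : Matrix (Fin n) (Fin n) ℂ, ‖(X * Y * Z) p q‖ ≤ ‖X‖ * ‖Y‖ * ‖Z‖ := by
      intro X Y Z
      refine (entry_le _ _ _).trans ((norm_mul_le _ _).trans ?_)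
      gcongr
      exact norm_mul_le _ _
    gcongr
    refine (norm_add_le _ _).trans ?_
    refine add_le_add ((norm_add_le _ _).trans ?_) ?_
    · rw [norm_neg]
      exact add_le_add (tri _ _ _) (tri _ _ _)
    · rw [norm_mul, Complex.norm_real, Real.norm_eq_abs]
      gcongr
      exact tri _ _ _
  refine ⟨c^2 * N, min 1 (min d3 d4), max t1 t2, by positivity, by positivity, le_max_of_le_left ht1, ?_⟩
  intro x s p q hs hx
  have hA0 : ‖RR A B 0 s‖ ≤ c / (1 + s) := by
    have := h3 0 s hs (by simpa using hd3.le)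
    simp only [Complex.ofReal_zero] at this
    refine this.trans ?_
    gcongr
    linarith
  have hB0 : ‖RR B B 0 s‖ ≤ c / (1 + s) := by
    have := h4 0 s hs (by simpa using hd4.le)
    simp only [Complex.ofReal_zero] at this
    refine this.trans ?_
    gcongr
    linarith
  constructor
  · intro hxd
    have hx1 : |x| ≤ 1 := hxd.trans (min_le_left _ _)
    have hAx : ‖RR A B x s‖ ≤ c / (1 + s) := by
      refine (h3 x s hs (hxd.trans ((min_le_right _ _).trans (min_le_left _ _)))).trans ?_
      gcongr
      linarith
    have hBx : ‖RR B B x s‖ ≤ c / (1 + s) := by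
      refine (h4 x s hs (hxd.trans ((min_le_right _ _).trans (min_le_right _ _)))).trans ?_
      gcongr
      linarith
    refine (key x s p q hs hx).trans ?_
    calc _ ≤ (1 + x^2)⁻¹ * (c / (1 + s) * ‖B‖ * (c / (1 + s)) + c / (1 + s) * ‖B‖ * (c / (1 + s))
          + 1 * (c / (1 + s) * ‖A - B‖ * (c / (1 + s)))) := by gcongr
      _ = (c^2 * (2 * ‖B‖ + ‖A - B‖)) / (1 + x^2) * ((1 + s)^2)⁻¹ := by field_simp; ring
      _ ≤ _ := by gcongr; linarith
  · intro hxd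
    have hx1 : 1 ≤ |x| := ht1.trans ((le_max_left _ _).trans hxd)
    have hAx : ‖RR A B x s‖ ≤ c / (|x| + s) := by
      refine (h1 x s hs ((le_max_left _ _).trans hxd)).trans ?_
      gcongr
      linarith
    have hBx : ‖RR B B x s‖ ≤ c / (|x| + s) := by
      refine (h2 x s hs ((le_max_right _ _).trans hxd)).trans ?_
      gcongr
      linarith
    have hAx1 : ‖RR A B x s‖ ≤ c / (1 + s) := hAx.trans (by gcongr)
    have hBx1 : ‖RR B B x s‖ ≤ c / (1 + s) := hBx.trans (by gcongr)
    refine (key x s p q hs hx).trans ?_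
    calc _ ≤ (1 + x^2)⁻¹ * (c / (1 + s) * ‖B‖ * (c / (1 + s)) + c / (1 + s) * ‖B‖ * (c / (1 + s))
          + |x| * (c / (|x| + s) * ‖A - B‖ * (c / (|x| + s)))) := by gcongr
      _ = (c^2 * (2 * ‖B‖)) / (1 + x^2) * ((1 + s)^2)⁻¹ + c^2 * ‖A - B‖ / (1 + x^2) * (|x| / (|x| + s)^2) := by
          have : |x| + s ≠ 0 := by positivity
          field_simp; ring
      _ ≤ (c^2 * N) / (1 + x^2) * ((1 + s)^2)⁻¹ + c^2 * N / (1 + x^2) * (|x| / (|x| + s)^2) := by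
          gcongr
          · linarith [norm_nonneg (A - B)]
          · linarith [norm_nonneg B]
      _ = _ := by ring

/-- entrywise contour identity -/
theorem R_cplx_entry (A B : Matrix (Fin n) (Fin n) ℂ) (hA : A.PosDef) (hB : B.PosDef) (s : ℝ) (hs : 0 < s)
    (p q : Fin n) :
    ∃ K T : ℝ, 0 < T ∧ 0 ≤ K ∧ ∀ z : ℂ, 0 ≤ z.im → T ≤ ‖z‖ → ‖RR A B z s p q‖ ≤ K / ‖z‖ := by
  obtain ⟨K, T, hT, hK, h⟩ := R_cplx A B hA hB s hs
  exact ⟨K, T, hT, hK, fun z hz hz2 => (entry_le _ _ _).trans (h z hz hz2)⟩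

end norms

theorem int_c (c : ℝ) (hc : 0 < c) :
    IntegrableOn (fun s : ℝ => c / (c + s)^2) (Set.Ioi 0) ∧ ∫ s in Set.Ioi (0:ℝ), c / (c + s)^2 = 1 := by
  have hd : ∀ x ∈ Set.Ici (0:ℝ), HasDerivAt (fun s : ℝ => -(c / (c + s))) (c / (c + x)^2) x := by
    intro x hx
    have hx0 : c + x ≠ 0 := by have : (0:ℝ) ≤ x := hx; positivity
    have h1 : HasDerivAt (fun s : ℝ => c + s) 1 x := by simpa using (hasDerivAt_id x).const_add c
    have := ((hasDerivAt_const x c).div h1 hx0).neg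
    refine this.congr_deriv ?_
    ring
  have hlim : Filter.Tendsto (fun s : ℝ => -(c / (c + s))) Filter.atTop (nhds 0) := by
    have : Filter.Tendsto (fun s : ℝ => c / (c + s)) Filter.atTop (nhds 0) :=
      Filter.Tendsto.div_atTop tendsto_const_nhds (Filter.tendsto_atTop_add_const_left _ _ Filter.tendsto_id)
    simpa using this.neg
  have hpos : ∀ x ∈ Set.Ioi (0:ℝ), 0 ≤ c / (c + x)^2 := fun x _ => by positivity
  refine ⟨integrableOn_Ioi_deriv_of_nonneg' hd hpos hlim, ?_⟩
  rw [integral_Ioi_of_hasDerivAt_of_nonneg' hd hpos hlim]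
  field_simp; simp

theorem int_arctan_pos (l : ℝ) (hl : 0 < l) :
    IntegrableOn (fun s : ℝ => l / (l^2 + s^2)) (Set.Ioi 0) ∧
      ∫ s in Set.Ioi (0:ℝ), l / (l^2 + s^2) = Real.pi / 2 := by
  have hd : ∀ x ∈ Set.Ici (0:ℝ), HasDerivAt (fun s : ℝ => Real.arctan (s / l)) (l / (l^2 + x^2)) x := by
    intro x hx
    have := ((hasDerivAt_id x).div_const l).arctan
    refine this.congr_deriv ?_
    simp only [id]
    field_simp
  have hlim : Filter.Tendsto (fun s : ℝ => Real.arctan (s / l)) Filter.atTop (nhds (Real.pi / 2)) := by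
    have h1 := Real.tendsto_arctan_atTop.mono_right nhdsWithin_le_nhds
    exact h1.comp (Filter.Tendsto.atTop_div_const hl Filter.tendsto_id)
  have hpos : ∀ x ∈ Set.Ioi (0:ℝ), 0 ≤ l / (l^2 + x^2) := fun x _ => by positivity
  refine ⟨integrableOn_Ioi_deriv_of_nonneg' hd hpos hlim, ?_⟩
  rw [integral_Ioi_of_hasDerivAt_of_nonneg' hd hpos hlim]
  simp

theorem int_arctan (l : ℝ) :
    IntegrableOn (fun s : ℝ => l / (l^2 + s^2)) (Set.Ioi 0) ∧
      ∫ s in Set.Ioi (0:ℝ), l / (l^2 + s^2) = Real.pi / 2 * ((if 0 < l then 1 else 0) - (if 0 < -l then 1 else 0)) ∧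
      ∫ s in Set.Ioi (0:ℝ), ‖l / (l^2 + s^2)‖ ≤ Real.pi / 2 := by
  rcases lt_trichotomy l 0 with h | h | h
  · have h' : 0 < -l := by linarith
    obtain ⟨h1, h2⟩ := int_arctan_pos (-l) h'
    have e : (fun s : ℝ => l / (l^2 + s^2)) = fun s => -(-l / ((-l)^2 + s^2)) := by
      funext s; rw [neg_sq]; ring
    have e2 : (fun s : ℝ => ‖l / (l^2 + s^2)‖) = fun s => (-l / ((-l)^2 + s^2)) := by
      funext s; rw [neg_sq, Real.norm_eq_abs, abs_div, abs_of_neg h, abs_of_nonneg (by positivity)]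
    refine ⟨by rw [e]; exact h1.neg, ?_, ?_⟩
    · rw [e, integral_neg, h2, if_neg (by linarith), if_pos h']; ring
    · rw [e2, h2]
  · subst h; simp; positivity
  · obtain ⟨h1, h2⟩ := int_arctan_pos l h
    refine ⟨h1, ?_, ?_⟩
    · rw [h2]; simp [h, h.le]
    · have e2 : (fun s : ℝ => ‖l / (l^2 + s^2)‖) = fun s => (l / (l^2 + s^2)) := by
        funext s; rw [Real.norm_eq_abs, abs_of_nonneg (by positivity)]
      rw [e2, h2]

theorem int_log (l : ℝ) (hl : 0 < l) :
    IntegrableOn (fun s : ℝ => s / (l^2 + s^2) - s / (1 + s^2)) (Set.Ioi 0) ∧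
      ∫ s in Set.Ioi (0:ℝ), (s / (l^2 + s^2) - s / (1 + s^2)) = - Real.log l := by
  have hd : ∀ x ∈ Set.Ici (0:ℝ), HasDerivAt (fun s : ℝ => (Real.log (l^2 + s^2) - Real.log (1 + s^2)) / 2)
      (x / (l^2 + x^2) - x / (1 + x^2)) x := by
    intro x hx
    have h1 : HasDerivAt (fun s : ℝ => l^2 + s^2) (2 * x) x := by
      simpa using (hasDerivAt_pow 2 x).const_add (l^2)
    have h2 : HasDerivAt (fun s : ℝ => 1 + s^2) (2 * x) x := by
      simpa using (hasDerivAt_pow 2 x).const_add 1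
    have := ((h1.log (by positivity)).sub (h2.log (by positivity))).div_const 2
    refine this.congr_deriv ?_
    ring
  have hlim : Filter.Tendsto (fun s : ℝ => (Real.log (l^2 + s^2) - Real.log (1 + s^2)) / 2) Filter.atTop (nhds 0) := by
    have h1 : Filter.Tendsto (fun s : ℝ => 1 + (l^2 - 1) / (1 + s^2)) Filter.atTop (nhds 1) := by
      have : Filter.Tendsto (fun s : ℝ => (l^2 - 1) / (1 + s^2)) Filter.atTop (nhds 0) :=
        Filter.Tendsto.div_atTop tendsto_const_nhds
          (Filter.tendsto_atTop_add_const_left _ _ (Filter.tendsto_pow_atTop two_ne_zero))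
      simpa using this.const_add 1
    have h2 := ((Real.continuousAt_log one_ne_zero).tendsto.comp h1).div_const 2
    simp only [Real.log_one, zero_div] at h2
    refine h2.congr ?_
    intro s
    simp only [Function.comp]
    rw [← Real.log_div (by positivity) (by positivity)]
    congr 2
    field_simp; ring
  have hval : (0:ℝ) - (Real.log (l^2 + 0^2) - Real.log (1 + 0^2)) / 2 = - Real.log l := by
    simp
  have hform : ∀ x : ℝ, x / (l^2 + x^2) - x / (1 + x^2) = x * (1 - l^2) / ((l^2 + x^2) * (1 + x^2)) := by
    intro x
    have : l^2 + x^2 ≠ 0 := by positivity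
    field_simp; ring
  rcases le_total (l^2) 1 with h | h
  · have hpos : ∀ x ∈ Set.Ioi (0:ℝ), 0 ≤ x / (l^2 + x^2) - x / (1 + x^2) := by
      intro x hx
      have : (0:ℝ) < x := hx
      rw [hform]
      have : 0 ≤ 1 - l^2 := by linarith
      positivity
    refine ⟨integrableOn_Ioi_deriv_of_nonneg' hd hpos hlim, ?_⟩
    rw [integral_Ioi_of_hasDerivAt_of_nonneg' hd hpos hlim]
    exact hval
  · have hpos : ∀ x ∈ Set.Ioi (0:ℝ), x / (l^2 + x^2) - x / (1 + x^2) ≤ 0 := by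
      intro x hx
      have : (0:ℝ) < x := hx
      rw [hform]
      apply div_nonpos_of_nonpos_of_nonneg
      · nlinarith
      · positivity
    refine ⟨integrableOn_Ioi_deriv_of_nonpos' hd hpos hlim, ?_⟩
    rw [integral_Ioi_of_hasDerivAt_of_nonpos' hd hpos hlim]
    exact hval

/-- Hermitian part of the resolvent -/
def Hs (X : Matrix (Fin n) (Fin n) ℂ) (p q : Fin n) (s : ℝ) : ℂ :=
  ((X + ((s:ℂ) * Complex.I) • (1 : Matrix (Fin n) (Fin n) ℂ))⁻¹ p q
    + star ((X + ((s:ℂ) * Complex.I) • (1 : Matrix (Fin n) (Fin n) ℂ))⁻¹ q p)) / 2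

/-- anti-Hermitian part of the resolvent -/
def Is (X : Matrix (Fin n) (Fin n) ℂ) (p q : Fin n) (s : ℝ) : ℂ :=
  (Complex.I * (X + ((s:ℂ) * Complex.I) • (1 : Matrix (Fin n) (Fin n) ℂ))⁻¹ p q
    + star (Complex.I * (X + ((s:ℂ) * Complex.I) • (1 : Matrix (Fin n) (Fin n) ℂ))⁻¹ q p)) / 2

theorem spec_entry (U V : Matrix (Fin n) (Fin n) ℂ) (d : Fin n → ℂ) (p q : Fin n) :
    (U * diagonal d * V) p q = ∑ k, d k * (U p k * V k q) := by
  rw [Matrix.mul_apply]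
  simp only [Matrix.mul_diagonal]
  exact Finset.sum_congr rfl fun k _ => by ring

theorem spec_entry_star (U V : Matrix (Fin n) (Fin n) ℂ) (hV : V = Uᴴ) (d : Fin n → ℂ) (p q : Fin n) :
    star ((U * diagonal d * V) q p) = ∑ k, star (d k) * (U p k * V k q) := by
  rw [spec_entry, star_sum]
  refine Finset.sum_congr rfl fun k _ => ?_
  subst hV
  simp only [star_mul', Matrix.conjTranspose_apply, star_star]
  ring

theorem Hs_eq (X U V : Matrix (Fin n) (Fin n) ℂ) (l : Fin n → ℝ) (hUV : U * V = 1) (hVU : V * U = 1)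
    (hV : V = Uᴴ) (hX : X = U * diagonal (fun k => (l k : ℂ)) * V) (p q : Fin n) (s : ℝ) (hs : 0 < s) :
    Hs X p q s = ∑ k, ((l k / ((l k)^2 + s^2) : ℝ) : ℂ) * (U p k * V k q) ∧
    Is X p q s = ∑ k, ((s / ((l k)^2 + s^2) : ℝ) : ℂ) * (U p k * V k q) := by
  have h := res_dec U V l hUV hVU 1 s hs
  rw [Complex.ofReal_one, one_smul, ← hX] at h
  have hn : ∀ k, ((1 * l k : ℝ) + (s:ℂ) * Complex.I)⁻¹ =
     ((l k / ((l k)^2 + s^2) : ℝ) : ℂ) - ((s / ((l k)^2 + s^2) : ℝ) : ℂ) * Complex.I := by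
    intro k
    have h0 : ((l k : ℂ)^2 + (s:ℂ)^2) ≠ 0 := by
      have : ((l k)^2 + s^2 : ℝ) ≠ 0 := by positivity
      exact_mod_cast this
    apply inv_eq_of_mul_eq_one_left
    push_cast
    field_simp
    ring_nf
    simp only [Complex.I_sq]
    ring
  unfold Hs Is
  rw [h]
  constructor
  · rw [spec_entry, spec_entry_star U V hV, ← Finset.sum_add_distrib, Finset.sum_div]
    refine Finset.sum_congr rfl fun k _ => ?_
    rw [hn]
    simp
    ring
  · rw [star_mul', spec_entry, spec_entry_star U V hV, Finset.mul_sum, Finset.mul_sum, ← Finset.sum_add_distrib, Finset.sum_div]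
    refine Finset.sum_congr rfl fun k _ => ?_
    rw [hn]
    simp
    ring_nf
    simp only [Complex.I_sq]
    ring

theorem projPos_neg (X : Matrix (Fin n) (Fin n) ℂ) (hX : X.IsHermitian) :
    projPos (-X) = cfc (fun x : ℝ => if 0 < -x then (1:ℝ) else 0) X := by
  unfold projPos
  have hX' : IsSelfAdjoint X := hX
  have hf : (spectrum ℝ X).Finite := Matrix.finite_real_spectrum
  rw [cfc_comp_neg (fun x : ℝ => if 0 < x then (1:ℝ) else 0) X ((hf.image _).continuousOn _) hX']

theorem Hs_int (X : Matrix (Fin n) (Fin n) ℂ) (hX : X.IsHermitian) (p q : Fin n) :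
    IntegrableOn (Hs X p q) (Set.Ioi 0) ∧
    ∫ s in Set.Ioi (0:ℝ), Hs X p q s = Real.pi / 2 * ((projPos X - projPos (-X)) p q) ∧
    ∫ s in Set.Ioi (0:ℝ), ‖Hs X p q s‖ ≤ n * (Real.pi / 2) := by
  obtain ⟨U, V, l, hUV, hVU, hV, hXe, hcfc, -⟩ := spec_dec X hX
  have hUn : ∀ k, ‖U p k * V k q‖ ≤ 1 := by
    intro k
    have hU : U ∈ Matrix.unitaryGroup (Fin n) ℂ := by
      rw [Matrix.mem_unitaryGroup_iff]; rw [hV] at hUV; exact hUV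
    have h1 := entry_norm_bound_of_unitary hU p k
    have h2 := entry_norm_bound_of_unitary hU q k
    rw [norm_mul, hV, Matrix.conjTranspose_apply, norm_star]
    nlinarith [norm_nonneg (U p k), norm_nonneg (U q k)]
  have hEq : Set.EqOn (Hs X p q) (fun s => ∑ k, ((l k / ((l k)^2 + s^2) : ℝ) : ℂ) * (U p k * V k q)) (Set.Ioi 0) :=
    fun s hs => (Hs_eq X U V l hUV hVU hV hXe p q s hs).1
  have hk : ∀ k, IntegrableOn (fun s : ℝ => ((l k / ((l k)^2 + s^2) : ℝ) : ℂ) * (U p k * V k q)) (Set.Ioi 0) :=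
    fun k => ((int_arctan (l k)).1.ofReal).mul_const _
  have hI : IntegrableOn (Hs X p q) (Set.Ioi 0) := by
    rw [integrableOn_congr_fun hEq measurableSet_Ioi]
    exact integrable_finsetSum _ fun k _ => hk k
  refine ⟨hI, ?_, ?_⟩
  · rw [setIntegral_congr_fun measurableSet_Ioi hEq, integral_finsetSum _ fun k _ => hk k]
    rw [Matrix.sub_apply, projPos_neg X hX, hcfc, projPos, hcfc, spec_entry, spec_entry, ← Finset.sum_sub_distrib,
      Finset.mul_sum]
    refine Finset.sum_congr rfl fun k _ => ?_
    rw [integral_mul_const, integral_complex_ofReal, (int_arctan (l k)).2.1]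
    push_cast
    ring
  · calc _ ≤ ∫ s in Set.Ioi (0:ℝ), ∑ k : Fin n, ‖l k / ((l k)^2 + s^2)‖ := by
          refine setIntegral_mono_on hI.norm (integrable_finsetSum _ fun k _ => (int_arctan (l k)).1.norm) measurableSet_Ioi ?_
          intro s hs
          rw [hEq hs]
          refine (norm_sum_le _ _).trans (Finset.sum_le_sum fun k _ => ?_)
          rw [norm_mul, Complex.norm_real]
          exact mul_le_of_le_one_right (norm_nonneg _) (hUn k)
      _ = ∑ k : Fin n, ∫ s in Set.Ioi (0:ℝ), ‖l k / ((l k)^2 + s^2)‖ :=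
          integral_finsetSum _ fun k _ => (int_arctan (l k)).1.norm
      _ ≤ ∑ k : Fin n, Real.pi / 2 := Finset.sum_le_sum fun k _ => (int_arctan (l k)).2.2
      _ = _ := by simp

theorem Is_neg_int (A : Matrix (Fin n) (Fin n) ℂ) (hA : A.PosDef) (p q : Fin n) :
    IntegrableOn (fun s : ℝ => Is (-A) p q s - ((s / (1 + s^2) : ℝ) : ℂ) * (1 : Matrix (Fin n) (Fin n) ℂ) p q) (Set.Ioi 0) ∧
    ∫ s in Set.Ioi (0:ℝ), (Is (-A) p q s - ((s / (1 + s^2) : ℝ) : ℂ) * (1 : Matrix (Fin n) (Fin n) ℂ) p q)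
      = - mlog A p q := by
  obtain ⟨U, V, l, hUV, hVU, hV, hXe, hcfc, hp⟩ := spec_dec A hA.1
  have hp := hp hA
  have hXe' : -A = U * diagonal (fun k => ((-(l k) : ℝ) : ℂ)) * V := by
    rw [hXe]
    have : diagonal (fun k => ((-(l k) : ℝ) : ℂ)) = - diagonal (fun k => ((l k : ℝ) : ℂ)) := by
      ext i j; by_cases h : i = j
      · subst h; simp
      · simp [h]
    rw [this, mul_neg, neg_mul]
  have hEq : Set.EqOn (fun s : ℝ => Is (-A) p q s - ((s / (1 + s^2) : ℝ) : ℂ) * (1 : Matrix (Fin n) (Fin n) ℂ) p q)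
      (fun s => ∑ k, ((s / ((l k)^2 + s^2) - s / (1 + s^2) : ℝ) : ℂ) * (U p k * V k q)) (Set.Ioi 0) := by
    intro s hs
    simp only
    rw [(Hs_eq (-A) U V (fun k => - l k) hUV hVU hV hXe' p q s hs).2, ← hUV, Matrix.mul_apply, Finset.mul_sum,
      ← Finset.sum_sub_distrib]
    refine Finset.sum_congr rfl fun k _ => ?_
    push_cast
    ring
  have hk : ∀ k, IntegrableOn (fun s : ℝ => ((s / ((l k)^2 + s^2) - s / (1 + s^2) : ℝ) : ℂ) * (U p k * V k q)) (Set.Ioi 0) :=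
    fun k => ((int_log (l k) (hp k)).1.ofReal).mul_const _
  refine ⟨?_, ?_⟩
  · rw [integrableOn_congr_fun hEq measurableSet_Ioi]
    exact integrable_finsetSum _ fun k _ => hk k
  · rw [setIntegral_congr_fun measurableSet_Ioi hEq, integral_finsetSum _ fun k _ => hk k]
    rw [mlog, hcfc, spec_entry, ← Finset.sum_neg_distrib]
    refine Finset.sum_congr rfl fun k _ => ?_
    rw [integral_mul_const, integral_complex_ofReal, (int_log (l k) (hp k)).2]
    push_cast
    ring

def Fc (A B : Matrix (Fin n) (Fin n) ℂ) (p q : Fin n) (s x : ℝ) : ℂ :=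
  ((RR A B x s p q - RR B B x s p q) - (RR A B 0 s p q - RR B B 0 s p q) / (1 + (x:ℂ)^2)) / x

def Fh (A B : Matrix (Fin n) (Fin n) ℂ) (p q : Fin n) (s x : ℝ) : ℂ :=
  (Fc A B p q s x + star (Fc A B q p s x)) / 2

theorem Fh_eq (A B : Matrix (Fin n) (Fin n) ℂ) (p q : Fin n) (s x : ℝ) :
    Fh A B p q s x = (Hs ((x:ℂ) • B - A) p q s - Hs ((x:ℂ) • B - B) p q s
      - (Hs (-A) p q s - Hs (-B) p q s) / (1 + (x:ℂ)^2)) / x := by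
  unfold Fh Fc Hs RR
  simp only [zero_smul, zero_sub, star_div₀, star_sub, star_add, star_pow, star_one, Complex.star_def, Complex.conj_ofReal]
  ring

theorem RR_meas (A B : Matrix (Fin n) (Fin n) ℂ) (p q : Fin n) :
    Measurable (fun z : ℝ × ℝ => RR A B z.2 z.1 p q) := by
  unfold RR
  have hc : Continuous (fun z : ℝ × ℝ => ((z.2:ℂ) • B - A + ((z.1:ℂ) * Complex.I) • (1 : Matrix (Fin n) (Fin n) ℂ))) := by
    fun_prop
  simp only [Matrix.inv_def, Matrix.smul_apply, Ring.inverse_eq_inv', smul_eq_mul]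
  refine Measurable.mul ?_ ?_
  · exact (hc.matrix_det.measurable).inv
  · exact (hc.matrix_adjugate.matrix_elem p q).measurable

theorem Fc_meas (A B : Matrix (Fin n) (Fin n) ℂ) (p q : Fin n) :
    Measurable (fun z : ℝ × ℝ => Fc A B p q z.1 z.2) := by
  have h1 := RR_meas A B p q
  have h2 := RR_meas B B p q
  have h3 : Measurable (fun z : ℝ × ℝ => RR A B 0 z.1 p q) := by
    have := h1.comp (g := fun z : ℝ × ℝ => RR A B z.2 z.1 p q) (f := fun z : ℝ × ℝ => (z.1, (0:ℝ))) (by fun_prop)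
    simpa [Function.comp_def] using this
  have h4 : Measurable (fun z : ℝ × ℝ => RR B B 0 z.1 p q) := by
    have := h2.comp (g := fun z : ℝ × ℝ => RR B B z.2 z.1 p q) (f := fun z : ℝ × ℝ => (z.1, (0:ℝ))) (by fun_prop)
    simpa [Function.comp_def] using this
  unfold Fc
  fun_prop

theorem Fh_meas (A B : Matrix (Fin n) (Fin n) ℂ) (p q : Fin n) :
    Measurable (fun z : ℝ × ℝ => Fh A B p q z.1 z.2) := by
  have h1 := Fc_meas A B p q
  have h2 := Fc_meas A B q p
  unfold Fh
  have h3 : Measurable (fun z : ℝ × ℝ => star (Fc A B q p z.1 z.2)) := continuous_star.measurable.comp h2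
  fun_prop

theorem Fc_contour (A B : Matrix (Fin n) (Fin n) ℂ) (hA : A.PosDef) (hB : B.PosDef) (p q : Fin n)
    (s : ℝ) (hs : 0 < s) :
    ∫ x : ℝ, Fc A B p q s x = Complex.I * Real.pi * (RR A B 0 s p q - RR B B 0 s p q) ∧
    Integrable (fun x : ℝ => Fc A B p q s x) := by
  obtain ⟨K1, T1, hT1, hK1, h1⟩ := R_cplx_entry A B hA hB s hs p q
  obtain ⟨K2, T2, hT2, hK2, h2⟩ := R_cplx_entry B B hB hB s hs p q
  refine cont_lem (fun z => RR A B z s p q - RR B B z s p q) ?_ (K1 + K2) (max T1 T2) (by positivity) (by positivity) ?_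
  · intro z hz
    exact (R_diff A B hA hB s hs z hz p q).sub (R_diff B B hB hB s hs z hz p q)
  · intro z hz hT
    rw [add_div]
    exact (norm_sub_le _ _).trans (add_le_add (h1 z hz ((le_max_left _ _).trans hT)) (h2 z hz ((le_max_right _ _).trans hT)))

theorem Fh_contour (A B : Matrix (Fin n) (Fin n) ℂ) (hA : A.PosDef) (hB : B.PosDef) (p q : Fin n)
    (s : ℝ) (hs : 0 < s) :
    ∫ x : ℝ, Fh A B p q s x = Real.pi * (Is (-A) p q s - Is (-B) p q s) := by
  obtain ⟨h1, i1⟩ := Fc_contour A B hA hB p q s hs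
  obtain ⟨h2, i2⟩ := Fc_contour A B hA hB q p s hs
  have i3 : Integrable (fun x : ℝ => star (Fc A B q p s x)) :=
    (Complex.conjCLE.toContinuousLinearMap).integrable_comp i2
  have h3 : ∫ x : ℝ, star (Fc A B q p s x) = star (∫ x : ℝ, Fc A B q p s x) := integral_conj
  unfold Fh
  rw [integral_div, integral_add i1 i3, h3, h1, h2]
  unfold Is RR
  simp only [zero_smul, zero_sub, star_mul', star_sub, Complex.star_def, Complex.conj_ofReal, Complex.conj_I]
  ring

theorem Fh_slice (A B : Matrix (Fin n) (Fin n) ℂ) (hA : A.PosDef) (hB : B.PosDef) (p q : Fin n) (x : ℝ) :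
    IntegrableOn (fun s => Fh A B p q s x) (Set.Ioi 0) ∧
    ∫ s in Set.Ioi (0:ℝ), Fh A B p q s x = Real.pi / 2 *
      (((projPos ((x:ℂ) • B - A) - projPos (-((x:ℂ) • B - A))) p q
        - (projPos ((x:ℂ) • B - B) - projPos (-((x:ℂ) • B - B))) p q
        - ((projPos (-A) - projPos A) p q - (projPos (-B) - projPos B) p q) / (1 + (x:ℂ)^2)) / x) ∧
    ∫ s in Set.Ioi (0:ℝ), ‖Fh A B p q s x‖ ≤ (4 * (n * (Real.pi / 2))) / |x| := by
  have hxB : ((x:ℂ) • B).IsHermitian := by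
    rw [IsHermitian, conjTranspose_smul, hB.1]; simp
  obtain ⟨i1, e1, b1⟩ := Hs_int _ (hxB.sub hA.1) p q
  obtain ⟨i2, e2, b2⟩ := Hs_int _ (hxB.sub hB.1) p q
  obtain ⟨i3, e3, b3⟩ := Hs_int _ (hA.1.neg) p q
  obtain ⟨i4, e4, b4⟩ := Hs_int _ (hB.1.neg) p q
  rw [neg_neg] at e3 e4
  have hI : IntegrableOn (fun s => Fh A B p q s x) (Set.Ioi 0) := by
    simp only [Fh_eq]
    exact ((i1.sub i2).sub ((i3.sub i4).div_const _)).div_const _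
  refine ⟨hI, ?_, ?_⟩
  · simp only [Fh_eq]
    have j1 := integral_sub (i1.sub i2) ((i3.sub i4).div_const (1 + (x:ℂ)^2))
    simp only [Pi.sub_apply] at j1
    rw [integral_div, j1, integral_sub i1 i2, integral_div, integral_sub i3 i4, e1, e2, e3, e4]
    ring
  · calc _ ≤ ∫ s in Set.Ioi (0:ℝ), (‖Hs ((x:ℂ) • B - A) p q s‖ + ‖Hs ((x:ℂ) • B - B) p q s‖
              + (‖Hs (-A) p q s‖ + ‖Hs (-B) p q s‖)) / |x| := by
          refine setIntegral_mono_on hI.norm ?_ measurableSet_Ioi ?_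
          · exact ((i1.norm.add i2.norm).add (i3.norm.add i4.norm)).div_const _
          · intro s hs
            rw [Fh_eq, norm_div, Complex.norm_real, Real.norm_eq_abs]
            gcongr
            refine (norm_sub_le _ _).trans (add_le_add (norm_sub_le _ _) ?_)
            rw [norm_div]
            have : ‖(1 + (x:ℂ)^2)‖ = 1 + x^2 := by
              have : (1 + (x:ℂ)^2) = ((1 + x^2 : ℝ) : ℂ) := by push_cast; rfl
              rw [this, Complex.norm_real, Real.norm_eq_abs, abs_of_pos (by positivity)]
            rw [this]
            refine (div_le_self (norm_nonneg _) (by nlinarith [sq_nonneg x])).trans (norm_sub_le _ _)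
      _ = ((∫ s in Set.Ioi (0:ℝ), ‖Hs ((x:ℂ) • B - A) p q s‖) + (∫ s in Set.Ioi (0:ℝ), ‖Hs ((x:ℂ) • B - B) p q s‖)
              + ((∫ s in Set.Ioi (0:ℝ), ‖Hs (-A) p q s‖) + (∫ s in Set.Ioi (0:ℝ), ‖Hs (-B) p q s‖))) / |x| := by
          have j1 := integral_add (i1.norm.add i2.norm) (i3.norm.add i4.norm)
          simp only [Pi.add_apply] at j1
          rw [integral_div, j1, integral_add i1.norm i2.norm, integral_add i3.norm i4.norm]
      _ ≤ _ := by
          gcongr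
          linarith

theorem Fh_bound (A B : Matrix (Fin n) (Fin n) ℂ) (hA : A.PosDef) (hB : B.PosDef) (p q : Fin n) :
    ∃ C : ℝ, ∀ x : ℝ, x ≠ 0 → ∫ s in Set.Ioi (0:ℝ), ‖Fh A B p q s x‖ ≤ C * (1 + x^2)⁻¹ := by
  obtain ⟨C, δ, T, hC, hδ, hT, h⟩ := Fc_bound A B hA hB
  have half : ∀ (x s M : ℝ), ‖Fc A B p q s x‖ ≤ M → ‖Fc A B q p s x‖ ≤ M → ‖Fh A B p q s x‖ ≤ M := by
    intro x s M h1 h2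
    unfold Fh
    rw [norm_div, Complex.norm_ofNat]
    have := norm_add_le (Fc A B p q s x) (star (Fc A B q p s x))
    rw [norm_star] at this
    linarith
  obtain ⟨k1, k2⟩ := int_c 1 one_pos
  simp only [one_div] at k1 k2
  refine ⟨2 * C + (4 * (n * (Real.pi / 2))) / δ * (1 + T^2), ?_⟩
  intro x hx
  have hI := (Fh_slice A B hA hB p q x).1
  have hb := (Fh_slice A B hA hB p q x).2.2
  have hp2 : 0 ≤ (4 * (n * (Real.pi / 2))) / δ * (1 + T^2) := by positivity
  by_cases hx1 : |x| ≤ δ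
  · calc _ ≤ ∫ s in Set.Ioi (0:ℝ), C / (1 + x^2) * ((1 + s)^2)⁻¹ := by
          refine setIntegral_mono_on hI.norm (k1.const_mul _) measurableSet_Ioi ?_
          intro s hs
          exact half _ _ _ ((h x s p q hs hx).1 hx1) ((h x s q p hs hx).1 hx1)
      _ = C * (1 + x^2)⁻¹ := by rw [integral_const_mul, k2]; ring
      _ ≤ _ := by gcongr; linarith
  by_cases hx2 : T ≤ |x|
  · have hx0 : 0 < |x| := by linarith
    obtain ⟨m1, m2⟩ := int_c |x| hx0
    calc _ ≤ ∫ s in Set.Ioi (0:ℝ), C / (1 + x^2) * (((1 + s)^2)⁻¹ + |x| / (|x| + s)^2) := by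
          refine setIntegral_mono_on hI.norm ((k1.add m1).const_mul _) measurableSet_Ioi ?_
          intro s hs
          exact half _ _ _ ((h x s p q hs hx).2 hx2) ((h x s q p hs hx).2 hx2)
      _ = 2 * C * (1 + x^2)⁻¹ := by rw [integral_const_mul, integral_add k1 m1, k2, m2]; ring
      _ ≤ _ := by gcongr; linarith
  · push Not at hx1 hx2
    refine hb.trans ?_
    have hx3 : x^2 ≤ T^2 := by rw [← sq_abs x]; gcongr
    calc _ ≤ (4 * (n * (Real.pi / 2))) / δ := by gcongr
      _ = (4 * (n * (Real.pi / 2))) / δ * (1 + x^2) * (1 + x^2)⁻¹ := by field_simp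
      _ ≤ (4 * (n * (Real.pi / 2))) / δ * (1 + T^2) * (1 + x^2)⁻¹ := by gcongr
      _ ≤ _ := by gcongr; linarith

theorem Fh_integrable (A B : Matrix (Fin n) (Fin n) ℂ) (hA : A.PosDef) (hB : B.PosDef) (p q : Fin n) :
    Integrable (Function.uncurry (Fh A B p q)) ((volume.restrict (Set.Ioi (0:ℝ))).prod (volume : Measure ℝ)) := by
  have hm : AEStronglyMeasurable (Function.uncurry (Fh A B p q)) ((volume.restrict (Set.Ioi (0:ℝ))).prod (volume : Measure ℝ)) :=
    (Fh_meas A B p q).aestronglyMeasurable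
  rw [integrable_prod_iff' hm]
  constructor
  · exact Filter.Eventually.of_forall fun x => (Fh_slice A B hA hB p q x).1
  · obtain ⟨C, hC⟩ := Fh_bound A B hA hB p q
    refine Integrable.mono' (integrable_inv_one_add_sq.const_mul C) ?_ ?_
    · exact hm.norm.prod_swap.integral_prod_right'
    · have : ∀ᵐ x : ℝ, x ≠ 0 := by simp [ae_iff]
      filter_upwards [this] with x hx
      rw [Real.norm_eq_abs, abs_of_nonneg (integral_nonneg fun _ => norm_nonneg _)]
      exact hC x hx

theorem main_aux (A B : Matrix (Fin n) (Fin n) ℂ) (hA : A.PosDef) (hB : B.PosDef) (p q : Fin n) :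
    Integrable (fun x : ℝ => ∫ s in Set.Ioi (0:ℝ), Fh A B p q s x) ∧
    ∫ x : ℝ, ∫ s in Set.Ioi (0:ℝ), Fh A B p q s x = Real.pi * (mlog B p q - mlog A p q) := by
  have hI := Fh_integrable A B hA hB p q
  refine ⟨hI.integral_prod_right, ?_⟩
  rw [← integral_integral_swap hI]
  have : Set.EqOn (fun s : ℝ => ∫ x : ℝ, Fh A B p q s x) (fun s =>
      Real.pi * ((Is (-A) p q s - ((s / (1 + s^2) : ℝ) : ℂ) * (1 : Matrix (Fin n) (Fin n) ℂ) p q)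
       - (Is (-B) p q s - ((s / (1 + s^2) : ℝ) : ℂ) * (1 : Matrix (Fin n) (Fin n) ℂ) p q))) (Set.Ioi 0) := by
    intro s hs
    simp only
    rw [Fh_contour A B hA hB p q s hs]
    ring
  rw [setIntegral_congr_fun measurableSet_Ioi this, integral_const_mul,
    integral_sub (Is_neg_int A hA p q).1 (Is_neg_int B hB p q).1, (Is_neg_int A hA p q).2, (Is_neg_int B hB p q).2]
  ring

theorem projPos_posDef (X : Matrix (Fin n) (Fin n) ℂ) (hX : X.PosDef) :
    projPos X = 1 ∧ projPos (-X) = 0 := by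
  rw [projPos_neg X hX.1]
  unfold projPos
  obtain ⟨U, V, l, hUV, hVU, hV, hXe, hcfc, hp⟩ := spec_dec X hX.1
  have hp := hp hX
  rw [hcfc, hcfc]
  constructor
  · simp [hp, hUV]
  · have : ∀ k, ¬ (0 < - l k) := fun k => by have := hp k; linarith
    simp only [this, if_false]
    simp

theorem projPos_add (X : Matrix (Fin n) (Fin n) ℂ) (hX : X.IsHermitian) (hu : IsUnit X) :
    projPos X + projPos (-X) = 1 := by
  rw [projPos_neg X hX]
  unfold projPos
  obtain ⟨U, V, l, hUV, hVU, hV, hXe, hcfc, -⟩ := spec_dec X hX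
  have hne : ∀ k, l k ≠ 0 := by
    intro k hk
    have hdet : X.det ≠ 0 := ((Matrix.isUnit_iff_isUnit_det _).1 hu).ne_zero
    apply hdet
    rw [hXe, det_mul, det_mul, det_diagonal, Finset.prod_eq_zero (Finset.mem_univ k) (by simp [hk])]
    simp
  rw [hcfc, hcfc, ← add_mul, ← mul_add, diagonal_add]
  have : (fun k => (((if 0 < l k then (1:ℝ) else 0 : ℝ)) : ℂ) + (((if 0 < - l k then (1:ℝ) else 0 : ℝ)) : ℂ)) = fun _ => 1 := by
    funext k
    rcases lt_or_gt_of_ne (hne k) with h | h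
    · rw [if_neg (by linarith), if_pos (by linarith)]; simp
    · rw [if_pos h, if_neg (by linarith)]; simp
  rw [this, diagonal_one, mul_one, hUV]

theorem projPos_smul (X : Matrix (Fin n) (Fin n) ℂ) (hX : X.IsHermitian) (c : ℝ) (hc : 0 < c) :
    projPos (c • X) = projPos X := by
  unfold projPos
  have hX' : IsSelfAdjoint X := hX
  have hf : (spectrum ℝ X).Finite := Matrix.finite_real_spectrum
  rw [← cfc_comp_smul c (fun x : ℝ => if 0 < x then (1:ℝ) else 0) X ((hf.image _).continuousOn _) hX']
  simp [hc]

theorem ae_unit (A B : Matrix (Fin n) (Fin n) ℂ) (hB : B.PosDef) :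
    ∀ᵐ x : ℝ, IsUnit (x • B - A) := by
  have hf : (spectrum ℝ (B⁻¹ * A)).Finite := Matrix.finite_real_spectrum
  have h0 : volume (spectrum ℝ (B⁻¹ * A)) = 0 := hf.measure_zero _
  rw [ae_iff]
  refine measure_mono_null ?_ h0
  intro x hx
  rw [spectrum.mem_iff]
  intro hu
  apply hx
  have hBu := (Matrix.isUnit_iff_isUnit_det _).1 hB.isUnit
  have : x • B - A = B * (algebraMap ℝ _ x - B⁻¹ * A) := by
    rw [mul_sub, ← mul_assoc, Matrix.mul_nonsing_inv _ hBu, one_mul, Algebra.algebraMap_eq_smul_one]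
    simp
  rw [this]
  exact hB.isUnit.mul hu

theorem kform (A B : Matrix (Fin n) (Fin n) ℂ) (hA : A.PosDef) (hB : B.PosDef) (p q : Fin n) (x : ℝ)
    (hx0 : x ≠ 0) (hx1 : x ≠ 1) (hu : IsUnit (x • B - A)) :
    -(Real.pi : ℂ)⁻¹ * ∫ s in Set.Ioi (0:ℝ), Fh A B p q s x =
      (Set.Ioo (0:ℝ) 1).indicator (fun x : ℝ => - ((x:ℂ)⁻¹ * projPos (x • B - A) p q)) x
      + (Set.Ioi (1:ℝ)).indicator (fun x : ℝ => (x:ℂ)⁻¹ * projPos (A - x • B) p q) x := by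
  have hx0' : (x:ℂ) ≠ 0 := by exact_mod_cast hx0
  have hpi : (Real.pi : ℂ) ≠ 0 := by exact_mod_cast Real.pi_ne_zero
  have hher : (x • B - A).IsHermitian := by
    refine IsHermitian.sub ?_ hA.1
    rw [IsHermitian, conjTranspose_smul, hB.1]; simp
  rw [(Fh_slice A B hA hB p q x).2.1]
  obtain ⟨a1, a2⟩ := projPos_posDef A hA
  obtain ⟨b1, b2⟩ := projPos_posDef B hB
  rw [a1, a2, b1, b2]
  have e1 : (x:ℂ) • B = x • B := by ext i j; simp
  rw [e1]
  have hadd := congrFun (congrFun (projPos_add _ hher hu) p) q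
  rw [Matrix.add_apply] at hadd
  have e2 : A - x • B = -(x • B - A) := by abel
  rcases lt_or_gt_of_ne hx1 with h1 | h1
  · have hneg : -(x • B - B) = (1 - x) • B := by rw [sub_smul, one_smul]; abel
    have hpd : ((1 - x) • B).PosDef := hB.smul (by linarith)
    obtain ⟨c1, c2⟩ := projPos_posDef _ hpd
    rw [← hneg, neg_neg] at c2
    rw [← hneg] at c1
    rw [c1, c2]
    rw [Set.indicator_of_notMem (s := Set.Ioi (1:ℝ)) (by simp [h1.le])]
    rcases lt_or_gt_of_ne hx0 with h0 | h0
    · rw [Set.indicator_of_notMem (by simp [h0.le])]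
      have hpd : (-(x • B - A)).PosDef := by
        have : -(x • B - A) = A + (-x) • B := by rw [neg_smul]; abel
        rw [this]
        exact hA.add (hB.smul (by linarith))
      obtain ⟨d1, d2⟩ := projPos_posDef _ hpd
      rw [neg_neg] at d2
      rw [d1, d2]; simp
    · rw [Set.indicator_of_mem (by simp [h0, h1])]
      simp only [Matrix.sub_apply, Matrix.zero_apply]
      have : projPos (-(x • B - A)) p q = (1 : Matrix (Fin n) (Fin n) ℂ) p q - projPos (x • B - A) p q := by
        rw [← hadd]; ring
      rw [this]
      field_simp
      ring
  · have hpd : (x • B - B).PosDef := by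
      have : x • B - B = (x - 1) • B := by rw [sub_smul, one_smul]
      rw [this]; exact hB.smul (by linarith)
    obtain ⟨c1, c2⟩ := projPos_posDef _ hpd
    rw [c1, c2]
    rw [Set.indicator_of_notMem (s := Set.Ioo (0:ℝ) 1) (by simp [h1.le]), Set.indicator_of_mem (by simpa using h1)]
    simp only [Matrix.sub_apply, Matrix.zero_apply]
    have : projPos (x • B - A) p q = (1 : Matrix (Fin n) (Fin n) ℂ) p q - projPos (-(x • B - A)) p q := by
      rw [← hadd]; ring
    rw [e2, this]
    field_simp
    ring

theorem image_inv_Ioi : (fun x : ℝ => x⁻¹) '' (Set.Ioi 1) = Set.Ioo 0 1 := by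
  ext y
  constructor
  · rintro ⟨x, hx, rfl⟩
    have hx : (1:ℝ) < x := hx
    exact ⟨by positivity, inv_lt_one_of_one_lt₀ hx⟩
  · rintro ⟨h0, h1⟩
    exact ⟨y⁻¹, (one_lt_inv₀ h0).2 h1, inv_inv y⟩

theorem final_aux (A B : Matrix (Fin n) (Fin n) ℂ)
    (hA : A.PosDef) (hB : B.PosDef) (p q : Fin n) :
    (mlog A - mlog B) p q
      = ∫ α in Set.Ioi (1:ℝ),
          ((α : ℂ))⁻¹ * ((projPos (A - α • B) - projPos (B - α • A)) p q) := by
  obtain ⟨hI, hv⟩ := main_aux A B hA hB p q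
  have hpi : (Real.pi : ℂ) ≠ 0 := by exact_mod_cast Real.pi_ne_zero
  set g1 : ℝ → ℂ := fun x : ℝ => - ((x:ℂ)⁻¹ * projPos (x • B - A) p q) with hg1
  set g2 : ℝ → ℂ := fun x : ℝ => (x:ℂ)⁻¹ * projPos (A - x • B) p q with hg2
  have hae : ∀ᵐ x : ℝ, -(Real.pi : ℂ)⁻¹ * ∫ s in Set.Ioi (0:ℝ), Fh A B p q s x =
      (Set.Ioo (0:ℝ) 1).indicator g1 x + (Set.Ioi (1:ℝ)).indicator g2 x := by
    have h0 : ∀ᵐ x : ℝ, x ≠ 0 := by simp [ae_iff]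
    have h1 : ∀ᵐ x : ℝ, x ≠ 1 := by simp [ae_iff]
    filter_upwards [h0, h1, ae_unit A B hB] with x hx0 hx1 hu
    exact kform A B hA hB p q x hx0 hx1 hu
  have hk := hI.const_mul (-(Real.pi : ℂ)⁻¹)
  have i1 : IntegrableOn g1 (Set.Ioo 0 1) := by
    refine (hk.integrableOn (s := Set.Ioo 0 1)).congr ?_
    filter_upwards [ae_restrict_of_ae hae, ae_restrict_mem measurableSet_Ioo] with x hx hm
    rw [hx, Set.indicator_of_mem hm, Set.indicator_of_notMem (by simp [hm.2.le]), add_zero]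
  have i2 : IntegrableOn g2 (Set.Ioi 1) := by
    refine (hk.integrableOn (s := Set.Ioi 1)).congr ?_
    filter_upwards [ae_restrict_of_ae hae, ae_restrict_mem measurableSet_Ioi] with x hx hm
    have hm' : (1:ℝ) < x := hm
    rw [hx, Set.indicator_of_mem hm, Set.indicator_of_notMem (by simp [hm'.le]), zero_add]
  have hsum : mlog A p q - mlog B p q = (∫ x in Set.Ioo (0:ℝ) 1, g1 x) + ∫ x in Set.Ioi (1:ℝ), g2 x := by
    rw [← integral_indicator measurableSet_Ioo, ← integral_indicator measurableSet_Ioi,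
      ← integral_add (i1.integrable_indicator measurableSet_Ioo) (i2.integrable_indicator measurableSet_Ioi),
      ← integral_congr_ae hae, integral_const_mul, hv]
    field_simp
    ring
  have hder : ∀ x ∈ Set.Ioi (1:ℝ), HasDerivWithinAt (fun x : ℝ => x⁻¹) (-(x^2)⁻¹) (Set.Ioi 1) x := by
    intro x hx
    have : (1:ℝ) < x := hx
    exact (hasDerivAt_inv (by linarith)).hasDerivWithinAt
  have hinj : Set.InjOn (fun x : ℝ => x⁻¹) (Set.Ioi 1) := fun x _ y _ h => inv_injective h
  have hg : Set.EqOn (fun x : ℝ => |-(x^2)⁻¹| • g1 x⁻¹) (fun x : ℝ => -((x:ℂ)⁻¹ * projPos (B - x • A) p q)) (Set.Ioi 1) := by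
    intro x hx
    have hx' : (1:ℝ) < x := hx
    have hx0 : (0:ℝ) < x := by linarith
    have hher : (B - x • A).IsHermitian := by
      refine IsHermitian.sub hB.1 ?_
      rw [IsHermitian, conjTranspose_smul, hA.1]; simp
    have e : x⁻¹ • B - A = x⁻¹ • (B - x • A) := by
      rw [smul_sub, smul_smul, inv_mul_cancel₀ hx0.ne', one_smul]
    have hxc : (x:ℂ) ≠ 0 := by exact_mod_cast hx0.ne'
    simp only [hg1]
    rw [e, projPos_smul _ hher _ (by positivity), abs_neg, abs_of_pos (by positivity), Complex.real_smul]
    push_cast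
    field_simp
  have i3 : IntegrableOn (fun x : ℝ => -((x:ℂ)⁻¹ * projPos (B - x • A) p q)) (Set.Ioi 1) := by
    rw [← integrableOn_congr_fun hg measurableSet_Ioi,
      ← integrableOn_image_iff_integrableOn_abs_deriv_smul measurableSet_Ioi hder hinj, image_inv_Ioi]
    exact i1
  have hcv : ∫ x in Set.Ioo (0:ℝ) 1, g1 x = ∫ x in Set.Ioi (1:ℝ), -((x:ℂ)⁻¹ * projPos (B - x • A) p q) := by
    rw [← image_inv_Ioi, integral_image_eq_integral_abs_deriv_smul measurableSet_Ioi hder hinj,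
      setIntegral_congr_fun measurableSet_Ioi hg]
  rw [Matrix.sub_apply, hsum, hcv, ← integral_add i3 i2]
  refine setIntegral_congr_fun measurableSet_Ioi fun x _ => ?_
  simp only [hg2, Matrix.sub_apply]
  ring

end aux

/-- `log A - log B = ∫₁^∞ (1/α)({A > αB} - {B > αA}) dα` for positive
definite `A`, `B` (stated entrywise). -/
theorem log_sub_log_eq_integral_proj {n : ℕ} (A B : Matrix (Fin n) (Fin n) ℂ)
    (hA : A.PosDef) (hB : B.PosDef) :
    ∀ i j, (mlog A - mlog B) i j
      = ∫ α in Set.Ioi (1:ℝ),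
          ((α : ℂ))⁻¹ * ((projPos (A - α • B) - projPos (B - α • A)) i j) := by
  intro i j
  exact final_aux A B hA hB i j
end
end

section
/- For positive definite matrices A and B, the Umegaki relative entropy satisfies D(A‖B) := Tr[A(log A - log B)] = ∫₁^∞ (1/γ) Tr[A({A > γB} - {B > γA})] dγ. -/
open MeasureTheory Matrix
open scoped ComplexOrder
noncomputable section

namespace RelEnt

variable {n : ℕ}

abbrev M (n : ℕ) := Matrix (Fin n) (Fin n) ℂ

/-- real diagonal matrix -/
def rdiag (d : Fin n → ℝ) : M n := Matrix.diagonal (fun i => ((d i : ℝ) : ℂ))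

lemma spectral (X : M n) (hX : X.IsHermitian) :
    ∃ (V : M n) (l : Fin n → ℝ), Vᴴ * V = 1 ∧ V * Vᴴ = 1 ∧ X = V * rdiag l * Vᴴ ∧
      ∀ f : ℝ → ℝ, cfc f X = V * rdiag (fun i => f (l i)) * Vᴴ := by
  refine ⟨hX.eigenvectorUnitary, hX.eigenvalues, ?_, ?_, ?_, ?_⟩
  · exact Unitary.coe_star_mul_self _
  · exact Unitary.coe_mul_star_self _
  · conv_lhs => rw [hX.spectral_theorem]
    rfl
  · intro f
    rw [hX.cfc_eq]
    rfl

lemma rdiag_inertia (a d : Fin n → ℝ) (S : M n) (h : Sᴴ * rdiag a * S = rdiag d) :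
    Fintype.card {i // 0 < d i} ≤ Fintype.card {i // 0 < a i} := by
  classical
  by_contra hlt
  push Not at hlt
  let ext : ({i // 0 < d i} → ℂ) →ₗ[ℂ] (Fin n → ℂ) :=
    { toFun := fun x i => if hi : 0 < d i then x ⟨i, hi⟩ else 0
      map_add' := by intro x y; ext i; by_cases hi : 0 < d i <;> simp [hi]
      map_smul' := by intro c y; ext i; by_cases hi : 0 < d i <;> simp [hi] }
  let L : ({i // 0 < d i} → ℂ) →ₗ[ℂ] ({i // 0 < a i} → ℂ) :=
    (LinearMap.funLeft ℂ ℂ (fun i : {i // 0 < a i} => (i : Fin n))) ∘ₗ (Matrix.mulVecLin S) ∘ₗ ext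
  have hk : LinearMap.ker L ≠ ⊥ := LinearMap.ker_ne_bot_of_finrank_lt (by simpa using hlt)
  obtain ⟨x, hx, hx0⟩ := (Submodule.ne_bot_iff _).1 hk
  have hLx : ∀ i, 0 < a i → (S *ᵥ ext x) i = 0 := by
    intro i hi
    have := congrFun (LinearMap.mem_ker.1 hx) ⟨i, hi⟩
    simpa [L] using this
  have key : ∀ (c : Fin n → ℝ) (y : Fin n → ℂ),
      star y ⬝ᵥ (rdiag c *ᵥ y) = ((∑ i, c i * ‖y i‖ ^ 2 : ℝ) : ℂ) := by
    intro c y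
    simp only [dotProduct, rdiag, Matrix.mulVec_diagonal, Pi.star_apply]
    push_cast
    refine Finset.sum_congr rfl fun i _ => ?_
    rw [← Complex.conj_mul', ← Complex.star_def]; ring
  have e1 : star (ext x) ⬝ᵥ (rdiag d *ᵥ ext x) = star (S *ᵥ ext x) ⬝ᵥ (rdiag a *ᵥ (S *ᵥ ext x)) := by
    rw [← h, Matrix.star_mulVec, ← Matrix.dotProduct_mulVec]
    simp [Matrix.mulVec_mulVec, Matrix.mul_assoc]
  rw [key, key] at e1
  have e2 : (∑ i, d i * ‖ext x i‖ ^ 2) = ∑ i, a i * ‖(S *ᵥ ext x) i‖ ^ 2 := by exact_mod_cast e1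
  have hle : (∑ i, a i * ‖(S *ᵥ ext x) i‖ ^ 2) ≤ 0 := by
    refine Finset.sum_nonpos fun i _ => ?_
    by_cases hi : 0 < a i
    · simp [hLx i hi]
    · exact mul_nonpos_of_nonpos_of_nonneg (not_lt.1 hi) (by positivity)
  obtain ⟨j, hj⟩ := Function.ne_iff.1 hx0
  have hpos : 0 < (∑ i, d i * ‖ext x i‖ ^ 2) := by
    refine Finset.sum_pos' (fun i _ => ?_) ⟨j, Finset.mem_univ _, ?_⟩
    · by_cases hi : 0 < d i
      · positivity
      · simp [ext, hi]
    · have : ext x j = x j := by simp [ext, j.2]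
      rw [this]
      have h1 : 0 < ‖x j‖ := norm_pos_iff.2 hj
      have := j.2
      positivity
  linarith

def cnt (X : M n) : ℝ := (Matrix.trace (projPos X)).re

lemma trace_conj (V : M n) (h : Vᴴ * V = 1) (d : Fin n → ℝ) :
    (Matrix.trace (V * rdiag d * Vᴴ)).re = ∑ i, d i := by
  rw [Matrix.mul_assoc, Matrix.trace_mul_comm, Matrix.mul_assoc, h, Matrix.mul_one]
  simp [rdiag, Matrix.trace]

lemma rdiag_herm (d : Fin n → ℝ) : (rdiag d).IsHermitian := by
  refine Matrix.isHermitian_diagonal_of_self_adjoint _ ?_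
  ext i; simp

lemma cnt_eq (X T : M n) (d : Fin n → ℝ) (hT : IsUnit T) (h : Tᴴ * X * T = rdiag d) :
    cnt X = ∑ i, if 0 < d i then (1:ℝ) else 0 := by
  obtain ⟨T', hT1, hT2⟩ := isUnit_iff_exists.1 hT
  have hX : X = T'ᴴ * rdiag d * T' := by
    rw [← h]
    have : T'ᴴ * Tᴴ = 1 := by rw [← Matrix.conjTranspose_mul, hT1, Matrix.conjTranspose_one]
    calc X = (T'ᴴ * Tᴴ) * X * (T * T') := by rw [this, hT1]; simp
      _ = _ := by simp only [Matrix.mul_assoc]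
  have hXh : X.IsHermitian := by
    rw [hX]; exact Matrix.isHermitian_conjTranspose_mul_mul _ (rdiag_herm d)
  obtain ⟨V, l, h1, h2, h3, h4⟩ := spectral X hXh
  have c1 := rdiag_inertia l d (Vᴴ * T) (by
    rw [← h, h3]; simp [Matrix.mul_assoc])
  have c2 := rdiag_inertia d l (T' * V) (by
    have : Vᴴ * X * V = rdiag l := by
      rw [h3]
      calc _ = (Vᴴ * V) * rdiag l * (Vᴴ * V) := by simp only [Matrix.mul_assoc]
        _ = _ := by simp [h1]
    rw [← this, hX]; simp [Matrix.mul_assoc])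
  rw [cnt, projPos, h4, trace_conj V h1]
  simp only [Finset.sum_boole]
  have := le_antisymm c1 c2
  rw [Fintype.card_subtype, Fintype.card_subtype] at this
  exact_mod_cast this.symm

/-- trace of the positive part, written through the projection -/
def phi (X : M n) : ℝ := (Matrix.trace (X * projPos X)).re

lemma phi_eq (X V : M n) (l : Fin n → ℝ) (h1 : Vᴴ * V = 1) (h3 : X = V * rdiag l * Vᴴ)
    (h4 : projPos X = V * rdiag (fun i => if 0 < l i then (1:ℝ) else 0) * Vᴴ) :
    phi X = ∑ i, max (l i) 0 := by
  have : X * projPos X = V * rdiag (fun i => max (l i) 0) * Vᴴ := by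
    rw [h4, h3]
    calc _ = V * (rdiag l * (Vᴴ * V) * rdiag (fun i => if 0 < l i then (1:ℝ) else 0)) * Vᴴ := by
            simp only [Matrix.mul_assoc]
      _ = _ := by
        rw [h1, Matrix.mul_one, rdiag, rdiag, Matrix.diagonal_mul_diagonal, rdiag]
        congr 3
        ext i
        by_cases h : 0 < l i
        · simp [h, h.le]
        · simp [h, not_lt.1 h]
  rw [phi, this, trace_conj V h1]

/-- trace of `X` against a projection is at most the trace of the positive part. -/
lemma trace_mul_le_phi (X P : M n) (hX : X.IsHermitian) (hP : P.PosSemidef)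
    (hP1 : (1 - P).PosSemidef) : (Matrix.trace (X * P)).re ≤ phi X := by
  obtain ⟨V, l, h1, h2, h3, h4⟩ := spectral X hX
  rw [phi_eq X V l h1 h3 (h4 _)]
  have e : Matrix.trace (X * P) = Matrix.trace (rdiag l * (Vᴴ * P * V)) := by
    rw [h3, Matrix.mul_assoc, Matrix.mul_assoc, Matrix.trace_mul_comm]
    simp only [Matrix.mul_assoc]
  have q0 := hP.conjTranspose_mul_mul_same V
  have q1 := hP1.conjTranspose_mul_mul_same V
  rw [e, Matrix.trace, Complex.re_sum]
  refine Finset.sum_le_sum fun i _ => ?_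
  have r0 := q0.diag_nonneg (i := i)
  have r1 := q1.diag_nonneg (i := i)
  have : Vᴴ * (1 - P) * V = 1 - Vᴴ * P * V := by
    rw [Matrix.mul_sub, Matrix.sub_mul, Matrix.mul_one, h1]
  rw [this] at r1
  have r0' := (Complex.le_def.1 r0).1
  have r1' := (Complex.le_def.1 r1).1
  simp at r0' r1'
  simp only [rdiag, Matrix.diag_apply, Matrix.diagonal_mul, Complex.re_ofReal_mul]
  rcases le_total (l i) 0 with h | h
  · rw [max_eq_right h]; exact mul_nonpos_of_nonpos_of_nonneg h r0'
  · rw [max_eq_left h]; nlinarith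

lemma conj_rdiag_psd (V : M n) (d : Fin n → ℝ) (hd : ∀ i, 0 ≤ d i) :
    (V * rdiag d * Vᴴ).PosSemidef := by
  refine Matrix.PosSemidef.mul_mul_conjTranspose_same ?_ V
  refine Matrix.PosSemidef.diagonal fun i => ?_
  simpa using hd i

lemma projPos_psd (X : M n) (hX : X.IsHermitian) :
    (projPos X).PosSemidef ∧ (1 - projPos X).PosSemidef := by
  obtain ⟨V, l, h1, h2, h3, h4⟩ := spectral X hX
  rw [projPos, h4]
  constructor
  · exact conj_rdiag_psd _ _ fun i => by split_ifs <;> simp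
  · have : 1 - V * rdiag (fun i => if 0 < l i then (1:ℝ) else 0) * Vᴴ
        = V * rdiag (fun i => if 0 < l i then (0:ℝ) else 1) * Vᴴ := by
      have e : rdiag (fun i => if 0 < l i then (0:ℝ) else 1)
          = 1 - rdiag (fun i => if 0 < l i then (1:ℝ) else 0) := by
        rw [rdiag, rdiag, ← Matrix.diagonal_one, Matrix.diagonal_sub]
        congr 1; ext i; split_ifs <;> simp
      rw [e, Matrix.mul_sub, Matrix.sub_mul, Matrix.mul_one, h2]
    rw [this]
    exact conj_rdiag_psd _ _ fun i => by split_ifs <;> simp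

lemma phi_sub_neg (X : M n) (hX : X.IsHermitian) :
    phi X - phi (-X) = (Matrix.trace X).re := by
  have a1 := projPos_psd X hX
  have a2 := projPos_psd (-X) hX.neg
  have b1 := trace_mul_le_phi (-X) (1 - projPos X) hX.neg a1.2 (by simpa using a1.1)
  have b2 := trace_mul_le_phi X (1 - projPos (-X)) hX a2.2 (by simpa using a2.1)
  simp only [Matrix.mul_sub, Matrix.neg_mul, Matrix.mul_one, Matrix.trace_sub, Matrix.trace_neg,
    Complex.sub_re, Complex.neg_re] at b1 b2
  have c1 : phi X = (Matrix.trace (X * projPos X)).re := rfl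
  have c2 : phi (-X) = -(Matrix.trace (X * projPos (-X))).re := by
    simp [phi]
  linarith

lemma simdiag (C E : M n) (hC : C.IsHermitian) (hE : E.PosDef) :
    ∃ (T : M n) (m : Fin n → ℝ), IsUnit T ∧ Tᴴ * E * T = 1 ∧ Tᴴ * C * T = rdiag m := by
  obtain ⟨V, l, h1, h2, h3, h4⟩ := spectral E hE.isHermitian
  have hl : ∀ i, 0 < l i := by
    intro i
    have hV : Function.Injective V.mulVec := by
      intro x y hxy
      have := congrArg (Vᴴ *ᵥ ·) hxy
      simpa [h1] using this
    have hp : (Vᴴ * E * V).PosDef := hE.conjTranspose_mul_mul_same hV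
    have : Vᴴ * E * V = rdiag l := by
      rw [h3]
      calc _ = (Vᴴ * V) * rdiag l * (Vᴴ * V) := by simp only [Matrix.mul_assoc]
        _ = _ := by simp [h1]
    rw [this] at hp
    have := hp.diag_pos (i := i)
    simpa [rdiag] using this
  let R : M n := V * rdiag (fun i => (Real.sqrt (l i))⁻¹)
  have hR : Rᴴ * E * R = 1 := by
    have hs : (rdiag (fun i => (Real.sqrt (l i))⁻¹))ᴴ = rdiag (fun i => (Real.sqrt (l i))⁻¹) :=
      rdiag_herm _
    calc Rᴴ * E * R = rdiag (fun i => (Real.sqrt (l i))⁻¹) * ((Vᴴ * V) * rdiag l * (Vᴴ * V)) *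
          rdiag (fun i => (Real.sqrt (l i))⁻¹) := by
          simp only [R, h3, Matrix.conjTranspose_mul, hs, Matrix.mul_assoc]
      _ = 1 := by
        rw [h1]
        simp only [Matrix.one_mul, Matrix.mul_one, rdiag, Matrix.diagonal_mul_diagonal]
        rw [← Matrix.diagonal_one]
        congr 1; ext i
        have := Real.sqrt_pos.2 (hl i)
        have h5 := Real.mul_self_sqrt (hl i).le
        norm_cast
        field_simp
        nlinarith
  obtain ⟨U, m, u1, u2, u3, -⟩ := spectral (Rᴴ * C * R)
    (Matrix.isHermitian_conjTranspose_mul_mul _ hC)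
  refine ⟨R * U, m, ?_, ?_, ?_⟩
  · have hRu : IsUnit R := by
      have h6 : R * (Rᴴ * E) = 1 := mul_eq_one_comm.1 hR
      exact isUnit_iff_exists.2 ⟨_, h6, hR⟩
    exact hRu.mul (isUnit_iff_exists.2 ⟨_, u2, u1⟩)
  · calc _ = Uᴴ * (Rᴴ * E * R) * U := by
          simp only [Matrix.conjTranspose_mul, Matrix.mul_assoc]
      _ = 1 := by rw [hR]; simp [u1]
  · calc _ = Uᴴ * (Rᴴ * C * R) * U := by
          simp only [Matrix.conjTranspose_mul, Matrix.mul_assoc]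
      _ = (Uᴴ * U) * rdiag m * (Uᴴ * U) := by rw [u3]; simp only [Matrix.mul_assoc]
      _ = _ := by simp [u1]

lemma rdiag_sub_smul (T C E : M n) (m e : Fin n → ℝ) (h1 : Tᴴ * E * T = rdiag e)
    (h2 : Tᴴ * C * T = rdiag m) (r : ℝ) :
    Tᴴ * (C - r • E) * T = rdiag (fun i => m i - r * e i) := by
  rw [Matrix.mul_sub, Matrix.sub_mul, h2, Matrix.mul_smul, Matrix.smul_mul, h1]
  ext i j
  by_cases h : i = j
  · subst h; simp [rdiag]
  · simp [rdiag, h]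

lemma rdiag_one : rdiag (fun _ : Fin n => (1:ℝ)) = 1 := by
  simp [rdiag]

lemma sub_smul_herm (A B : M n) (hA : A.IsHermitian) (hB : B.IsHermitian) (r : ℝ) :
    (A - r • B).IsHermitian := by
  refine hA.sub ?_
  rw [Matrix.IsHermitian, Matrix.conjTranspose_smul, hB]
  simp

lemma projPos_eventually (A B : M n) (hA : A.IsHermitian) (hB : B.PosDef) :
    ∃ G : ℝ, 1 < G ∧ ∀ r, G ≤ r → projPos (A - r • B) = 0 := by
  obtain ⟨T, m, hT, h1, h2⟩ := simdiag A B hA hB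
  refine ⟨2 + ∑ i, |m i|, ?_, ?_⟩
  · have : 0 ≤ ∑ i, |m i| := Finset.sum_nonneg fun i _ => abs_nonneg _
    linarith
  · intro r hr
    have hh := rdiag_sub_smul T A B m (fun _ => 1) (by rw [h1, rdiag_one]) h2 r
    have hc := cnt_eq _ T _ hT hh
    have hz : cnt (A - r • B) = 0 := by
      rw [hc]
      refine Finset.sum_eq_zero fun i _ => ?_
      rw [if_neg]
      have := Finset.single_le_sum (f := fun i => |m i|) (fun i _ => abs_nonneg _)
        (Finset.mem_univ i)
      have h3 := le_abs_self (m i)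
      linarith
    have hp := (projPos_psd _ (sub_smul_herm A B hA hB.isHermitian r)).1
    refine hp.trace_eq_zero_iff.1 ?_
    have h0 := Complex.le_def.1 hp.trace_nonneg
    exact Complex.ext hz h0.2.symm

section calc1

/-- Convex functions with subgradient `-g`. -/
lemma subgrad_antitone (f g : ℝ → ℝ) (h : ∀ x y, f x - (y - x) * g x ≤ f y) : Antitone g := by
  intro x y hxy
  rcases hxy.eq_or_lt with rfl | hlt
  · exact le_rfl
  have h1 := h x y
  have h2 := h y x
  by_contra hc
  push Not at hc
  nlinarith [mul_pos (sub_pos.2 hlt) (sub_pos.2 hc)]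

lemma subgrad_cont (f g : ℝ → ℝ) (C : ℝ) (h : ∀ x y, f x - (y - x) * g x ≤ f y)
    (hC : ∀ x, |g x| ≤ C) : Continuous f := by
  have : LipschitzWith (Real.toNNReal C) f := by
    refine LipschitzWith.of_dist_le' fun x y => ?_
    rw [Real.dist_eq, Real.dist_eq]
    have h1 := h x y
    have h2 := h y x
    have a1 : |(y - x) * g x| ≤ C * |x - y| := by
      rw [abs_mul, abs_sub_comm y x, mul_comm]
      exact mul_le_mul_of_nonneg_right (hC x) (abs_nonneg _)
    have a2 : |(x - y) * g y| ≤ C * |x - y| := by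
      rw [abs_mul, mul_comm]
      exact mul_le_mul_of_nonneg_right (hC y) (abs_nonneg _)
    rw [abs_le] at a1 a2 ⊢
    constructor <;> linarith [a1.1, a1.2, a2.1, a2.2]
  exact this.continuous

lemma subgrad_deriv (f g : ℝ → ℝ) (h : ∀ x y, f x - (y - x) * g x ≤ f y) (x : ℝ)
    (hx : ContinuousAt g x) : HasDerivAt f (-g x) x := by
  rw [hasDerivAt_iff_isLittleO]
  rw [Asymptotics.isLittleO_iff]
  intro c hc
  have := (Metric.tendsto_nhds.1 hx) c hc
  filter_upwards [this] with y hy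
  rw [Real.dist_eq] at hy
  have h1 := h x y
  have h2 := h y x
  simp only [smul_eq_mul, Real.norm_eq_abs]
  have h3 : |(y - x) * (g y - g x)| ≤ c * |y - x| := by
    rw [abs_mul, mul_comm]
    exact mul_le_mul_of_nonneg_right hy.le (abs_nonneg _)
  rw [abs_le] at h3 ⊢
  constructor <;> nlinarith [h3.1, h3.2]

lemma integrableOn_of_vanish (k : ℝ → ℝ) (G : ℝ) (h : IntegrableOn k (Set.Ioc 1 G))
    (h0 : ∀ x, G ≤ x → k x = 0) : IntegrableOn k (Set.Ioi 1) := by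
  refine h.of_forall_sdiff_eq_zero measurableSet_Ioi ?_
  intro x hx
  have : ¬ (x ≤ G) := fun hh => hx.2 ⟨hx.1, hh⟩
  exact h0 x (not_le.1 this).le

lemma subgrad_ftc (f g k k' : ℝ → ℝ) (C G : ℝ) (h : ∀ x y, f x - (y - x) * g x ≤ f y)
    (hC : ∀ x, |g x| ≤ C) (hG : 1 < G) (hf0 : ∀ x, G ≤ x → f x = 0) (hg0 : ∀ x, G ≤ x → g x = 0)
    (hk : ∀ x, 0 < x → HasDerivAt k (k' x) x) (hk' : ContinuousOn k' (Set.Ioi 0)) :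
    IntegrableOn (fun x => k x * g x) (Set.Ioi 1) ∧ IntegrableOn (fun x => k' x * f x) (Set.Ioi 1) ∧
    ∫ x in Set.Ioi (1:ℝ), (k x * g x - k' x * f x) = k 1 * f 1 := by
  have hanti := subgrad_antitone f g h
  have hfc := subgrad_cont f g C h hC
  have hsub : Set.Icc 1 G ⊆ Set.Ioi (0:ℝ) := fun x hx => lt_of_lt_of_le one_pos hx.1
  have hkc : ContinuousOn k (Set.Icc 1 G) := fun x hx =>
    (hk x (hsub hx)).continuousAt.continuousWithinAt
  have i1 : IntegrableOn (fun x => k x * g x) (Set.Ioc 1 G) := by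
    refine IntegrableOn.mono_set ?_ Set.Ioc_subset_Icc_self
    have : IntegrableOn g (Set.Icc 1 G) := (hanti.antitoneOn _).integrableOn_isCompact isCompact_Icc
    exact this.continuousOn_mul hkc isCompact_Icc
  have i2 : IntegrableOn (fun x => k' x * f x) (Set.Ioc 1 G) := by
    refine IntegrableOn.mono_set ?_ Set.Ioc_subset_Icc_self
    exact ((hk'.mono hsub).mul hfc.continuousOn).integrableOn_compact isCompact_Icc
  refine ⟨integrableOn_of_vanish _ G i1 (fun x hx => by simp [hg0 x hx]),
    integrableOn_of_vanish _ G i2 (fun x hx => by simp [hf0 x hx]), ?_⟩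
  have e : ∫ x in Set.Ioi (1:ℝ), (k x * g x - k' x * f x)
      = ∫ x in Set.Ioc (1:ℝ) G, (k x * g x - k' x * f x) := by
    refine setIntegral_eq_of_subset_of_forall_sdiff_eq_zero measurableSet_Ioi
      Set.Ioc_subset_Ioi_self ?_
    intro x hx
    have : ¬ (x ≤ G) := fun hh => hx.2 ⟨hx.1, hh⟩
    have := (not_le.1 this).le
    simp [hf0 x this, hg0 x this]
  rw [e, ← intervalIntegral.integral_of_le hG.le]
  have := MeasureTheory.integral_eq_of_hasDerivAt_off_countable_of_le
    (fun x => -(k x * f x)) (fun x => k x * g x - k' x * f x) hG.le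
    (s := {x | ¬ ContinuousAt g x}) hanti.countable_not_continuousAt
    ((hkc.mul hfc.continuousOn).neg) ?_ ?_
  · rw [this, hf0 G le_rfl]; ring
  · intro x hx
    have hd := subgrad_deriv f g h x (by simpa using hx.2)
    have := ((hk x (hsub ⟨hx.1.1.le, hx.1.2.le⟩)).mul hd).neg
    convert this using 1
    · rfl
    · ring
  · rw [intervalIntegrable_iff_integrableOn_Ioc_of_le hG.le]
    exact i1.sub i2

end calc1

/-- the pencil functions -/
def pf (A B : M n) (r : ℝ) : ℝ := phi (A - r • B)
def pg (A B : M n) (r : ℝ) : ℝ := (Matrix.trace (B * projPos (A - r • B))).re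

lemma pf_eq (A B : M n) (r : ℝ) :
    pf A B r = (Matrix.trace (A * projPos (A - r • B))).re - r * pg A B r := by
  simp [pf, pg, phi, Matrix.sub_mul, Matrix.trace_sub]

lemma pf_subgrad (A B : M n) (hA : A.IsHermitian) (hB : B.IsHermitian) (x y : ℝ) :
    pf A B x - (y - x) * pg A B x ≤ pf A B y := by
  have hp := projPos_psd _ (sub_smul_herm A B hA hB x)
  have := trace_mul_le_phi (A - y • B) _ (sub_smul_herm A B hA hB y) hp.1 hp.2
  have e : (Matrix.trace ((A - y • B) * projPos (A - x • B))).re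
      = (Matrix.trace (A * projPos (A - x • B))).re - y * pg A B x := by
    simp [pg, Matrix.sub_mul, Matrix.trace_sub]
  rw [e] at this
  rw [pf_eq]
  unfold pf at *
  linarith

lemma pg_bdd (A B : M n) (hA : A.IsHermitian) (hB : B.IsHermitian) :
    ∃ C, ∀ x, |pg A B x| ≤ C := by
  refine ⟨max (phi B) (phi (-B)), fun x => ?_⟩
  have hp := projPos_psd _ (sub_smul_herm A B hA hB x)
  have h1 := trace_mul_le_phi B _ hB hp.1 hp.2
  have h2 := trace_mul_le_phi (-B) _ hB.neg hp.1 hp.2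
  simp only [Matrix.neg_mul, Matrix.trace_neg, Complex.neg_re] at h2
  unfold pg
  exact abs_le.2 ⟨by linarith [le_max_right (phi B) (phi (-B))], h1.trans (le_max_left _ _)⟩

lemma pencil_ftc (A B : M n) (hA : A.IsHermitian) (hB : B.PosDef) (k k' : ℝ → ℝ)
    (hk : ∀ x, 0 < x → HasDerivAt k (k' x) x) (hk' : ContinuousOn k' (Set.Ioi 0)) :
    IntegrableOn (fun x => k x * pg A B x) (Set.Ioi 1) ∧
    IntegrableOn (fun x => k' x * pf A B x) (Set.Ioi 1) ∧
    ∫ x in Set.Ioi (1:ℝ), (k x * pg A B x - k' x * pf A B x) = k 1 * pf A B 1 := by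
  obtain ⟨C, hC⟩ := pg_bdd A B hA hB.isHermitian
  obtain ⟨G, hG, hG0⟩ := projPos_eventually A B hA hB
  exact subgrad_ftc (pf A B) (pg A B) k k' C G (pf_subgrad A B hA hB.isHermitian) hC hG
    (fun x hx => by simp [pf, phi, hG0 x hx]) (fun x hx => by simp [pg, hG0 x hx]) hk hk'

/-- Reduction of the right-hand side to Frenkel's form. -/
lemma rhs_eq (A B : M n) (hA : A.PosDef) (hB : B.PosDef) :
    IntegrableOn (fun x => x⁻¹ * pf A B x) (Set.Ioi 1) ∧
    IntegrableOn (fun x => (x ^ 2)⁻¹ * pf B A x) (Set.Ioi 1) ∧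
    ∫ γ in Set.Ioi (1:ℝ),
          γ⁻¹ * (Matrix.trace (A * (projPos (A - γ • B) - projPos (B - γ • A)))).re
    = (Matrix.trace (A - B)).re + (∫ x in Set.Ioi (1:ℝ), x⁻¹ * pf A B x)
      + ∫ x in Set.Ioi (1:ℝ), (x ^ 2)⁻¹ * pf B A x := by
  obtain ⟨a1, -, a3⟩ := pencil_ftc A B hA.isHermitian hB (fun _ => 1) (fun _ => 0)
    (fun x _ => hasDerivAt_const _ _) continuousOn_const
  obtain ⟨-, i1, -⟩ := pencil_ftc A B hA.isHermitian hB Real.log (fun x => x⁻¹)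
    (fun x hx => Real.hasDerivAt_log hx.ne') (continuousOn_inv₀.mono fun x hx => ne_of_gt hx)
  obtain ⟨b1, b2, b3⟩ := pencil_ftc B A hB.isHermitian hA (fun x => x⁻¹) (fun x => -(x ^ 2)⁻¹)
    (fun x hx => hasDerivAt_inv hx.ne')
    (ContinuousOn.neg (ContinuousOn.inv₀ (by fun_prop) fun x hx => by
      have : 0 < x := hx
      positivity))
  have i2 : IntegrableOn (fun x => (x ^ 2)⁻¹ * pf B A x) (Set.Ioi 1) := by
    have := b2.neg
    refine this.congr_fun (fun x _ => ?_) measurableSet_Ioi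
    simp
  refine ⟨i1, i2, ?_⟩
  simp only [one_mul, zero_mul, sub_zero] at a1 a3
  have e : ∀ γ ∈ Set.Ioi (1:ℝ),
      γ⁻¹ * (Matrix.trace (A * (projPos (A - γ • B) - projPos (B - γ • A)))).re
      = (γ⁻¹ * pf A B γ + pg A B γ) - ((γ⁻¹ * pg B A γ - -(γ ^ 2)⁻¹ * pf B A γ)
        - (γ ^ 2)⁻¹ * pf B A γ) := by
    intro γ hγ
    have : 0 < γ := lt_trans one_pos hγ
    rw [pf_eq A B]
    simp only [Matrix.mul_sub, Matrix.trace_sub, Complex.sub_re]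
    have h2 : (Matrix.trace (A * projPos (B - γ • A))).re = pg B A γ := rfl
    rw [h2]
    field_simp
    ring
  rw [setIntegral_congr_fun measurableSet_Ioi e]
  have j1 : IntegrableOn (fun γ => γ⁻¹ * pf A B γ + pg A B γ) (Set.Ioi 1) := i1.add a1
  have j2 : IntegrableOn (fun γ => γ⁻¹ * pg B A γ - -(γ ^ 2)⁻¹ * pf B A γ) (Set.Ioi 1) := b1.sub b2
  have j3 : IntegrableOn (fun γ => (γ⁻¹ * pg B A γ - -(γ ^ 2)⁻¹ * pf B A γ)
    - (γ ^ 2)⁻¹ * pf B A γ) (Set.Ioi 1) := j2.sub i2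
  rw [integral_sub j1 j3, integral_sub j2 i2, integral_add i1 a1, a3, b3]
  have := phi_sub_neg (A - B) (hA.isHermitian.sub hB.isHermitian)
  have e1 : pf A B 1 = phi (A - B) := by simp [pf]
  have e2 : pf B A 1 = phi (-(A - B)) := by simp [pf]
  rw [e1, e2, ← this]
  ring

open scoped Matrix.Norms.L2Operator in
lemma continuous_cfc_trace {Y : Type*} [TopologicalSpace Y] (a : Y → M n) (ha : Continuous a)
    (hh : ∀ y, (a y).IsHermitian) (f : ℝ → ℝ) (hf : Continuous f) :
    Continuous (fun y => cfc f (a y)) := by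
  refine Continuous.cfc (s := fun y => Metric.closedBall 0 ((‖a y‖ + 1) * ‖(1 : M n)‖)) f ha
    (fun y => isCompact_closedBall _ _) ?_ (fun y => hf.continuousOn) (fun y => hh y)
  intro y
  have h1 : ∀ᶠ z in nhds y, ‖a z‖ < ‖a y‖ + 1 :=
    (ha.norm.tendsto y).eventually (gt_mem_nhds (by linarith))
  filter_upwards [h1] with z hz
  refine (spectrum.subset_closedBall_norm_mul (𝕜 := ℝ) (a z)).trans ?_
  exact Metric.closedBall_subset_closedBall (mul_le_mul_of_nonneg_right hz.le (norm_nonneg _))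

lemma cnt_measurable {Y : Type*} [TopologicalSpace Y] [MeasurableSpace Y] [OpensMeasurableSpace Y]
    (a : Y → M n) (ha : Continuous a) (hh : ∀ y, (a y).IsHermitian) :
    Measurable (fun y => cnt (a y)) := by
  let f : ℕ → ℝ → ℝ := fun k x => min 1 (k * max x 0)
  have hfc : ∀ k, Continuous (f k) := fun k => by fun_prop
  refine measurable_of_tendsto_metrizable (f := fun k y => (Matrix.trace (cfc (f k) (a y))).re)
    (fun k => ?_) ?_
  · have h1 := continuous_cfc_trace a ha hh (f k) (hfc k)
    exact (Complex.continuous_re.comp h1.matrix_trace).measurable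
  · rw [tendsto_pi_nhds]
    intro y
    obtain ⟨V, l, h1, h2, h3, h4⟩ := spectral (a y) (hh y)
    simp only [cnt, projPos, h4, trace_conj V h1]
    refine tendsto_finsetSum _ fun i _ => ?_
    by_cases hl : 0 < l i
    · rw [if_pos hl]
      refine tendsto_const_nhds.congr' ?_
      obtain ⟨K, hK⟩ := exists_nat_gt ((l i)⁻¹)
      filter_upwards [Filter.eventually_ge_atTop K] with k hk
      have : (K:ℝ) ≤ k := by exact_mod_cast hk
      have h5 : 1 ≤ (k:ℝ) * l i := by
        have := mul_le_mul_of_nonneg_right (hK.le.trans this) hl.le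
        rwa [inv_mul_cancel₀ hl.ne'] at this
      simp [f, max_eq_left hl.le, h5]
    · rw [if_neg hl]
      simp [f, max_eq_right (not_lt.1 hl)]

/-- count function of the shifted pencil -/
def N (A B : M n) (r s : ℝ) : ℝ := cnt ((A + s • 1) - r • (B + s • 1))

lemma add_smul_herm (A : M n) (hA : A.IsHermitian) (s : ℝ) : (A + s • (1 : M n)).IsHermitian := by
  have := sub_smul_herm A 1 hA Matrix.isHermitian_one (-s)
  simpa using this

lemma N_measurable (A B : M n) (hA : A.IsHermitian) (hB : B.IsHermitian) :
    Measurable (fun p : ℝ × ℝ => N A B p.1 p.2) := by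
  refine cnt_measurable (fun p : ℝ × ℝ => (A + p.2 • (1 : M n)) - p.1 • (B + p.2 • (1 : M n))) ?_ ?_
  · fun_prop
  · intro p
    exact sub_smul_herm _ _ (add_smul_herm A hA _) (add_smul_herm B hB _) _

lemma layer_scalar (l c : ℝ) (hc : 0 < c) :
    ∫⁻ s in Set.Ioi (0:ℝ), ENNReal.ofReal (if 0 < l - c * s then (1:ℝ) else 0)
      = ENNReal.ofReal (max l 0 / c) := by
  have : ∀ s : ℝ, ENNReal.ofReal (if 0 < l - c * s then (1:ℝ) else 0)
      = (Set.Iio (l / c)).indicator (fun _ => (1 : ENNReal)) s := by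
    intro s
    have : (0 < l - c * s) ↔ s < l / c := by rw [lt_div_iff₀ hc, sub_pos, mul_comm]
    by_cases h : s < l / c
    · simp [this, h]
    · simp [this, h]
  simp_rw [this]
  rw [lintegral_indicator measurableSet_Iio, lintegral_one, Measure.restrict_restrict measurableSet_Iio,
    Measure.restrict_apply_univ, Set.inter_comm, Set.Ioi_inter_Iio, Real.volume_Ioo, sub_zero]
  rcases le_total l 0 with h | h
  · rw [max_eq_right h, zero_div, ENNReal.ofReal_zero,
      ENNReal.ofReal_of_nonpos (div_nonpos_of_nonpos_of_nonneg h hc.le)]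
  · rw [max_eq_left h]

lemma layer (A B : M n) (hA : A.IsHermitian) (hB : B.IsHermitian) (r k : ℝ) (hr : 1 < r)
    (hk : 0 ≤ k) :
    ∫⁻ s in Set.Ioi (0:ℝ), ENNReal.ofReal (k * (r - 1) * N A B r s)
      = ENNReal.ofReal (k * pf A B r) := by
  obtain ⟨V, l, h1, h2, h3, h4⟩ := spectral _ (sub_smul_herm A B hA hB r)
  have hc : 0 < r - 1 := sub_pos.2 hr
  have hV : IsUnit V := isUnit_iff_exists.2 ⟨_, h2, h1⟩
  have hN : ∀ s, N A B r s = ∑ i, if 0 < l i - (r - 1) * s then (1:ℝ) else 0 := by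
    intro s
    refine cnt_eq _ V _ hV ?_
    have e : (A + s • (1 : M n)) - r • (B + s • (1 : M n)) = (A - r • B) - ((r - 1) * s) • (1 : M n) := by
      module
    have d1 : Vᴴ * (A - r • B) * V = rdiag l := by
      rw [h3]
      calc _ = (Vᴴ * V) * rdiag l * (Vᴴ * V) := by simp only [Matrix.mul_assoc]
        _ = _ := by simp [h1]
    rw [e, rdiag_sub_smul V _ 1 l (fun _ => 1) (by rw [rdiag_one, Matrix.mul_one, h1]) d1]
    simp
  have hN' : ∀ s, ENNReal.ofReal (k * (r - 1) * N A B r s) = ENNReal.ofReal (k * (r - 1)) *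
      ∑ i, ENNReal.ofReal (if 0 < l i - (r - 1) * s then (1:ℝ) else 0) := by
    intro s
    rw [ENNReal.ofReal_mul (by positivity), hN, ENNReal.ofReal_sum_of_nonneg]
    intro i _; split_ifs <;> simp
  simp_rw [hN']
  have hm : ∀ i, Measurable (fun s : ℝ => ENNReal.ofReal (if 0 < l i - (r - 1) * s then (1:ℝ) else 0)) := by
    intro i
    refine ENNReal.measurable_ofReal.comp (Measurable.ite ?_ measurable_const measurable_const)
    exact measurableSet_lt measurable_const (by fun_prop)
  rw [lintegral_const_mul _ (Finset.measurable_sum _ fun i _ => hm i),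
    lintegral_finsetSum _ (fun i _ => hm i)]
  simp_rw [layer_scalar _ _ hc]
  rw [← ENNReal.ofReal_sum_of_nonneg (fun i _ => by positivity), ← ENNReal.ofReal_mul (by positivity),
    pf, phi_eq _ V l h1 h3 (h4 _), ← Finset.sum_div]
  congr 1
  field_simp

lemma tonelli (A B : M n) (hA : A.IsHermitian) (hB : B.IsHermitian) (k : ℝ → ℝ)
    (hk : Measurable k) (hk0 : ∀ r, 1 < r → 0 ≤ k r) :
    ∫⁻ r in Set.Ioi (1:ℝ), ENNReal.ofReal (k r * pf A B r)
      = ∫⁻ s in Set.Ioi (0:ℝ), ∫⁻ r in Set.Ioi (1:ℝ), ENNReal.ofReal (k r * (r - 1) * N A B r s) := by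
  rw [setLIntegral_congr_fun measurableSet_Ioi
    (fun r hr => (layer A B hA hB r (k r) hr (hk0 r hr)).symm)]
  refine lintegral_lintegral_swap ?_
  refine Measurable.aemeasurable ?_
  have := N_measurable A B hA hB
  refine ENNReal.measurable_ofReal.comp ?_
  exact ((hk.comp measurable_fst).mul (measurable_fst.sub_const 1)).mul this

lemma inner_scalar (F w : ℝ → ℝ) (b : ℝ) (hF : ∀ x, 1 ≤ x → HasDerivAt F (w x) x)
    (hw : ContinuousOn w (Set.Ici 1)) (hw0 : ∀ x, 1 ≤ x → 0 ≤ w x) :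
    ∫⁻ r in Set.Ioi (1:ℝ), ENNReal.ofReal (w r * if r < b then (1:ℝ) else 0)
      = if 1 < b then ENNReal.ofReal (F b - F 1) else 0 := by
  have e : ∀ r : ℝ, ENNReal.ofReal (w r * if r < b then (1:ℝ) else 0)
      = (Set.Iio b).indicator (fun r => ENNReal.ofReal (w r)) r := by
    intro r
    by_cases h : r < b <;> simp [h]
  simp_rw [e]
  rw [lintegral_indicator measurableSet_Iio, Measure.restrict_restrict measurableSet_Iio,
    Set.inter_comm, Set.Ioi_inter_Iio]
  split_ifs with hb
  · have hsub : Set.Icc 1 b ⊆ Set.Ici (1:ℝ) := fun x hx => hx.1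
    have hi : IntegrableOn w (Set.Icc 1 b) :=
      (hw.mono hsub).integrableOn_compact isCompact_Icc
    rw [← ofReal_integral_eq_lintegral_ofReal (hi.mono_set Set.Ioo_subset_Icc_self)
      ((ae_restrict_iff' measurableSet_Ioo).2 (Filter.Eventually.of_forall fun x hx => hw0 x hx.1.le)),
      ← integral_Ioc_eq_integral_Ioo, ← intervalIntegral.integral_of_le hb.le,
      intervalIntegral.integral_eq_sub_of_hasDerivAt]
    · intro x hx
      rw [Set.uIcc_of_le hb.le] at hx
      exact hF x hx.1
    · rw [intervalIntegrable_iff_integrableOn_Ioc_of_le hb.le]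
      exact hi.mono_set Set.Ioc_subset_Icc_self
  · rw [Set.Ioo_eq_empty hb]; simp

lemma inner_both (m : ℝ) (hm : 0 < m) :
    (∫⁻ r in Set.Ioi (1:ℝ), ENNReal.ofReal (r⁻¹ * (r - 1) * if 0 < m - r * 1 then (1:ℝ) else 0))
    + (∫⁻ r in Set.Ioi (1:ℝ), ENNReal.ofReal ((r ^ 2)⁻¹ * (r - 1) * if 0 < 1 - r * m then (1:ℝ) else 0))
      = ENNReal.ofReal (m - 1 - Real.log m) := by
  have h1 := inner_scalar (fun x => x - Real.log x) (fun x => x⁻¹ * (x - 1)) m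
    (fun x hx => by
      have : x ≠ 0 := by linarith
      exact ((hasDerivAt_id' x).sub (Real.hasDerivAt_log this)).congr_deriv (by field_simp))
    (by
      refine ContinuousOn.mul (continuousOn_inv₀.mono fun x hx => ?_) (by fun_prop)
      have : (1:ℝ) ≤ x := hx
      exact (by linarith : x ≠ 0))
    (fun x hx => mul_nonneg (by positivity) (by linarith))
  have h2 := inner_scalar (fun x => Real.log x + x⁻¹) (fun x => (x ^ 2)⁻¹ * (x - 1)) m⁻¹
    (fun x hx => by
      have : x ≠ 0 := by linarith
      exact ((Real.hasDerivAt_log this).add (hasDerivAt_inv this)).congr_deriv (by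
        field_simp
        ring))
    (by
      refine ContinuousOn.mul (ContinuousOn.inv₀ (by fun_prop) fun x hx => ?_) (by fun_prop)
      have : (1:ℝ) ≤ x := hx
      positivity)
    (fun x hx => mul_nonneg (by positivity) (by linarith))
  have c1 : ∀ r : ℝ, (0 < m - r * 1) ↔ r < m := fun r => by rw [mul_one, sub_pos]
  have c2 : ∀ r : ℝ, (0 < 1 - r * m) ↔ r < m⁻¹ := fun r => by
    rw [sub_pos, ← one_div, lt_div_iff₀ hm]
  simp_rw [c1, c2]
  rw [h1, h2]
  simp only [one_lt_inv₀ hm, Real.log_inv, inv_inv, Real.log_one]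
  rcases lt_trichotomy m 1 with h | h | h
  · simp [h, not_lt.2 h.le]; congr 1; ring
  · simp [h]
  · simp [h, not_lt.2 h.le]; congr 1; ring

lemma posDef_eig (E V : M n) (l : Fin n → ℝ) (hE : E.PosDef) (h1 : Vᴴ * V = 1)
    (h3 : E = V * rdiag l * Vᴴ) (i : Fin n) : 0 < l i := by
  have hV : Function.Injective V.mulVec := by
    intro x y hxy
    have := congrArg (Vᴴ *ᵥ ·) hxy
    simpa [h1] using this
  have hp : (Vᴴ * E * V).PosDef := hE.conjTranspose_mul_mul_same hV
  have : Vᴴ * E * V = rdiag l := by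
    rw [h3]
    calc _ = (Vᴴ * V) * rdiag l * (Vᴴ * V) := by simp only [Matrix.mul_assoc]
      _ = _ := by simp [h1]
  rw [this] at hp
  have := hp.diag_pos (i := i)
  simpa [rdiag] using this

lemma trace_mul_conj (A W : M n) (d : Fin n → ℝ) :
    (Matrix.trace (A * (W * rdiag d * Wᴴ))).re = ∑ i, ((Wᴴ * A * W) i i).re * d i := by
  have : Matrix.trace (A * (W * rdiag d * Wᴴ)) = Matrix.trace ((Wᴴ * A * W) * rdiag d) := by
    rw [Matrix.trace_mul_comm, Matrix.trace_mul_comm _ (rdiag d)]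
    rw [Matrix.mul_assoc, Matrix.mul_assoc, Matrix.trace_mul_comm]
    simp only [Matrix.mul_assoc]
  rw [this, Matrix.trace, Complex.re_sum]
  refine Finset.sum_congr rfl fun i _ => ?_
  simp [rdiag, Matrix.mul_diagonal]

lemma shift_conj (A V : M n) (a : Fin n → ℝ) (h2 : V * Vᴴ = 1) (h3 : A = V * rdiag a * Vᴴ) (s : ℝ) :
    A + s • (1 : M n) = V * rdiag (fun i => a i + s) * Vᴴ := by
  have : rdiag (fun i => a i + s) = rdiag a + s • (1 : M n) := by
    ext i j
    by_cases h : i = j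
    · subst h; simp [rdiag]
    · simp [rdiag, h]
  rw [this, Matrix.mul_add, Matrix.add_mul, ← h3, Matrix.mul_smul, Matrix.mul_one, Matrix.smul_mul, h2]

lemma det_conj (V : M n) (a : Fin n → ℝ) (h1 : Vᴴ * V = 1) :
    Matrix.det (V * rdiag a * Vᴴ) = ((∏ i, a i : ℝ) : ℂ) := by
  have := congrArg Matrix.det h1
  rw [Matrix.det_mul, Matrix.det_one] at this
  rw [Matrix.det_mul, Matrix.det_mul, rdiag, Matrix.det_diagonal]
  push_cast
  linear_combination (∏ i, (a i : ℂ)) * this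

/-- the integrand in the shift variable -/
lemma inner_eq (A B : M n) (hA : A.PosDef) (hB : B.PosDef) (V W : M n) (a b : Fin n → ℝ)
    (v1 : Vᴴ * V = 1) (v2 : V * Vᴴ = 1) (v3 : A = V * rdiag a * Vᴴ)
    (w1 : Wᴴ * W = 1) (w2 : W * Wᴴ = 1) (w3 : B = W * rdiag b * Wᴴ) (s : ℝ) (hs : 0 ≤ s) :
    let w : ℝ := ∑ i, (Real.log (b i + s) + (((Wᴴ * A * W) i i).re + s) * (b i + s)⁻¹
      - Real.log (a i + s) - 1)
    0 ≤ w ∧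
    (∫⁻ r in Set.Ioi (1:ℝ), ENNReal.ofReal (r⁻¹ * (r - 1) * N A B r s))
    + (∫⁻ r in Set.Ioi (1:ℝ), ENNReal.ofReal ((r ^ 2)⁻¹ * (r - 1) * N B A r s))
      = ENNReal.ofReal w := by
  intro w
  have ha : ∀ i, 0 < a i + s := fun i => by have := posDef_eig A V a hA v1 v3 i; linarith
  have hb : ∀ i, 0 < b i + s := fun i => by have := posDef_eig B W b hB w1 w3 i; linarith
  have hsp : (s • (1 : M n)).PosSemidef := Matrix.PosSemidef.one.smul hs
  have hC : (A + s • (1 : M n)).PosDef := hA.add_posSemidef hsp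
  have hE : (B + s • (1 : M n)).PosDef := hB.add_posSemidef hsp
  obtain ⟨T, m, hT, t1, t2⟩ := simdiag _ _ hC.isHermitian hE
  have hm : ∀ i, 0 < m i := by
    intro i
    have hp : (Tᴴ * (A + s • (1 : M n)) * T).PosDef :=
      hC.conjTranspose_mul_mul_same (Matrix.mulVec_injective_iff_isUnit.2 hT)
    rw [t2] at hp
    have := hp.diag_pos (i := i)
    simpa [rdiag] using this
  -- sum of the `m i`
  have s1 : ∑ i, m i = ∑ i, (((Wᴴ * A * W) i i).re + s) * (b i + s)⁻¹ := by
    have q1 : T * Tᴴ = W * rdiag (fun i => (b i + s)⁻¹) * Wᴴ := by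
      have x1 : (T * Tᴴ) * (B + s • (1 : M n)) = 1 := by
        rw [Matrix.mul_assoc]; exact mul_eq_one_comm.1 t1
      have x2 : (B + s • (1 : M n)) * (W * rdiag (fun i => (b i + s)⁻¹) * Wᴴ) = 1 := by
        rw [shift_conj B W b w2 w3]
        calc _ = W * (rdiag (fun i => b i + s) * (Wᴴ * W) * rdiag (fun i => (b i + s)⁻¹)) * Wᴴ := by
              simp only [Matrix.mul_assoc]
          _ = W * 1 * Wᴴ := by
            congr 2
            rw [w1, Matrix.mul_one, rdiag, rdiag, Matrix.diagonal_mul_diagonal, ← Matrix.diagonal_one]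
            congr 1; ext i
            have := (hb i).ne'
            rw [← Complex.ofReal_mul, mul_inv_cancel₀ this, Complex.ofReal_one]
          _ = 1 := by simp [w2]
      exact left_inv_eq_right_inv x1 x2
    have q2 : ∑ i, m i = (Matrix.trace ((A + s • (1 : M n)) * (T * Tᴴ))).re := by
      rw [← Matrix.mul_assoc, Matrix.trace_mul_comm, ← Matrix.mul_assoc, t2]
      simp [rdiag, Matrix.trace]
    rw [q2, q1, trace_mul_conj]
    refine Finset.sum_congr rfl fun i _ => ?_
    congr 1
    rw [Matrix.mul_add, Matrix.add_mul, Matrix.mul_smul, Matrix.mul_one, Matrix.smul_mul, w1]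
    simp
  -- product of the `m i`
  have s2 : ∑ i, Real.log (m i) = ∑ i, Real.log (a i + s) - ∑ i, Real.log (b i + s) := by
    have d1 := congrArg Matrix.det t1
    have d2 := congrArg Matrix.det t2
    rw [Matrix.det_mul, Matrix.det_mul, shift_conj B W b w2 w3, det_conj W _ w1, Matrix.det_one] at d1
    rw [Matrix.det_mul, Matrix.det_mul, shift_conj A V a v2 v3, det_conj V _ v1, rdiag,
      Matrix.det_diagonal] at d2
    have d3 : (∏ i, m i) * (∏ i, (b i + s)) = ∏ i, (a i + s) := by
      have : ((∏ i, m i : ℝ) : ℂ) * ((∏ i, (b i + s) : ℝ) : ℂ) = ((∏ i, (a i + s) : ℝ) : ℂ) := by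
        rw [Complex.ofReal_prod _ m, ← d2]
        linear_combination ((∏ i, (a i + s) : ℝ) : ℂ) * d1
      exact_mod_cast this
    rw [← Real.log_prod (fun i _ => (hm i).ne'), ← Real.log_prod (fun i _ => (ha i).ne'),
      ← Real.log_prod (fun i _ => (hb i).ne'), ← d3, Real.log_mul]
    · ring
    · exact Finset.prod_ne_zero_iff.2 fun i _ => (hm i).ne'
    · exact Finset.prod_ne_zero_iff.2 fun i _ => (hb i).ne'
  have hw : w = ∑ i, (m i - 1 - Real.log (m i)) := by
    simp only [w, Finset.sum_sub_distrib, Finset.sum_add_distrib, s1, s2]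
    ring
  have hnn : ∀ i, 0 ≤ m i - 1 - Real.log (m i) := fun i => by
    have := Real.log_le_sub_one_of_pos (hm i); linarith
  refine ⟨hw ▸ Finset.sum_nonneg fun i _ => hnn i, ?_⟩
  have t1' : Tᴴ * (B + s • (1 : M n)) * T = rdiag (fun _ => 1) := by rw [t1, rdiag_one]
  have n1 : ∀ r, N A B r s = ∑ i, if 0 < m i - r * 1 then (1:ℝ) else 0 := fun r =>
    cnt_eq _ T _ hT (rdiag_sub_smul T _ _ m (fun _ => 1) t1' t2 r)
  have n2 : ∀ r, N B A r s = ∑ i, if 0 < 1 - r * m i then (1:ℝ) else 0 := fun r =>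
    cnt_eq _ T _ hT (rdiag_sub_smul T _ _ (fun _ => 1) m t2 t1' r)
  have e1 : ∀ r ∈ Set.Ioi (1:ℝ), ENNReal.ofReal (r⁻¹ * (r - 1) * N A B r s)
      = ∑ i, ENNReal.ofReal (r⁻¹ * (r - 1) * if 0 < m i - r * 1 then (1:ℝ) else 0) := by
    intro r hr
    have hr1 : 0 < r - 1 := sub_pos.2 hr
    have hr0 : 0 < r := by linarith
    rw [n1, Finset.mul_sum, ENNReal.ofReal_sum_of_nonneg]
    intro i _; split_ifs <;> simp; positivity
  have e2 : ∀ r ∈ Set.Ioi (1:ℝ), ENNReal.ofReal ((r ^ 2)⁻¹ * (r - 1) * N B A r s)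
      = ∑ i, ENNReal.ofReal ((r ^ 2)⁻¹ * (r - 1) * if 0 < 1 - r * m i then (1:ℝ) else 0) := by
    intro r hr
    have hr1 : 0 < r - 1 := sub_pos.2 hr
    have hr0 : 0 < r := by linarith
    rw [n2, Finset.mul_sum, ENNReal.ofReal_sum_of_nonneg]
    intro i _; split_ifs <;> simp; positivity
  rw [setLIntegral_congr_fun measurableSet_Ioi e1, setLIntegral_congr_fun measurableSet_Ioi e2,
    lintegral_finsetSum, lintegral_finsetSum, ← Finset.sum_add_distrib,
    Finset.sum_congr rfl (fun i _ => inner_both (m i) (hm i)), hw,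
    ENNReal.ofReal_sum_of_nonneg (fun i _ => hnn i)]
  · intro i _
    refine ENNReal.measurable_ofReal.comp (Measurable.mul (by fun_prop)
      (Measurable.ite ?_ measurable_const measurable_const))
    exact measurableSet_lt measurable_const (by fun_prop)
  · intro i _
    refine ENNReal.measurable_ofReal.comp (Measurable.mul (by fun_prop)
      (Measurable.ite ?_ measurable_const measurable_const))
    exact measurableSet_lt measurable_const (by fun_prop)

lemma tendsto_log_term (c b : ℝ) :
    Filter.Tendsto (fun s : ℝ => (c + s) * (Real.log (b + s) - Real.log s)) Filter.atTop (nhds b) := by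
  have h1 : Filter.Tendsto (fun s : ℝ => s * Real.log (1 + b / s)) Filter.atTop (nhds b) :=
    Real.tendsto_mul_log_one_add_div_atTop b
  have h2 : Filter.Tendsto (fun s : ℝ => (c / s + 1) * (s * Real.log (1 + b / s))) Filter.atTop
      (nhds ((0 + 1) * b)) :=
    ((Filter.Tendsto.const_div_atTop Filter.tendsto_id c).add_const 1).mul h1
  rw [zero_add, one_mul] at h2
  refine h2.congr' ?_
  filter_upwards [Filter.eventually_gt_atTop 0, Filter.eventually_gt_atTop (-b)] with s h0 hb
  have hbs : 0 < b + s := by linarith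
  rw [← Real.log_div hbs.ne' h0.ne']
  have : (b + s) / s = 1 + b / s := by field_simp; ring
  rw [this]
  field_simp

lemma outer_int (a b c : Fin n → ℝ) (ha : ∀ i, 0 < a i) (hb : ∀ i, 0 < b i)
    (hac : ∑ i, a i = ∑ i, c i)
    (hw : ∀ s, 0 ≤ s → 0 ≤ ∑ i, (Real.log (b i + s) + (c i + s) * (b i + s)⁻¹
      - Real.log (a i + s) - 1)) :
    ∫⁻ s in Set.Ioi (0:ℝ), ENNReal.ofReal (∑ i, (Real.log (b i + s) + (c i + s) * (b i + s)⁻¹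
      - Real.log (a i + s) - 1))
      = ENNReal.ofReal (∑ i, (a i * Real.log (a i)) - ∑ i, c i * Real.log (b i)
        - ∑ i, (a i - b i)) ∧
    0 ≤ ∑ i, (a i * Real.log (a i)) - ∑ i, c i * Real.log (b i) - ∑ i, (a i - b i) := by
  let W : ℝ → ℝ := fun s => ∑ i, ((c i + s) * Real.log (b i + s) - (a i + s) * Real.log (a i + s)
    + (a i - b i))
  have hd : ∀ s ∈ Set.Ici (0:ℝ), HasDerivAt W (∑ i, (Real.log (b i + s) + (c i + s) * (b i + s)⁻¹
      - Real.log (a i + s) - 1)) s := by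
    intro s hs
    have hs : 0 ≤ s := hs
    refine HasDerivAt.fun_sum fun i _ => ?_
    have hbi : b i + s ≠ 0 := by have := hb i; positivity
    have hai : a i + s ≠ 0 := by have := ha i; positivity
    have k1 := ((hasDerivAt_id' s).const_add (c i)).mul (((hasDerivAt_id' s).const_add (b i)).log hbi)
    have k2 := ((hasDerivAt_id' s).const_add (a i)).mul (((hasDerivAt_id' s).const_add (a i)).log hai)
    refine ((k1.sub k2).add_const (a i - b i)).congr_deriv ?_
    field_simp
    ring
  have hlim : Filter.Tendsto W Filter.atTop (nhds 0) := by
    have h1 : Filter.Tendsto (fun s => ∑ i, ((c i + s) * (Real.log (b i + s) - Real.log s)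
        - (a i + s) * (Real.log (a i + s) - Real.log s) + (a i - b i))) Filter.atTop
        (nhds (∑ i, (b i - a i + (a i - b i)))) :=
      tendsto_finsetSum _ fun i _ =>
        ((tendsto_log_term (c i) (b i)).sub (tendsto_log_term (a i) (a i))).add_const _
    have h2 : ∑ i, (b i - a i + (a i - b i)) = 0 := Finset.sum_eq_zero fun i _ => by ring
    rw [h2] at h1
    refine h1.congr fun s => ?_
    have h3 : (∑ i, (c i - a i)) * Real.log s = 0 := by
      rw [Finset.sum_sub_distrib, hac]; ring
    rw [Finset.sum_mul] at h3
    have h4 : W s - (∑ i, ((c i + s) * (Real.log (b i + s) - Real.log s)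
        - (a i + s) * (Real.log (a i + s) - Real.log s) + (a i - b i)))
        = ∑ i, (c i - a i) * Real.log s := by
      rw [← Finset.sum_sub_distrib]
      exact Finset.sum_congr rfl fun i _ => by ring
    linarith
  have hi := integrableOn_Ioi_deriv_of_nonneg' hd (fun s hs => hw s (le_of_lt hs)) hlim
  have hv := integral_Ioi_of_hasDerivAt_of_nonneg' hd (fun s hs => hw s (le_of_lt hs)) hlim
  have hW0 : 0 - W 0 = ∑ i, (a i * Real.log (a i)) - ∑ i, c i * Real.log (b i)
        - ∑ i, (a i - b i) := by
    simp only [W, add_zero, Finset.sum_add_distrib, Finset.sum_sub_distrib]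
    ring
  have hae : 0 ≤ᵐ[volume.restrict (Set.Ioi (0:ℝ))] fun s => ∑ i, (Real.log (b i + s)
      + (c i + s) * (b i + s)⁻¹ - Real.log (a i + s) - 1) :=
    (ae_restrict_iff' measurableSet_Ioi).2 (Filter.Eventually.of_forall fun s hs => hw s (le_of_lt hs))
  rw [hW0] at hv
  constructor
  · rw [← ofReal_integral_eq_lintegral_ofReal hi hae, hv]
  · rw [← hv]
    exact integral_nonneg_of_ae hae

lemma phi_nonneg (X : M n) (hX : X.IsHermitian) : 0 ≤ phi X := by
  have := trace_mul_le_phi X 0 hX Matrix.PosSemidef.zero (by simpa using Matrix.PosSemidef.one)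
  simpa using this

theorem main (A B : M n) (hA : A.PosDef) (hB : B.PosDef) :
    (Matrix.trace (A * (mlog A - mlog B))).re
      = ∫ γ in Set.Ioi (1:ℝ),
          γ⁻¹ * (Matrix.trace (A * (projPos (A - γ • B) - projPos (B - γ • A)))).re := by
  obtain ⟨i1, i2, hr⟩ := rhs_eq A B hA hB
  rw [hr]
  obtain ⟨V, a, v1, v2, v3, v4⟩ := spectral A hA.isHermitian
  obtain ⟨W, b, w1, w2, w3, w4⟩ := spectral B hB.isHermitian
  have hAh := hA.isHermitian
  have hBh := hB.isHermitian
  have ha := posDef_eig A V a hA v1 v3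
  have hb := posDef_eig B W b hB w1 w3
  let c : Fin n → ℝ := fun i => ((Wᴴ * A * W) i i).re
  have hta : (Matrix.trace A).re = ∑ i, a i := by
    rw [v3]; exact trace_conj V v1 a
  have htb : (Matrix.trace B).re = ∑ i, b i := by
    rw [w3]; exact trace_conj W w1 b
  have hac : ∑ i, a i = ∑ i, c i := by
    rw [← hta]
    have := trace_mul_conj A W (fun _ => 1)
    rw [rdiag_one, Matrix.mul_one, w2, Matrix.mul_one] at this
    simpa [c] using this
  have hin := fun s hs => inner_eq A B hA hB V W a b v1 v2 v3 w1 w2 w3 s hs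
  obtain ⟨o1, o2⟩ := outer_int a b c ha hb hac (fun s hs => (hin s hs).1)
  have p1 : 0 ≤ᵐ[volume.restrict (Set.Ioi (1:ℝ))] fun x => x⁻¹ * pf A B x :=
    (ae_restrict_iff' measurableSet_Ioi).2 (Filter.Eventually.of_forall fun x hx => by
      have : 0 < x := lt_trans one_pos hx
      exact mul_nonneg (by positivity) (phi_nonneg _ (sub_smul_herm A B hAh hBh x)))
  have p2 : 0 ≤ᵐ[volume.restrict (Set.Ioi (1:ℝ))] fun x => (x ^ 2)⁻¹ * pf B A x :=
    (ae_restrict_iff' measurableSet_Ioi).2 (Filter.Eventually.of_forall fun x hx => by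
      exact mul_nonneg (by positivity) (phi_nonneg _ (sub_smul_herm B A hBh hAh x)))
  have key : ENNReal.ofReal ((∫ x in Set.Ioi (1:ℝ), x⁻¹ * pf A B x)
      + ∫ x in Set.Ioi (1:ℝ), (x ^ 2)⁻¹ * pf B A x)
      = ENNReal.ofReal (∑ i, (a i * Real.log (a i)) - ∑ i, c i * Real.log (b i)
        - ∑ i, (a i - b i)) := by
    rw [ENNReal.ofReal_add (integral_nonneg_of_ae p1) (integral_nonneg_of_ae p2),
      ofReal_integral_eq_lintegral_ofReal i1 p1, ofReal_integral_eq_lintegral_ofReal i2 p2,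
      tonelli A B hAh hBh (fun r => r⁻¹) (by fun_prop) (fun r hr => by positivity),
      tonelli B A hBh hAh (fun r => (r ^ 2)⁻¹) (by fun_prop) (fun r hr => by positivity),
      ← lintegral_add_left, ← o1]
    · exact setLIntegral_congr_fun measurableSet_Ioi fun s hs => (hin s (le_of_lt hs)).2
    · refine Measurable.lintegral_prod_right' (f := fun p : ℝ × ℝ =>
        ENNReal.ofReal (p.2⁻¹ * (p.2 - 1) * N A B p.2 p.1)) ?_
      have := (N_measurable A B hAh hBh).comp measurable_swap
      refine ENNReal.measurable_ofReal.comp ?_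
      exact (measurable_snd.inv.mul (measurable_snd.sub_const 1)).mul this
  have key2 := (ENNReal.ofReal_eq_ofReal_iff
    (add_nonneg (integral_nonneg_of_ae p1) (integral_nonneg_of_ae p2)) o2).1 key
  have l1 : (Matrix.trace (A * mlog A)).re = ∑ i, a i * Real.log (a i) := by
    rw [mlog, v4, trace_mul_conj]
    refine Finset.sum_congr rfl fun i _ => ?_
    have : Vᴴ * A * V = rdiag a := by
      rw [v3]
      calc _ = (Vᴴ * V) * rdiag a * (Vᴴ * V) := by simp only [Matrix.mul_assoc]
        _ = _ := by simp [v1]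
    rw [this]; simp [rdiag]
  have l2 : (Matrix.trace (A * mlog B)).re = ∑ i, c i * Real.log (b i) := by
    rw [mlog, w4, trace_mul_conj]
  rw [add_assoc, key2, Matrix.mul_sub, Matrix.trace_sub, Complex.sub_re, l1, l2, Matrix.trace_sub,
    Complex.sub_re, hta, htb, Finset.sum_sub_distrib]
  ring

end RelEnt

/-- the Umegaki relative entropy satisfies
`Tr[A(log A - log B)] = ∫₁^∞ (1/γ) Tr[A({A > γB} - {B > γA})] dγ`. -/
theorem relativeEntropy_eq_integral_proj {n : ℕ} (A B : Matrix (Fin n) (Fin n) ℂ)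
    (hA : A.PosDef) (hB : B.PosDef) :
    (Matrix.trace (A * (mlog A - mlog B))).re
      = ∫ γ in Set.Ioi (1:ℝ),
          γ⁻¹ * (Matrix.trace (A * (projPos (A - γ • B) - projPos (B - γ • A)))).re := by
  exact RelEnt.main A B hA hB
end
end

section
/- For positive definite matrices A and B, Tr[A(log A - log B)] = ∫₁^∞ ( (1/γ) Tr[(A - γB)₊] + (1/γ²) Tr[(B - γA)₊] ) dγ + Tr[A - B] (Frenkel's integral formula, in hockey-stick form). -/
open MeasureTheory Matrix
open scoped ComplexOrder
noncomputable section

section cont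
open scoped Matrix.Norms.L2Operator
lemma cont_tr {n : ℕ} {X : Type*} [TopologicalSpace X] (f : ℝ → ℝ) (hf : Continuous f)
    (a : X → Matrix (Fin n) (Fin n) ℂ)
    (ha : Continuous a) (ha' : ∀ x, (a x).IsHermitian) :
    Continuous fun x => (Matrix.trace (cfc f (a x))).re := by
  have : Continuous fun x => cfc f (a x) := by
    apply Continuous.cfc_of_mem_nhdsSet (s := Set.univ) (hf := hf.continuousOn)
    all_goals first | exact ha | exact ha' | simp
  fun_prop
end cont

def Dg {n : ℕ} (U : Matrix (Fin n) (Fin n) ℂ) (d : Fin n → ℝ) : Matrix (Fin n) (Fin n) ℂ :=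
  U * diagonal (fun i => (d i : ℂ)) * Uᴴ

lemma exists_Dg {n : ℕ} {X : Matrix (Fin n) (Fin n) ℂ} (hX : X.IsHermitian) :
    ∃ U : Matrix (Fin n) (Fin n) ℂ, ∃ d : Fin n → ℝ, Uᴴ * U = 1 ∧ U * Uᴴ = 1 ∧ X = Dg U d ∧
      (∀ f : ℝ → ℝ, cfc f X = Dg U (fun i => f (d i))) ∧ d = hX.eigenvalues := by
  refine ⟨hX.eigenvectorUnitary, hX.eigenvalues, ?_, ?_, ?_, ?_, rfl⟩
  · exact Unitary.coe_star_mul_self hX.eigenvectorUnitary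
  · exact Unitary.coe_mul_star_self hX.eigenvectorUnitary
  · exact hX.spectral_theorem
  · intro f
    rw [hX.cfc_eq]
    rfl

lemma Dg_herm {n : ℕ} (U : Matrix (Fin n) (Fin n) ℂ) (d : Fin n → ℝ) : (Dg U d).IsHermitian := by
  unfold Dg
  apply Matrix.isHermitian_mul_mul_conjTranspose
  simp only [Matrix.IsHermitian, diagonal_conjTranspose]
  congr 1
  ext i
  simp

lemma trace_Dg {n : ℕ} {U : Matrix (Fin n) (Fin n) ℂ} (hU : Uᴴ * U = 1) (d : Fin n → ℝ) :
    (Dg U d).trace = ∑ i, (d i : ℂ) := by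
  unfold Dg
  rw [Matrix.trace_mul_comm, ← mul_assoc, hU, one_mul]
  simp [Matrix.trace]

lemma trace_mul_Dg {n : ℕ} (A U : Matrix (Fin n) (Fin n) ℂ) (d : Fin n → ℝ) :
    (A * Dg U d).trace.re = ∑ i, ((Uᴴ * A * U) i i).re * d i := by
  unfold Dg
  rw [← mul_assoc, Matrix.trace_mul_comm, ← mul_assoc, ← mul_assoc]
  simp [Matrix.trace, Matrix.mul_diagonal]

lemma trace_cfc {n : ℕ} {U : Matrix (Fin n) (Fin n) ℂ} (hU : Uᴴ * U = 1) (d : Fin n → ℝ)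
    (f : ℝ → ℝ) : (Matrix.trace (cfc f (Dg U d))).re = ∑ i, f (d i) := by
  have hX := Dg_herm U d
  obtain ⟨V, e, hV, -, hX1, hc, he⟩ := exists_Dg hX
  rw [hc, trace_Dg hV]
  have h1 : (Dg U d).charpoly = ∏ i, (Polynomial.X - Polynomial.C (d i : ℂ)) := by
    unfold Dg
    rw [charpoly_mul_comm, ← mul_assoc, hU, one_mul, charpoly_diagonal]
  have h2 : (Dg U d).charpoly = ∏ i, (Polynomial.X - Polynomial.C (e i : ℂ)) := by
    rw [hX.charpoly_eq, he]; rfl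
  have h3 : (Finset.univ.val.map (fun i => (d i : ℂ))) = (Finset.univ.val.map (fun i => (e i : ℂ))) := by
    have := congrArg Polynomial.roots (h1.symm.trans h2)
    rw [Polynomial.roots_prod _ _ (by simp [Finset.prod_ne_zero_iff, Polynomial.X_sub_C_ne_zero]),
      Polynomial.roots_prod _ _
        (by simp [Finset.prod_ne_zero_iff, Polynomial.X_sub_C_ne_zero])] at this
    simpa using this
  have h4 := congrArg (fun s => (s.map (fun z : ℂ => f z.re)).sum) h3
  simp only [Multiset.map_map, Function.comp_def, Complex.ofReal_re] at h4
  simp only [← Complex.ofReal_sum, Complex.ofReal_re]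
  exact h4.symm

lemma quad_Dg {n : ℕ} (U : Matrix (Fin n) (Fin n) ℂ) (d : Fin n → ℝ) (v : Fin n → ℂ) :
    (star v ⬝ᵥ (Dg U d *ᵥ v)).re = ∑ i, d i * Complex.normSq ((Uᴴ *ᵥ v) i) := by
  unfold Dg
  rw [← Matrix.mulVec_mulVec, ← Matrix.mulVec_mulVec, Matrix.dotProduct_mulVec]
  have : star v ᵥ* U = star (Uᴴ *ᵥ v) := by
    rw [Matrix.star_mulVec, conjTranspose_conjTranspose]
  rw [this]
  generalize Uᴴ *ᵥ v = w
  simp only [dotProduct, mulVec_diagonal, Complex.re_sum]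
  congr 1; ext i
  simp [Complex.normSq_apply]; ring

lemma card_le {n : ℕ} {U V S : Matrix (Fin n) (Fin n) ℂ} (d e : Fin n → ℝ)
    (hV : Vᴴ * V = 1)
    (h : ∀ v, (star v ⬝ᵥ (Dg V e *ᵥ v)).re ≤ (star (S *ᵥ v) ⬝ᵥ (Dg U d *ᵥ (S *ᵥ v))).re) :
    Fintype.card {i // 0 < e i} ≤ Fintype.card {i // 0 < d i} := by
  let ext0 : ({i // 0 < e i} → ℂ) →ₗ[ℂ] (Fin n → ℂ) :=
    { toFun := fun x i => if hi : 0 < e i then x ⟨i, hi⟩ else 0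
      map_add' := by intro x y; ext i; by_cases hi : 0 < e i <;> simp [hi]
      map_smul' := by intro c y; ext i; by_cases hi : 0 < e i <;> simp [hi] }
  let L : ({i // 0 < e i} → ℂ) →ₗ[ℂ] ({i // 0 < d i} → ℂ) :=
    (LinearMap.funLeft ℂ ℂ (Subtype.val : {i // 0 < d i} → Fin n)) ∘ₗ
      (Matrix.mulVecLin (Uᴴ * S * V)) ∘ₗ ext0
  have hL : Function.Injective L := by
    rw [injective_iff_map_eq_zero]
    intro x hx
    have h1 := h (V *ᵥ ext0 x)
    rw [quad_Dg, quad_Dg] at h1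
    rw [Matrix.mulVec_mulVec, hV, one_mulVec, Matrix.mulVec_mulVec, Matrix.mulVec_mulVec] at h1
    have h2 : ∑ i, d i * Complex.normSq (((Uᴴ * S * V) *ᵥ ext0 x) i) ≤ 0 := by
      apply Finset.sum_nonpos
      intro i _
      by_cases hi : 0 < d i
      · have := congrFun hx ⟨i, hi⟩
        have h3 : ((Uᴴ * S * V) *ᵥ ext0 x) i = 0 := this
        rw [h3]; simp
      · exact mul_nonpos_of_nonpos_of_nonneg (not_lt.mp hi) (Complex.normSq_nonneg _)
    have h0 : ∀ i ∈ Finset.univ, 0 ≤ e i * Complex.normSq (ext0 x i) := by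
      intro i _
      by_cases hi : 0 < e i
      · exact mul_nonneg hi.le (Complex.normSq_nonneg _)
      · simp [ext0, hi]
    have h3 := (Finset.sum_eq_zero_iff_of_nonneg h0).mp
      (le_antisymm (h1.trans h2) (Finset.sum_nonneg h0))
    ext ⟨i, hi⟩
    have := h3 i (Finset.mem_univ i)
    simpa [ext0, hi, hi.ne'] using this
  simpa using LinearMap.finrank_le_finrank_of_injective hL

def NN {n : ℕ} (X : Matrix (Fin n) (Fin n) ℂ) : ℝ := (Matrix.trace (projPos X)).re
def pp {n : ℕ} (X : Matrix (Fin n) (Fin n) ℂ) : ℝ := (Matrix.trace (mposPart X)).re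

lemma NN_Dg {n : ℕ} {U : Matrix (Fin n) (Fin n) ℂ} (hU : Uᴴ * U = 1) (d : Fin n → ℝ) :
    NN (Dg U d) = ∑ i, if 0 < d i then (1:ℝ) else 0 := trace_cfc hU d _

lemma pp_Dg {n : ℕ} {U : Matrix (Fin n) (Fin n) ℂ} (hU : Uᴴ * U = 1) (d : Fin n → ℝ) :
    pp (Dg U d) = ∑ i, max (d i) 0 := trace_cfc hU d _

lemma NN_le {n : ℕ} {X Y : Matrix (Fin n) (Fin n) ℂ} (hX : X.IsHermitian) (hY : Y.IsHermitian)
    (S : Matrix (Fin n) (Fin n) ℂ)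
    (h : ∀ v, (star v ⬝ᵥ (Y *ᵥ v)).re ≤ (star (S *ᵥ v) ⬝ᵥ (X *ᵥ (S *ᵥ v))).re) :
    NN Y ≤ NN X := by
  obtain ⟨U, d, hU, -, rfl, -⟩ := exists_Dg hX
  obtain ⟨V, e, hV, -, rfl, -⟩ := exists_Dg hY
  rw [NN_Dg hU, NN_Dg hV]
  have := card_le d e hV h
  rw [Fintype.card_subtype, Fintype.card_subtype] at this
  simpa using this

lemma NN_congr {n : ℕ} {X : Matrix (Fin n) (Fin n) ℂ} (hX : X.IsHermitian)
    {S T : Matrix (Fin n) (Fin n) ℂ} (hST : S * T = 1) : NN (Sᴴ * X * S) = NN X := by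
  have hq : ∀ v, star v ⬝ᵥ ((Sᴴ * X * S) *ᵥ v) = star (S *ᵥ v) ⬝ᵥ (X *ᵥ (S *ᵥ v)) := by
    intro v
    rw [Matrix.star_mulVec, ← Matrix.mulVec_mulVec, ← Matrix.mulVec_mulVec,
      Matrix.dotProduct_mulVec]
  have hY : (Sᴴ * X * S).IsHermitian := Matrix.isHermitian_conjTranspose_mul_mul _ hX
  apply le_antisymm
  · exact NN_le hX hY S (fun v => (congrArg Complex.re (hq v)).le)
  · refine NN_le hY hX T (fun v => ?_)
    rw [hq, Matrix.mulVec_mulVec, hST, one_mulVec]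

lemma Dg_sub_smul_one {n : ℕ} {U : Matrix (Fin n) (Fin n) ℂ} (hU : U * Uᴴ = 1) (d : Fin n → ℝ)
    (s : ℝ) : Dg U d - s • (1 : Matrix (Fin n) (Fin n) ℂ) = Dg U (fun i => d i - s) := by
  unfold Dg
  rw [← hU]
  have : diagonal (fun i => ((d i - s : ℝ) : ℂ))
    = diagonal (fun i => (d i : ℂ)) - s • (1 : Matrix (Fin n) (Fin n) ℂ) := by
    ext i j
    by_cases h : i = j
    · subst h; simp
    · simp [h]
  rw [this]
  simp [mul_sub, sub_mul]

lemma step_int (y : ℝ) : IntegrableOn (fun s : ℝ => if 0 < y - s then (1:ℝ) else 0) (Set.Ioi 0) ∧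
    ∫ s in Set.Ioi (0:ℝ), (if 0 < y - s then (1:ℝ) else 0) = max y 0 := by
  have h : (fun s : ℝ => if 0 < y - s then (1:ℝ) else 0) = (Set.Iio y).indicator (fun _ => 1) := by
    ext s; simp [Set.indicator_apply]
  rw [h]
  constructor
  · rw [IntegrableOn, integrable_indicator_iff measurableSet_Iio]
    rw [IntegrableOn, Measure.restrict_restrict measurableSet_Iio, Set.inter_comm, Set.Ioi_inter_Iio]
    exact integrableOn_const (by simp)
  · rw [integral_indicator measurableSet_Iio, Measure.restrict_restrict measurableSet_Iio,
      Set.inter_comm, Set.Ioi_inter_Iio]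
    simp [Measure.real, ENNReal.toReal_ofReal']

lemma int_NN_shift {n : ℕ} {X : Matrix (Fin n) (Fin n) ℂ} (hX : X.IsHermitian) :
    IntegrableOn (fun s : ℝ => NN (X - s • (1 : Matrix (Fin n) (Fin n) ℂ))) (Set.Ioi 0) ∧
    ∫ s in Set.Ioi (0:ℝ), NN (X - s • (1 : Matrix (Fin n) (Fin n) ℂ)) = pp X := by
  obtain ⟨U, d, hU, hU', rfl, -⟩ := exists_Dg hX
  simp_rw [Dg_sub_smul_one hU', NN_Dg hU]
  rw [pp_Dg hU]
  constructor
  · exact integrable_finsetSum _ (fun i _ => (step_int (d i)).1)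
  · rw [integral_finsetSum _ (fun i _ => (step_int (d i)).1)]
    exact Finset.sum_congr rfl (fun i _ => (step_int (d i)).2)

lemma pp_psd {n : ℕ} {X : Matrix (Fin n) (Fin n) ℂ} (hX : X.PosSemidef) : pp X = X.trace.re := by
  obtain ⟨U, d, hU, hU', hXe, -, hd⟩ := exists_Dg hX.1
  rw [hXe, pp_Dg hU, trace_Dg hU]
  simp only [← Complex.ofReal_sum, Complex.ofReal_re]
  refine Finset.sum_congr rfl (fun i _ => max_eq_left ?_)
  rw [hd]; exact hX.eigenvalues_nonneg i

lemma int_NN_pencil {n : ℕ} {A U : Matrix (Fin n) (Fin n) ℂ} (hA : A.PosSemidef)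
    (hU : Uᴴ * U = 1) (hU' : U * Uᴴ = 1) (β : Fin n → ℝ) (hβ : ∀ i, 0 < β i) :
    IntegrableOn (fun t : ℝ => NN (A - t • Dg U β)) (Set.Ioi 0) ∧
    ∫ t in Set.Ioi (0:ℝ), NN (A - t • Dg U β) = ∑ i, ((Uᴴ * A * U) i i).re * (β i)⁻¹ := by
  set q : Fin n → ℂ := fun i => ((Real.sqrt (β i) : ℝ) : ℂ) with hq
  have hq0 : ∀ i, q i ≠ 0 := fun i => by
    simp only [hq, ne_eq, Complex.ofReal_eq_zero]; exact (Real.sqrt_pos.mpr (hβ i)).ne'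
  have hqq : ∀ i, (β i : ℂ) = q i * q i := fun i => by
    simp only [hq, ← Complex.ofReal_mul, Real.mul_self_sqrt (hβ i).le]
  have hqs : ∀ i, star (q i) = q i := fun i => by simp [hq]
  set S := U * diagonal (fun i => (q i)⁻¹) with hS
  set T := diagonal q * Uᴴ with hT
  have hdd : diagonal (fun i => (q i)⁻¹) * diagonal q = 1 := by
    rw [diagonal_mul_diagonal]; simp [hq0]
  have hST : S * T = 1 := by
    rw [hS, hT, mul_assoc, ← mul_assoc (diagonal _), hdd, one_mul, hU']
  have hSs : Sᴴ = diagonal (fun i => (q i)⁻¹) * Uᴴ := by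
    rw [hS, conjTranspose_mul, diagonal_conjTranspose]
    congr 2; ext i; simp [hq]
  have hSM : Sᴴ * Dg U β * S = 1 := by
    rw [hSs, hS, Dg]
    have : diagonal (fun i => (q i)⁻¹) * Uᴴ * (U * diagonal (fun i => (β i : ℂ)) * Uᴴ) *
        (U * diagonal (fun i => (q i)⁻¹)) = diagonal (fun i => (q i)⁻¹) * (Uᴴ * U) *
        diagonal (fun i => (β i : ℂ)) * (Uᴴ * U) * diagonal (fun i => (q i)⁻¹) := by
      simp only [mul_assoc]
    rw [this, hU, mul_one, mul_one, diagonal_mul_diagonal, diagonal_mul_diagonal, ← diagonal_one]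
    congr 1; ext i; rw [hqq]; field_simp [hq0 i]
  have hN : ∀ t : ℝ, NN (A - t • Dg U β) = NN (Sᴴ * A * S - t • (1 : Matrix (Fin n) (Fin n) ℂ)) := by
    intro t
    have hH : (A - t • Dg U β).IsHermitian := by
      refine hA.1.sub ?_
      have := Dg_herm U β
      simp [Matrix.IsHermitian, conjTranspose_smul, this.eq]
    rw [← NN_congr hH hST, ← hSM]
    congr 1
    simp [mul_sub, sub_mul]
  have hY : (Sᴴ * A * S).PosSemidef := hA.conjTranspose_mul_mul_same S
  simp_rw [hN]
  refine ⟨(int_NN_shift hY.1).1, ?_⟩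
  rw [(int_NN_shift hY.1).2, pp_psd hY, hSs, hS]
  have : diagonal (fun i => (q i)⁻¹) * Uᴴ * A * (U * diagonal (fun i => (q i)⁻¹)) =
    diagonal (fun i => (q i)⁻¹) * (Uᴴ * A * U) * diagonal (fun i => (q i)⁻¹) := by
      simp only [mul_assoc]
  rw [this]
  simp only [Matrix.trace, diag_apply, mul_diagonal, diagonal_mul, Complex.re_sum]
  refine Finset.sum_congr rfl (fun i _ => ?_)
  have h1 : (q i)⁻¹ * (Uᴴ * A * U) i i * (q i)⁻¹ = (Uᴴ * A * U) i i * (((β i)⁻¹ : ℝ) : ℂ) := by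
    rw [Complex.ofReal_inv, hqq i, mul_inv]; ring
  rw [h1, Complex.re_mul_ofReal]

lemma meas_NN {n : ℕ} {a : ℝ × ℝ → Matrix (Fin n) (Fin n) ℂ} (ha : Continuous a)
    (ha' : ∀ x, (a x).IsHermitian) : Measurable (fun x => NN (a x)) := by
  let f : ℕ → ℝ → ℝ := fun m x => min 1 (max 0 (m * x))
  have hf : ∀ m, Continuous (f m) := fun m => by fun_prop
  refine measurable_of_tendsto_metrizable
    (f := fun m x => (Matrix.trace (cfc (f m) (a x))).re)
    (fun m => (cont_tr (f m) (hf m) a ha ha').measurable) ?_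
  rw [tendsto_pi_nhds]
  intro x
  obtain ⟨U, d, hU, hU', hx, -⟩ := exists_Dg (ha' x)
  simp only [hx, NN_Dg hU, trace_cfc hU]
  refine tendsto_finsetSum _ (fun i _ => ?_)
  split_ifs with h
  · apply tendsto_const_nhds.congr'
    obtain ⟨m, hm⟩ := exists_nat_gt (1 / d i)
    filter_upwards [Filter.eventually_ge_atTop m] with k hk
    have : 1 ≤ (k:ℝ) * d i := by
      have h1 : 1 / d i < k := hm.trans_le (by exact_mod_cast hk)
      rw [div_lt_iff₀ h] at h1
      exact h1.le
    simp only [f]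
    rw [max_eq_right (by linarith), min_eq_left this]
  · apply tendsto_const_nhds.congr
    intro k
    simp only [f]
    rw [max_eq_left (mul_nonpos_of_nonneg_of_nonpos (by positivity) (not_lt.mp h))]
    simp

lemma log_int {b κ : ℝ} (hb : 0 < b) (hκ : b ≤ κ) :
    IntegrableOn (fun c : ℝ => (b + c)⁻¹ - (κ + c)⁻¹) (Set.Ioi 0) ∧
    ∫ c in Set.Ioi (0:ℝ), ((b + c)⁻¹ - (κ + c)⁻¹) = Real.log κ - Real.log b := by
  have hd : ∀ x ∈ Set.Ici (0:ℝ), HasDerivAt (fun c => Real.log (b + c) - Real.log (κ + c))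
      ((b + x)⁻¹ - (κ + x)⁻¹) x := by
    intro x hx
    have hx : 0 ≤ x := hx
    have h1 := ((hasDerivAt_id x).const_add b).log (by simp; linarith)
    have h2 := ((hasDerivAt_id x).const_add κ).log (by simp; linarith)
    have h3 := h1.sub h2
    simp only [id_eq, one_div] at h3
    exact h3
  have ht : Filter.Tendsto (fun c => Real.log (b + c) - Real.log (κ + c)) Filter.atTop (nhds 0) := by
    have h1 : Filter.Tendsto (fun c => Real.log (1 - (κ - b) * (κ + c)⁻¹)) Filter.atTop (nhds 0) := by
      have h2 : Filter.Tendsto (fun c : ℝ => 1 - (κ - b) * (κ + c)⁻¹) Filter.atTop (nhds 1) := by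
        have h3 := ((tendsto_inv_atTop_zero.comp
          (Filter.tendsto_atTop_add_const_left Filter.atTop κ Filter.tendsto_id)).const_mul
            (κ - b)).const_sub 1
        simpa [Function.comp_def] using h3
      have := (Real.continuousAt_log one_ne_zero).tendsto.comp h2
      simpa [Function.comp_def] using this
    refine h1.congr' ?_
    filter_upwards [Filter.eventually_ge_atTop 0] with c hc
    rw [← Real.log_div (by linarith) (by linarith)]
    congr 1
    have : κ + c ≠ 0 := by linarith
    field_simp
    ring
  have hi := integrableOn_Ioi_deriv_of_nonneg' hd (fun x hx => by
    have hx : 0 < x := hx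
    rw [sub_nonneg]
    exact inv_anti₀ (by linarith) (by linarith)) ht
  refine ⟨hi, ?_⟩
  rw [integral_Ioi_of_hasDerivAt_of_tendsto' hd hi ht]
  simp

lemma Dg_add_const {n : ℕ} {U : Matrix (Fin n) (Fin n) ℂ} (hU : U * Uᴴ = 1) (d : Fin n → ℝ)
    (s : ℝ) : Dg U (fun i => d i + s) = Dg U d + s • (1 : Matrix (Fin n) (Fin n) ℂ) := by
  have := Dg_sub_smul_one hU d (-s)
  simp only [sub_neg_eq_add, neg_smul] at this
  exact this.symm

lemma pencil_herm {n : ℕ} {A B : Matrix (Fin n) (Fin n) ℂ} (hA : A.IsHermitian)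
    (hB : B.IsHermitian) (t : ℝ) : (A - t • B).IsHermitian := by
  refine hA.sub ?_
  simp [Matrix.IsHermitian, conjTranspose_smul, hB.eq]

lemma Dg_mono {n : ℕ} {U : Matrix (Fin n) (Fin n) ℂ} {d e : Fin n → ℝ} (h : ∀ i, d i ≤ e i)
    (v : Fin n → ℂ) : (star v ⬝ᵥ (Dg U d *ᵥ v)).re ≤ (star v ⬝ᵥ (Dg U e *ᵥ v)).re := by
  rw [quad_Dg, quad_Dg]
  exact Finset.sum_le_sum (fun i _ => mul_le_mul_of_nonneg_right (h i) (Complex.normSq_nonneg _))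

lemma NN_pencil_mono {n : ℕ} {A U : Matrix (Fin n) (Fin n) ℂ} (hA : A.IsHermitian)
    {d e : Fin n → ℝ} (h : ∀ i, d i ≤ e i) {t : ℝ} (ht : 0 ≤ t) :
    NN (A - t • Dg U e) ≤ NN (A - t • Dg U d) := by
  refine NN_le (pencil_herm hA (Dg_herm U d) t) (pencil_herm hA (Dg_herm U e) t) 1 (fun v => ?_)
  have := Dg_mono (U := U) h v
  simp only [one_mulVec, sub_mulVec, smul_mulVec, dotProduct_sub, dotProduct_smul, Complex.sub_re,
    Complex.smul_re, smul_eq_mul]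
  have := mul_le_mul_of_nonneg_left this ht
  linarith

lemma cont_pencil {n : ℕ} {A U : Matrix (Fin n) (Fin n) ℂ} (hU : U * Uᴴ = 1) (d : Fin n → ℝ) :
    Continuous (fun x : ℝ × ℝ => A - x.2 • Dg U (fun i => d i + x.1)) := by
  simp_rw [Dg_add_const hU]
  fun_prop

lemma main_swap {n : ℕ} {A U : Matrix (Fin n) (Fin n) ℂ} (hA : A.PosSemidef)
    (hU : Uᴴ * U = 1) (hU' : U * Uᴴ = 1) (b : Fin n → ℝ) (hb : ∀ i, 0 < b i) (κ : ℝ)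
    (hκ : ∀ i, b i ≤ κ) :
    IntegrableOn (fun t : ℝ => t⁻¹ * (pp (A - t • Dg U b) - pp (A - t • Dg U (fun _ => κ))))
      (Set.Ioi 0) ∧
    ∫ t in Set.Ioi (0:ℝ), t⁻¹ * (pp (A - t • Dg U b) - pp (A - t • Dg U (fun _ => κ)))
      = ∑ i, ((Uᴴ * A * U) i i).re * (Real.log κ - Real.log (b i)) := by
  set F : ℝ → ℝ → ℝ := fun c t => NN (A - t • Dg U (fun i => b i + c))
    - NN (A - t • Dg U (fun _ => κ + c)) with hF
  -- the inner integral in `c`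
  have key : ∀ (d : Fin n → ℝ) (t : ℝ), 0 < t →
      IntegrableOn (fun c => NN (A - t • Dg U (fun i => d i + c))) (Set.Ioi 0) ∧
      ∫ c in Set.Ioi (0:ℝ), NN (A - t • Dg U (fun i => d i + c)) = t⁻¹ * pp (A - t • Dg U d) := by
    intro d t ht
    have e : ∀ c : ℝ, A - t • Dg U (fun i => d i + c)
        = (A - t • Dg U d) - (t * c) • (1 : Matrix (Fin n) (Fin n) ℂ) := by
      intro c
      rw [Dg_add_const hU', smul_add, smul_smul, sub_sub]
    simp_rw [e]
    obtain ⟨h1, h2⟩ := int_NN_shift (pencil_herm hA.1 (Dg_herm U d) t)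
    constructor
    · have := (integrableOn_Ioi_comp_mul_left_iff
        (fun s : ℝ => NN (A - t • Dg U d - s • (1 : Matrix (Fin n) (Fin n) ℂ))) 0 ht).mpr
          (by simpa using h1)
      exact this
    · rw [integral_comp_mul_left_Ioi
        (fun s : ℝ => NN (A - t • Dg U d - s • (1 : Matrix (Fin n) (Fin n) ℂ))) 0 ht]
      rw [mul_zero, h2, smul_eq_mul]
  have hin : ∀ t ∈ Set.Ioi (0:ℝ), ∫ c in Set.Ioi (0:ℝ), F c t
      = t⁻¹ * (pp (A - t • Dg U b) - pp (A - t • Dg U (fun _ => κ))) := by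
    intro t ht
    obtain ⟨h1, h2⟩ := key b t ht
    obtain ⟨h3, h4⟩ := key (fun _ => κ) t ht
    simp only [hF]
    rw [integral_sub h1 h3, h2, h4, mul_sub]
  have hκ0 : ∀ i : Fin n, 0 < κ := fun i => (hb i).trans_le (hκ i)
  have hout : ∀ c ∈ Set.Ioi (0:ℝ), IntegrableOn (F c) (Set.Ioi 0) ∧
      ∫ t in Set.Ioi (0:ℝ), F c t
        = ∑ i, ((Uᴴ * A * U) i i).re * ((b i + c)⁻¹ - (κ + c)⁻¹) := by
    intro c hc
    have hc : 0 < c := hc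
    obtain ⟨h1, h2⟩ := int_NN_pencil hA hU hU' (fun i => b i + c) (fun i => by linarith [hb i])
    obtain ⟨h3, h4⟩ := int_NN_pencil hA hU hU' (fun _ => κ + c) (fun i => by linarith [hκ0 i])
    refine ⟨h1.sub h3, ?_⟩
    simp only [hF]
    rw [integral_sub h1 h3, h2, h4, ← Finset.sum_sub_distrib]
    simp only [mul_sub]
  have hnn : ∀ c : ℝ, ∀ t ∈ Set.Ioi (0:ℝ), 0 ≤ F c t := by
    intro c t ht
    have ht : 0 < t := ht
    simp only [hF, sub_nonneg]
    exact NN_pencil_mono hA.1 (fun i => by linarith [hκ i]) ht.le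
  have hmeas : Measurable (Function.uncurry F) := by
    refine (meas_NN (cont_pencil hU' b) ?_).sub (meas_NN (cont_pencil hU' (fun _ => κ)) ?_)
    · intro x; exact pencil_herm hA.1 (Dg_herm _ _) _
    · intro x; exact pencil_herm hA.1 (Dg_herm _ _) _
  have hRint : IntegrableOn
      (fun c => ∑ i, ((Uᴴ * A * U) i i).re * ((b i + c)⁻¹ - (κ + c)⁻¹)) (Set.Ioi 0) :=
    integrable_finsetSum _ (fun i _ => (log_int (hb i) (hκ i)).1.const_mul _)
  have hint : Integrable (Function.uncurry F)
      ((volume.restrict (Set.Ioi (0:ℝ))).prod (volume.restrict (Set.Ioi (0:ℝ)))) := by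
    rw [integrable_prod_iff hmeas.aestronglyMeasurable]
    constructor
    · filter_upwards [ae_restrict_mem measurableSet_Ioi] with c hc
      exact (hout c hc).1
    · refine hRint.congr ?_
      filter_upwards [ae_restrict_mem measurableSet_Ioi] with c hc
      rw [← (hout c hc).2]
      refine setIntegral_congr_fun measurableSet_Ioi (fun t ht => ?_)
      simp only [Function.uncurry_apply_pair]
      rw [Real.norm_of_nonneg (hnn c t ht)]
  constructor
  · have := hint.integral_prod_right
    refine Integrable.congr this ?_
    filter_upwards [ae_restrict_mem measurableSet_Ioi] with t ht
    exact hin t ht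
  · rw [← setIntegral_congr_fun measurableSet_Ioi hin, ← integral_integral_swap hint,
      setIntegral_congr_fun measurableSet_Ioi (fun c hc => (hout c hc).2),
      integral_finsetSum _ (fun i _ => (log_int (hb i) (hκ i)).1.const_mul _)]
    refine Finset.sum_congr rfl (fun i _ => ?_)
    rw [integral_const_mul, (log_int (hb i) (hκ i)).2]

lemma scalar_int {a κ : ℝ} (ha : 0 < a) (hκ : a ≤ κ) :
    IntegrableOn (fun t : ℝ => t⁻¹ * max (t * κ - a) 0) (Set.Ioo 0 1) ∧
    ∫ t in Set.Ioo (0:ℝ) 1, t⁻¹ * max (t * κ - a) 0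
      = a * (Real.log a - Real.log κ) - a + κ := by
  have hκ0 : 0 < κ := ha.trans_le hκ
  have hak : a / κ ≤ 1 := (div_le_one hκ0).mpr hκ
  have hak0 : 0 < a / κ := div_pos ha hκ0
  have hcont : ContinuousOn (fun t : ℝ => κ - a * t⁻¹) (Set.uIcc (a/κ) 1) := by
    intro t ht
    rw [Set.uIcc_of_le hak] at ht
    have : t ≠ 0 := (hak0.trans_le ht.1).ne'
    exact ContinuousAt.continuousWithinAt (by fun_prop (disch := assumption))
  have hI : IntervalIntegrable (fun t : ℝ => κ - a * t⁻¹) volume (a/κ) 1 := hcont.intervalIntegrable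
  have heq : Set.EqOn (fun t : ℝ => t⁻¹ * max (t * κ - a) 0)
      ((Set.Ioc (a/κ) 1).indicator (fun t => κ - a * t⁻¹)) (Set.Ioo 0 1) := by
    intro t ht
    by_cases h : a / κ < t
    · rw [Set.indicator_of_mem (show t ∈ Set.Ioc (a/κ) 1 from ⟨h, ht.2.le⟩)]
      rw [div_lt_iff₀ hκ0] at h
      have := ht.1.ne'
      simp only
      rw [max_eq_left (by linarith)]
      field_simp
    · rw [Set.indicator_of_notMem (fun h' => h h'.1)]
      rw [not_lt, le_div_iff₀ hκ0] at h
      simp only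
      rw [max_eq_right (by linarith), mul_zero]
  have hae : (Set.Ioc (a/κ) 1 ∩ Set.Ioo 0 1 : Set ℝ) = Set.Ioo (a/κ) 1 := by
    ext t; simp only [Set.mem_inter_iff, Set.mem_Ioc, Set.mem_Ioo]
    constructor
    · rintro ⟨h1, h2⟩; exact ⟨h1.1, h2.2⟩
    · rintro ⟨h1, h2⟩; exact ⟨⟨h1, h2.le⟩, hak0.trans h1, h2⟩
  have hI' : IntegrableOn (fun t : ℝ => κ - a * t⁻¹) (Set.Ioc (a/κ) 1) :=
    (intervalIntegrable_iff_integrableOn_Ioc_of_le hak).mp hI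
  constructor
  · rw [integrableOn_congr_fun heq measurableSet_Ioo, IntegrableOn,
      integrable_indicator_iff measurableSet_Ioc, IntegrableOn,
      Measure.restrict_restrict measurableSet_Ioc, hae]
    exact hI'.mono_set Set.Ioo_subset_Ioc_self
  · rw [setIntegral_congr_fun measurableSet_Ioo heq, integral_indicator measurableSet_Ioc,
      Measure.restrict_restrict measurableSet_Ioc, hae, ← integral_Ioc_eq_integral_Ioo,
      ← intervalIntegral.integral_of_le hak]
    have hinv : IntervalIntegrable (fun t : ℝ => a * t⁻¹) volume (a/κ) 1 := by
      have := (intervalIntegrable_const (c := κ) (μ := volume) (a := a/κ) (b := 1)).sub hI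
      simpa using this
    rw [intervalIntegral.integral_sub intervalIntegrable_const hinv,
      intervalIntegral.integral_const, intervalIntegral.integral_const_mul,
      integral_inv_of_pos hak0 one_pos, one_div, Real.log_inv, Real.log_div ha.ne' hκ0.ne']
    simp only [smul_eq_mul]
    field_simp
    ring

lemma Dg_smul {n : ℕ} (U : Matrix (Fin n) (Fin n) ℂ) (d : Fin n → ℝ) (c : ℝ) :
    c • Dg U d = Dg U (fun i => c * d i) := by
  unfold Dg
  have : diagonal (fun i => ((c * d i : ℝ) : ℂ)) = c • diagonal (fun i => (d i : ℂ)) := by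
    ext i j
    by_cases h : i = j
    · subst h; simp
    · simp [h]
  rw [this]
  simp

lemma pp_smul {n : ℕ} {X : Matrix (Fin n) (Fin n) ℂ} (hX : X.IsHermitian) {c : ℝ} (hc : 0 ≤ c) :
    pp (c • X) = c * pp X := by
  obtain ⟨U, d, hU, hU', rfl, -⟩ := exists_Dg hX
  rw [Dg_smul, pp_Dg hU, pp_Dg hU, Finset.mul_sum]
  refine Finset.sum_congr rfl (fun i _ => ?_)
  rw [mul_max_of_nonneg _ _ hc, mul_zero]

lemma pp_neg {n : ℕ} {X : Matrix (Fin n) (Fin n) ℂ} (hX : X.IsHermitian) :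
    pp (-X) = pp X - X.trace.re := by
  obtain ⟨U, d, hU, hU', rfl, -⟩ := exists_Dg hX
  have : -Dg U d = Dg U (fun i => -1 * d i) := by rw [← Dg_smul]; simp
  rw [this, pp_Dg hU, pp_Dg hU, trace_Dg hU]
  simp only [← Complex.ofReal_sum, Complex.ofReal_re]
  rw [← Finset.sum_sub_distrib]
  refine Finset.sum_congr rfl (fun i _ => ?_)
  rcases le_total (d i) 0 with h | h
  · rw [max_eq_left (by linarith), max_eq_right h]; ring
  · rw [max_eq_right (by linarith), max_eq_left h]; ring

lemma image_inv_Ioi_one : (fun x : ℝ => x⁻¹) '' Set.Ioi 1 = Set.Ioo 0 1 := by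
  ext y
  simp only [Set.mem_image, Set.mem_Ioi, Set.mem_Ioo]
  constructor
  · rintro ⟨x, hx, rfl⟩
    exact ⟨by positivity, inv_lt_one_of_one_lt₀ hx⟩
  · rintro ⟨h0, h1⟩
    exact ⟨y⁻¹, (one_lt_inv₀ h0).mpr h1, inv_inv y⟩

/-- Frenkel's integral formula in hockey-stick form:
`Tr[A(log A - log B)] = ∫₁^∞ ((1/γ)Tr[(A-γB)₊] + (1/γ²)Tr[(B-γA)₊]) dγ + Tr[A - B]`. -/
theorem relativeEntropy_eq_integral_hockeyStick {n : ℕ} (A B : Matrix (Fin n) (Fin n) ℂ)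
    (hA : A.PosDef) (hB : B.PosDef) :
    (Matrix.trace (A * (mlog A - mlog B))).re
      = (∫ γ in Set.Ioi (1:ℝ),
          (γ⁻¹ * (Matrix.trace (mposPart (A - γ • B))).re
            + (γ^2)⁻¹ * (Matrix.trace (mposPart (B - γ • A))).re))
        + (Matrix.trace (A - B)).re := by
  obtain ⟨V, a, hV, hV', hAe, hAc, ha⟩ := exists_Dg hA.1
  obtain ⟨U, b, hU, hU', hBe, hBc, hb⟩ := exists_Dg hB.1
  have ha0 : ∀ i, 0 < a i := fun i => by rw [ha]; exact hA.eigenvalues_pos i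
  have hb0 : ∀ i, 0 < b i := fun i => by rw [hb]; exact hB.eigenvalues_pos i
  set κ : ℝ := ∑ i, a i + ∑ i, b i with hκ
  have hsa : 0 ≤ ∑ i, a i := Finset.sum_nonneg (fun i _ => (ha0 i).le)
  have hsb : 0 ≤ ∑ i, b i := Finset.sum_nonneg (fun i _ => (hb0 i).le)
  have haκ : ∀ i, a i ≤ κ := fun i => by
    have := Finset.single_le_sum (fun i _ => (ha0 i).le) (Finset.mem_univ i)
    linarith
  have hbκ : ∀ i, b i ≤ κ := fun i => by
    have := Finset.single_le_sum (fun i _ => (hb0 i).le) (Finset.mem_univ i)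
    linarith
  have htrA : A.trace.re = ∑ i, a i := by
    rw [hAe, trace_Dg hV, ← Complex.ofReal_sum, Complex.ofReal_re]
  have hw : ∑ i, ((Uᴴ * A * U) i i).re = ∑ i, a i := by
    have h1 : (Uᴴ * A * U).trace = A.trace := by
      rw [mul_assoc, Matrix.trace_mul_comm, mul_assoc, hU', mul_one]
    rw [← htrA, ← h1]
    simp [Matrix.trace]
  have hκ1 : Dg U (fun _ => κ) = κ • (1 : Matrix (Fin n) (Fin n) ℂ) := by
    have h0 := Dg_add_const hU' (fun _ => 0) κ
    have h1 : Dg U (fun _ => 0) = 0 := by simp [Dg]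
    simpa [h1] using h0
  have hqκ : ∀ t : ℝ, pp (A - t • Dg U (fun _ => κ)) = ∑ i, max (a i - t * κ) 0 := by
    intro t
    rw [hκ1, smul_smul, hAe, Dg_sub_smul_one hV', pp_Dg hV]
  -- the left-hand side
  have hL : (Matrix.trace (A * (mlog A - mlog B))).re
      = ∑ i, a i * Real.log (a i) - ∑ i, ((Uᴴ * A * U) i i).re * Real.log (b i) := by
    rw [mul_sub, trace_sub, Complex.sub_re]
    congr 1
    · rw [mlog, hAc, trace_mul_Dg]
      refine Finset.sum_congr rfl (fun i _ => ?_)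
      congr 1
      have : Vᴴ * A * V = diagonal (fun i => (a i : ℂ)) := by
        rw [hAe, Dg]
        have : Vᴴ * (V * diagonal (fun i => (a i : ℂ)) * Vᴴ) * V
          = (Vᴴ * V) * diagonal (fun i => (a i : ℂ)) * (Vᴴ * V) := by simp only [mul_assoc]
        rw [this, hV, one_mul, mul_one]
      rw [this]; simp
    · rw [mlog, hBc, trace_mul_Dg]
  obtain ⟨hEi, hE⟩ := main_swap hA.posSemidef hU hU' b hb0 κ hbκ
  rw [← hBe] at hEi hE
  set E : ℝ → ℝ := fun t => t⁻¹ * (pp (A - t • B) - pp (A - t • Dg U (fun _ => κ))) with hEdef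
  set H : ℝ → ℝ := fun t => (E t + (B.trace.re - κ * n)) + ∑ i, t⁻¹ * max (t * κ - a i) 0 with hH
  have hE1 : IntegrableOn E (Set.Ioi 1) := hEi.mono_set (Set.Ioi_subset_Ioi zero_le_one)
  have hE01 : IntegrableOn E (Set.Ioo 0 1) := hEi.mono_set Set.Ioo_subset_Ioi_self
  have hS : ∀ i ∈ Finset.univ,
      IntegrableOn (fun t : ℝ => t⁻¹ * max (t * κ - a i) 0) (Set.Ioo 0 1) :=
    fun i _ => (scalar_int (ha0 i) (haκ i)).1
  have hc : IntegrableOn (fun _ : ℝ => B.trace.re - κ * n) (Set.Ioo (0:ℝ) 1) :=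
    integrableOn_const (by simp)
  have hEc : IntegrableOn (fun t => E t + (B.trace.re - κ * n)) (Set.Ioo (0:ℝ) 1) := hE01.add hc
  have hHi : IntegrableOn H (Set.Ioo 0 1) := (hE01.add hc).add (integrable_finsetSum _ hS)
  have hHv : ∫ t in Set.Ioo (0:ℝ) 1, H t = (∫ t in Set.Ioo (0:ℝ) 1, E t) + (B.trace.re - κ * n)
      + ∑ i, (a i * (Real.log (a i) - Real.log κ) - a i + κ) := by
    simp only [hH]
    rw [integral_add hEc (integrable_finsetSum _ hS), integral_add hE01 hc,
      integral_finsetSum _ hS, Finset.sum_congr rfl (fun i _ => (scalar_int (ha0 i) (haκ i)).2)]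
    simp
  have hder : ∀ x ∈ Set.Ioi (1:ℝ),
      HasDerivWithinAt (fun x : ℝ => x⁻¹) (-(x ^ 2)⁻¹) (Set.Ioi 1) x := by
    intro x hx
    have hx : 1 < x := hx
    exact (hasDerivAt_inv (by positivity)).hasDerivWithinAt
  have hinj : Set.InjOn (fun x : ℝ => x⁻¹) (Set.Ioi 1) := inv_injective.injOn
  have hcv := integral_image_eq_integral_abs_deriv_smul measurableSet_Ioi hder hinj H
  have hci := (integrableOn_image_iff_integrableOn_abs_deriv_smul measurableSet_Ioi hder hinj H).mp
    (by rw [image_inv_Ioi_one]; exact hHi)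
  rw [image_inv_Ioi_one] at hcv
  -- the integrand
  have hInt : ∀ γ ∈ Set.Ioi (1:ℝ), γ⁻¹ * (Matrix.trace (mposPart (A - γ • B))).re
            + (γ^2)⁻¹ * (Matrix.trace (mposPart (B - γ • A))).re
        = E γ + |-(γ ^ 2)⁻¹| • H (γ⁻¹) := by
    intro γ hγ
    have hγ : 1 < γ := hγ
    have hγ0 : 0 < γ := by linarith
    change γ⁻¹ * pp (A - γ • B) + (γ^2)⁻¹ * pp (B - γ • A) = _
    rw [abs_neg, abs_of_pos (by positivity), smul_eq_mul]
    congr 1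
    · simp only [hEdef]
      rw [hqκ, Finset.sum_eq_zero, sub_zero]
      intro i _
      apply max_eq_right
      nlinarith [haκ i, ha0 i]
    · congr 1
      have h1 : B - γ • A = γ • (-(A - γ⁻¹ • B)) := by
        rw [neg_sub, smul_sub, smul_smul, mul_inv_cancel₀ hγ0.ne', one_smul]
      have hh := pencil_herm hA.1 hB.1 γ⁻¹
      rw [h1, pp_smul hh.neg hγ0.le, pp_neg hh]
      simp only [hH, hEdef, hqκ, inv_inv]
      have h2 : ∑ i, γ * max (γ⁻¹ * κ - a i) 0
          = γ * (∑ i, max (a i - γ⁻¹ * κ) 0) - γ * (∑ i, a i) + κ * n := by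
        have h3 : ∀ i, γ * max (γ⁻¹ * κ - a i) 0
            = γ * max (a i - γ⁻¹ * κ) 0 - γ * a i + κ := by
          intro i
          have h4 : γ * (γ⁻¹ * κ) = κ := by field_simp
          rcases le_total (a i) (γ⁻¹ * κ) with h | h
          · rw [max_eq_left (by linarith), max_eq_right (by linarith), mul_sub, h4]; ring
          · rw [max_eq_right (by linarith), max_eq_left (by linarith), mul_sub, h4]; ring
        simp_rw [h3]
        rw [Finset.sum_add_distrib, Finset.sum_sub_distrib, Finset.mul_sum, Finset.mul_sum]
        simp [mul_comm]
      rw [h2, trace_sub, trace_smul, Complex.sub_re, Complex.smul_re, smul_eq_mul, htrA]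
      have h5 : γ * (γ⁻¹ * B.trace.re) = B.trace.re := by field_simp
      linear_combination h5
  rw [setIntegral_congr_fun measurableSet_Ioi hInt, integral_add hE1 hci, ← hcv, hHv, hL]
  have hsplit : (∫ t in Set.Ioi (1:ℝ), E t) + ∫ t in Set.Ioo (0:ℝ) 1, E t
      = ∫ t in Set.Ioi (0:ℝ), E t := by
    rw [← integral_Ioc_eq_integral_Ioo, add_comm, ← Set.Ioc_union_Ioi_eq_Ioi zero_le_one,
      setIntegral_union Set.Ioc_disjoint_Ioi_same measurableSet_Ioi
        (hEi.mono_set Set.Ioc_subset_Ioi_self) hE1]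
  rw [hE] at hsplit
  rw [trace_sub, Complex.sub_re, htrA]
  have h6 : ∑ i, (a i * (Real.log (a i) - Real.log κ) - a i + κ)
      = ∑ i, a i * Real.log (a i) - (∑ i, a i) * Real.log κ - ∑ i, a i + κ * n := by
    simp only [mul_sub, Finset.sum_add_distrib, Finset.sum_sub_distrib, Finset.sum_mul]
    simp [mul_comm]
  have h7 : ∑ i, ((Uᴴ * A * U) i i).re * (Real.log κ - Real.log (b i))
      = (∑ i, a i) * Real.log κ - ∑ i, ((Uᴴ * A * U) i i).re * Real.log (b i) := by
    rw [← hw]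
    simp only [mul_sub, Finset.sum_sub_distrib, Finset.sum_mul]
  rw [h6]
  linarith [h7, hsplit]
end
end
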